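/- arXiv:2203.15878 — 2 statements merged into one kernel-verified Lean document; each statement's English description precedes it below -/
import Mathlib

section
/- A finite connected simple graph G is a convex geometry with respect to the strong convexity if and only if G is strongly chordal. -/
open SimpleGraph

variable {V : Type*} {W : Type*}

/-- The convex hull of `S`: the smallest convex set containing `S`. -/
def chull (Cvx : Set V → Prop) (S : Set V) : Set V := ⋂₀ {T | S ⊆ T ∧ Cvx T}

/-- The set of extreme vertices of `S`. -/
def extremeSet (Cvx : Set V → Prop) (S : Set V) : Set V := {x | x ∈ S ∧ Cvx (S \ {x})}

/-- A convexity is a convex geometry if every convex set is the convex hull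
of its extreme vertices. -/
def IsConvexGeometry (Cvx : Set V → Prop) : Prop :=
  ∀ S : Set V, Cvx S → S = chull Cvx (extremeSet Cvx S)

/-- Convexity induced by a system of p-walks: `S` is convex iff every vertex
lying on a p-walk between two vertices of `S` belongs to `S`. -/
def PConvex (G : SimpleGraph V) (P : ∀ ⦃u v : V⦄, G.Walk u v → Prop) (S : Set V) : Prop :=
  ∀ ⦃u v : V⦄, u ∈ S → v ∈ S → ∀ w : G.Walk u v, P w → ∀ x ∈ w.support, x ∈ S

/-- `x` and `y` appear consecutively (in either order) in the list `l`. -/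
def consecIn (l : List V) (x y : V) : Prop := [x, y] <:+: l ∨ [y, x] <:+: l

/-- An induced path: a path such that the only edges of `G` between its vertices
are the consecutive ones. -/
def IsInducedPathW (G : SimpleGraph V) {u v : V} (w : G.Walk u v) : Prop :=
  w.IsPath ∧ ∀ x ∈ w.support, ∀ y ∈ w.support, G.Adj x y → consecIn w.support x y

/-- An induced cycle: a cycle such that the only edges of `G` between its vertices
are the consecutive (cyclically) ones. -/
def IsInducedCycleW (G : SimpleGraph V) {u : V} (w : G.Walk u u) : Prop :=
  w.IsCycle ∧ ∀ x ∈ w.support, ∀ y ∈ w.support, G.Adj x y → consecIn w.support x y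

/-- A graph is chordal if it has no induced cycle of length at least 4. -/
def Chordal (G : SimpleGraph V) : Prop :=
  ¬ ∃ (u : V) (w : G.Walk u u), IsInducedCycleW G w ∧ 4 ≤ w.length

/-- The cycle `w` has an odd chord: an edge of `G` joining two vertices of the cycle
whose distance along the cycle is odd and greater than 1. -/
def HasOddChord (G : SimpleGraph V) {u : V} (w : G.Walk u u) : Prop :=
  ∃ i j : ℕ, ∃ hi : i < w.support.length, ∃ hj : j < w.support.length, i < j ∧
    G.Adj (w.support.get ⟨i, hi⟩) (w.support.get ⟨j, hj⟩) ∧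
    Odd (min (j - i) (w.length - (j - i))) ∧ 1 < min (j - i) (w.length - (j - i))

/-- A graph is strongly chordal if it is chordal and every even cycle of length
at least 6 has an odd chord. -/
def StronglyChordal (G : SimpleGraph V) : Prop :=
  Chordal G ∧ ∀ (u : V) (w : G.Walk u u), w.IsCycle → Even w.length → 6 ≤ w.length →
    HasOddChord G w

/-- Closed neighborhood `N[v]`. -/
def closedNbhd (G : SimpleGraph V) (v : V) : Set V := insert v (G.neighborSet v)

/-- A vertex is simple if the closed neighborhoods of its closed neighbors form a
family totally ordered by inclusion. -/
def SimpleVtx (G : SimpleGraph V) (v : V) : Prop :=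
  ∀ u ∈ closedNbhd G v, ∀ w ∈ closedNbhd G v,
    closedNbhd G u ⊆ closedNbhd G w ∨ closedNbhd G w ⊆ closedNbhd G u

/-- A vertex is simplicial if its closed neighborhood is a clique. -/
def SimplicialVtx (G : SimpleGraph V) (v : V) : Prop :=
  G.IsClique (closedNbhd G v)

/-- An even-chorded path: a path with no odd chord and such that no endpoint
lies in a chord. -/
def IsEvenChorded (G : SimpleGraph V) {u v : V} (w : G.Walk u v) : Prop :=
  w.IsPath ∧ ∀ i j : ℕ, ∀ hi : i < w.support.length, ∀ hj : j < w.support.length,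
    i + 1 < j → G.Adj (w.support.get ⟨i, hi⟩) (w.support.get ⟨j, hj⟩) →
      Even (j - i) ∧ 0 < i ∧ j < w.support.length - 1

/-- A tolled walk `u₀u₁…u_k`: `u₀uᵢ ∈ E(G)` implies `i = 1` and `u_ju_k ∈ E(G)`
implies `j = k - 1`. -/
def IsTolledWalk (G : SimpleGraph V) {u v : V} (w : G.Walk u v) : Prop :=
  ∀ i : ℕ, ∀ hi : i < w.support.length,
    (G.Adj u (w.support.get ⟨i, hi⟩) → i = 1) ∧
    (G.Adj (w.support.get ⟨i, hi⟩) v → i = w.support.length - 2)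

/-- A weakly toll walk `u₀u₁…u_k`: `u₀uᵢ ∈ E(G)` implies `uᵢ = u₁` and
`u_ju_k ∈ E(G)` implies `u_j = u_{k-1}`. -/
def IsWeaklyTollWalk (G : SimpleGraph V) {u v : V} (w : G.Walk u v) : Prop :=
  ∀ i : ℕ, ∀ hi : i < w.support.length,
    (G.Adj u (w.support.get ⟨i, hi⟩) → w.support.get ⟨i, hi⟩ = w.support.getD 1 u) ∧
    (G.Adj (w.support.get ⟨i, hi⟩) v → w.support.get ⟨i, hi⟩ = w.support.getD (w.support.length - 2) v)

/-- An interval graph: vertices can be assigned nonempty closed real intervals so that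
distinct vertices are adjacent iff the intervals intersect. -/
def IsIntervalGraph (G : SimpleGraph V) : Prop :=
  ∃ a b : V → ℝ, (∀ v, a v ≤ b v) ∧
    ∀ u v : V, u ≠ v →
      (G.Adj u v ↔ (Set.Icc (a u) (b u) ∩ Set.Icc (a v) (b v)).Nonempty)

/-- A proper interval graph: an interval model in which no interval properly
contains another. -/
def IsProperIntervalGraph (G : SimpleGraph V) : Prop :=
  ∃ a b : V → ℝ, (∀ v, a v ≤ b v) ∧
    (∀ u v : V, u ≠ v →
      (G.Adj u v ↔ (Set.Icc (a u) (b u) ∩ Set.Icc (a v) (b v)).Nonempty)) ∧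
    ∀ u v : V, ¬ (Set.Icc (a u) (b u) ⊂ Set.Icc (a v) (b v))

/-- An end vertex: some interval model in which its interval is an end interval. -/
def IsEndVertex (G : SimpleGraph V) (x : V) : Prop :=
  ∃ a b : V → ℝ, (∀ v, a v ≤ b v) ∧
    (∀ u v : V, u ≠ v →
      (G.Adj u v ↔ (Set.Icc (a u) (b u) ∩ Set.Icc (a v) (b v)).Nonempty)) ∧
    ((∀ v, a x ≤ a v) ∨ (∀ v, b v ≤ b x))

/-- `G` contains an induced subgraph isomorphic to `H`. -/
def HasInducedSubgraphIso (G : SimpleGraph V) (H : SimpleGraph W) : Prop :=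
  ∃ f : W ↪ V, ∀ a b : W, G.Adj (f a) (f b) ↔ H.Adj a b

def gemGraph : SimpleGraph (Fin 5) :=
  SimpleGraph.fromRel fun a b =>
    ((a : ℕ), (b : ℕ)) ∈ [(0,1),(1,2),(2,3),(4,0),(4,1),(4,2),(4,3)]

def houseGraph : SimpleGraph (Fin 5) :=
  SimpleGraph.fromRel fun a b =>
    ((a : ℕ), (b : ℕ)) ∈ [(0,1),(1,2),(2,3),(0,3),(0,4),(1,4)]

def dominoGraph : SimpleGraph (Fin 6) :=
  SimpleGraph.fromRel fun a b =>
    ((a : ℕ), (b : ℕ)) ∈ [(0,1),(1,2),(2,3),(0,3),(2,4),(4,5),(3,5)]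

def aGraph : SimpleGraph (Fin 6) :=
  SimpleGraph.fromRel fun a b =>
    ((a : ℕ), (b : ℕ)) ∈ [(0,1),(1,2),(2,3),(0,3),(2,4),(3,5)]

/-- A triangle path: a path such that any two of its vertices at distance
greater than 2 along the path are non-adjacent in `G`. -/
def IsTrianglePath (G : SimpleGraph V) {u v : V} (w : G.Walk u v) : Prop :=
  w.IsPath ∧ ∀ i j : ℕ, ∀ hi : i < w.support.length, ∀ hj : j < w.support.length,
    i + 2 < j → ¬ G.Adj (w.support.get ⟨i, hi⟩) (w.support.get ⟨j, hj⟩)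

/-- `S` is `H`-free convex. -/
def HFreeConvex [Fintype W] (G : SimpleGraph V) (H : SimpleGraph W) (S : Set V) : Prop :=
  ∀ (S' : Finset V), ↑S' ⊆ S → S'.card = Fintype.card W - 1 →
    ∀ x : V, Nonempty ((G.induce (↑S' ∪ {x} : Set V)) ≃g H) → x ∈ S

/-- `a b c d` is an induced path on four vertices of `G`. -/
def InducedP4 (G : SimpleGraph V) (a b c d : V) : Prop :=
  G.Adj a b ∧ G.Adj b c ∧ G.Adj c d ∧ ¬ G.Adj a c ∧ ¬ G.Adj a d ∧ ¬ G.Adj b d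

/-- Every connected component of `G` is a star. -/
def StarForest (G : SimpleGraph V) : Prop :=
  ∀ v : V, ∃ c : V, G.Reachable v c ∧ (∀ x, G.Reachable c x → x ≠ c → G.Adj c x) ∧
    ∀ x y, G.Adj c x → G.Adj c y → ¬ G.Adj x y

/-- An induced `n`-gem in `G`: `x 0, …, x n` is an induced path and `u` is adjacent
to all of them, the whole forming an induced subgraph of `G`. -/
def IsInducedNGem (G : SimpleGraph V) (n : ℕ) (x : Fin (n + 1) → V) (u : V) : Prop :=
  Function.Injective x ∧ (∀ i, x i ≠ u) ∧
  (∀ i j, G.Adj (x i) (x j) ↔ ((i : ℕ) + 1 = (j : ℕ) ∨ (j : ℕ) + 1 = (i : ℕ))) ∧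
  (∀ i, G.Adj u (x i))

/-- The induced `n`-gem is solved: there is an induced path of length 3 in `G`
connecting `x 0` and `x n` that avoids `u`. -/
def GemSolved (G : SimpleGraph V) (n : ℕ) (x : Fin (n + 1) → V) (u : V) : Prop :=
  ∃ w : G.Walk (x 0) (x (Fin.last n)), IsInducedPathW G w ∧ w.length = 3 ∧ u ∉ w.support


namespace SCG

lemma exists_walk {V : Type*} (G : SimpleGraph V) (n : ℕ) : ∀ (u : ℕ → V),
    (∀ i < n, G.Adj (u i) (u (i + 1))) →
    ∃ w : G.Walk (u 0) (u n), w.length = n ∧ ∀ k ≤ n, w.getVert k = u k := by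
  induction n with
  | zero => intro u _; exact ⟨Walk.nil, rfl, fun k hk => by simp_all⟩
  | succ n ih =>
    intro u h
    obtain ⟨w, hl, hw⟩ := ih (fun k => u (k + 1)) (fun i hi => h (i + 1) (by omega))
    refine ⟨Walk.cons (h 0 (by omega)) w, by simp [hl], ?_⟩
    intro k hk
    cases k with
    | zero => simp
    | succ k => rw [Walk.getVert_cons_succ]; exact hw k (by omega)

/-- Even-chorded paths as sequences. -/
structure ESeq {V : Type*} (G : SimpleGraph V) (u : ℕ → V) (n : ℕ) : Prop where
  inj : ∀ i j, i ≤ n → j ≤ n → u i = u j → i = j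
  adj : ∀ i, i < n → G.Adj (u i) (u (i + 1))
  ch : ∀ i j, i + 1 < j → j ≤ n → G.Adj (u i) (u j) → (j - i) % 2 = 0 ∧ 0 < i ∧ j < n

/-- Convexity of `T` relative to `S`. -/
def SC {V : Type*} (G : SimpleGraph V) (S T : Set V) : Prop :=
  ∀ u n, ESeq G u n → (∀ i ≤ n, u i ∈ S) → u 0 ∈ T → u n ∈ T → ∀ i ≤ n, u i ∈ T

lemma eseq_of_walk {V : Type*} {G : SimpleGraph V} {a b : V} (w : G.Walk a b)
    (h : IsEvenChorded G w) : ESeq G w.getVert w.length := by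
  obtain ⟨hp, hc⟩ := h
  refine ⟨fun i j hi hj e => hp.getVert_injOn hi hj e, fun i hi => w.adj_getVert_succ hi, ?_⟩
  intro i j hij hj ha
  have := hc i j (by simp; omega) (by simp; omega) hij (by
    simpa [Walk.support_getElem_eq_getVert] using ha)
  simp only [Walk.length_support] at this
  rw [Nat.even_iff] at this
  omega

lemma walk_of_eseq {V : Type*} {G : SimpleGraph V} {u : ℕ → V} {n : ℕ} (h : ESeq G u n) :
    ∃ w : G.Walk (u 0) (u n), w.length = n ∧ (∀ k ≤ n, w.getVert k = u k) ∧
      IsEvenChorded G w := by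
  obtain ⟨w, hl, hw⟩ := exists_walk G n u h.adj
  refine ⟨w, hl, hw, (Walk.IsPath.getVert_injOn_iff w).1 ?_, ?_⟩
  · intro i hi j hj e
    simp only [Set.mem_ofPred_eq, hl] at hi hj
    rw [hw i hi, hw j hj] at e
    exact h.inj i j hi hj e
  · intro i j hi hj hij ha
    simp only [Walk.length_support, hl] at hi hj ⊢
    simp only [List.get_eq_getElem, Walk.support_getElem_eq_getVert] at ha
    rw [hw i (by omega), hw j (by omega)] at ha
    have := h.ch i j hij (by omega) ha
    rw [Nat.even_iff]; omega

lemma pconvex_iff {V : Type*} (G : SimpleGraph V) (T : Set V) :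
    PConvex G (fun _ _ w => IsEvenChorded G w) T ↔ SC G Set.univ T := by
  constructor
  · intro h u n hu _ h0 hn i hi
    obtain ⟨w, hl, hw, he⟩ := walk_of_eseq hu
    have := h h0 hn w he (w.getVert i) (w.getVert_mem_support i)
    rwa [hw i hi] at this
  · intro h a b ha hb w hw x hx
    obtain ⟨k, hk, hkl⟩ := Walk.mem_support_iff_exists_getVert.1 hx
    have := h _ _ (eseq_of_walk w hw) (fun _ _ => trivial) (by simpa using ha)
      (by simpa using hb) k hkl
    rwa [hk] at this

lemma consec_iff {V : Type*} {G : SimpleGraph V} {a b : V} (w : G.Walk a b) (x y : V) :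
    [x, y] <:+: w.support ↔ ∃ k < w.length, w.getVert k = x ∧ w.getVert (k + 1) = y := by
  rw [List.infix_iff_getElem?]
  constructor
  · rintro ⟨k, hk, h⟩
    simp only [List.length_cons, List.length_nil, Walk.length_support] at hk
    have h0 := h 0 (by simp)
    have h1 := h 1 (by simp)
    refine ⟨k, by omega, ?_, ?_⟩
    · simp at h0
      rw [← Walk.getVert_eq_support_getElem? w (by omega)] at h0
      simpa using h0
    · simp at h1
      rw [add_comm, ← Walk.getVert_eq_support_getElem? w (by omega)] at h1
      simpa using h1
  · rintro ⟨k, hk, h0, h1⟩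
    refine ⟨k, by simp; omega, ?_⟩
    intro i hi
    simp at hi
    interval_cases i
    · simp [← Walk.getVert_eq_support_getElem? w (show k ≤ _ by omega), h0]
    · rw [add_comm]
      simp [← Walk.getVert_eq_support_getElem? w (show k + 1 ≤ _ by omega), h1]

/-- walk of a cyclic sequence -/
lemma cycle_walk {V : Type*} (G : SimpleGraph V) (c : ℕ → V) (n : ℕ) (hn : 3 ≤ n)
    (hc : c n = c 0) (adj : ∀ i < n, G.Adj (c i) (c (i + 1)))
    (inj : ∀ i j, i < n → j < n → c i = c j → i = j) :
    ∃ w : G.Walk (c 0) (c 0), w.IsCycle ∧ w.length = n ∧ ∀ k ≤ n, w.getVert k = c k := by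
  obtain ⟨w, hl, hw⟩ := exists_walk G n c adj
  refine ⟨w.copy rfl hc, ?_, by simpa using hl, by simpa using hw⟩
  rw [Walk.isCycle_iff_isPath_tail_and_le_length]
  refine ⟨?_, by simp; omega⟩
  rw [← Walk.IsPath.getVert_injOn_iff]
  have hlt : (w.copy rfl hc).tail.length = n - 1 := by
    simp [hl]
  intro i hi j hj e
  simp only [Set.mem_ofPred_eq, hlt] at hi hj
  simp only [Walk.getVert_tail, Walk.getVert_copy] at e
  rw [hw _ (by omega), hw _ (by omega)] at e
  by_cases h1 : i + 1 = n
  · by_cases h2 : j + 1 = n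
    · omega
    · rw [h1, hc] at e
      have := inj 0 (j + 1) (by omega) (by omega) e
      omega
  · by_cases h2 : j + 1 = n
    · rw [h2, hc] at e
      have := inj (i + 1) 0 (by omega) (by omega) e
      omega
    · have := inj (i + 1) (j + 1) (by omega) (by omega) e
      omega

lemma even_cycle {V : Type*} {G : SimpleGraph V} (hs : StronglyChordal G) (c : ℕ → V) (n : ℕ)
    (hn : 6 ≤ n) (hev : n % 2 = 0)
    (hc : c n = c 0) (adj : ∀ i < n, G.Adj (c i) (c (i + 1)))
    (inj : ∀ i j, i < n → j < n → c i = c j → i = j) :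
    ∃ i j, i < j ∧ j < n ∧ G.Adj (c i) (c j) ∧ (j - i) % 2 = 1 ∧ 1 < j - i ∧ j - i + 1 < n := by
  obtain ⟨w, hw, hl, hv⟩ := cycle_walk G c n (by omega) hc adj inj
  obtain ⟨i, j, hi, hj, hij, ha, hodd, hlt⟩ := hs.2 _ w hw (by rw [hl, Nat.even_iff]; exact hev)
    (by omega)
  simp only [Walk.length_support, hl] at hi hj
  simp only [List.get_eq_getElem, Walk.support_getElem_eq_getVert] at ha
  rw [hv i (by omega), hv j (by omega)] at ha
  rw [hl] at hodd hlt
  rw [Nat.odd_iff] at hodd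
  rw [lt_min_iff] at hlt
  have hpar : (j - i) % 2 = 1 := by
    rcases min_choice (j - i) (n - (j - i)) with h | h <;> rw [h] at hodd <;> omega
  by_cases hjn : j = n
  · subst hjn
    rw [hc] at ha
    exact ⟨0, i, by omega, by omega, ha.symm, by omega, by omega, by omega⟩
  · exact ⟨i, j, hij, by omega, ha, hpar, by omega, by omega⟩

lemma cyc_false {V : Type*} {G : SimpleGraph V} (hs : StronglyChordal G) (v : V) (w : ℕ → V)
    (j l : ℕ) (hjl : j + 4 ≤ l) (hpar : (l - j) % 2 = 0)
    (adj : ∀ k, j ≤ k → k < l → G.Adj (w k) (w (k + 1)))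
    (inj : ∀ a b, j ≤ a → a ≤ l → j ≤ b → b ≤ l → w a = w b → a = b)
    (hvj : G.Adj v (w j)) (hvl : G.Adj v (w l))
    (hne : ∀ k, j ≤ k → k ≤ l → v ≠ w k)
    (hna : ∀ k, j < k → k < l → (k - j) % 2 = 0 → ¬ G.Adj v (w k))
    (hch : ∀ a b, j ≤ a → a + 1 < b → b ≤ l → G.Adj (w a) (w b) → (b - a) % 2 = 0) : False := by
  obtain ⟨c, hcdef⟩ : ∃ c : ℕ → V, c = fun k => if k = 0 then v else
    if k ≤ l - j + 1 then w (j + k - 1) else v := ⟨_, rfl⟩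
  have c0 : c 0 = v := by simp [hcdef]
  have cm : ∀ k, 0 < k → k ≤ l - j + 1 → c k = w (j + k - 1) := by
    intro k h1 h2
    simp [hcdef, h2, h1.ne']
  have cn : c (l - j + 2) = v := by simp [hcdef]
  obtain ⟨a, b, hab, hb, hadj, hodd, h1, h2⟩ := even_cycle hs c (l - j + 2) (by omega) (by omega)
    (by rw [c0, cn]) (by
      intro i hi
      by_cases hi0 : i = 0
      · subst hi0
        rw [c0, cm _ (by omega) (by omega)]
        simpa using hvj
      · by_cases hil : i = l - j + 1
        · subst hil
          rw [cn, cm _ (by omega) (by omega)]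
          have : j + (l - j + 1) - 1 = l := by omega
          rw [this]; exact hvl.symm
        · rw [cm _ (by omega) (by omega), cm _ (by omega) (by omega)]
          have := adj (j + i - 1) (by omega) (by omega)
          have e : j + i - 1 + 1 = j + (i + 1) - 1 := by omega
          rwa [e] at this) (by
      intro a b ha hb e
      by_cases ha0 : a = 0
      · by_cases hb0 : b = 0
        · omega
        · rw [ha0, c0, cm _ (by omega) (by omega)] at e
          exact absurd e (hne _ (by omega) (by omega))
      · by_cases hb0 : b = 0
        · rw [hb0, c0, cm _ (by omega) (by omega)] at e
          exact absurd e.symm (hne _ (by omega) (by omega))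
        · rw [cm _ (by omega) (by omega), cm _ (by omega) (by omega)] at e
          have := inj _ _ (by omega) (by omega) (by omega) (by omega) e
          omega)
  rw [cm b (by omega) (by omega)] at hadj
  by_cases ha0 : a = 0
  · rw [ha0, c0] at hadj
    exact hna _ (by omega) (by omega) (by omega) hadj
  · rw [cm a (by omega) (by omega)] at hadj
    have := hch _ _ (by omega) (by omega) (by omega) hadj
    omega

/-- The hole lemma for chordal graphs. -/
lemma hole0 {V : Type*} {G : SimpleGraph V} (hch : Chordal G) (v a b : V) (hva : G.Adj v a)
    (hvb : G.Adj v b) (hab : a ≠ b)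
    (hex : ∃ N, ∃ w : ℕ → V, w 0 = a ∧ w N = b ∧ (∀ k < N, G.Adj (w k) (w (k + 1))) ∧
      ∀ k, 0 < k → k < N → v ≠ w k ∧ ¬ G.Adj v (w k)) : G.Adj a b := by
  classical
  set N := Nat.find hex with hN
  obtain ⟨w, w0, wN, adj, hw⟩ := Nat.find_spec hex
  rw [← hN] at wN adj hw
  have hmin : ∀ M < N, ¬ _ := fun M hM => Nat.find_min hex hM
  -- shortcuts
  have short : ∀ i k, i < k → k ≤ N → w i = w k → False := by
    intro i k hik hk e
    refine hmin (N - (k - i)) (by omega) ⟨fun t => if t ≤ i then w t else w (t + (k - i)), ?_, ?_,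
      ?_, ?_⟩
    · simpa using w0
    · by_cases h : k = N
      · have : N - (k - i) ≤ i := by omega
        simp only [this, if_true]
        have h2 : N - (k - i) = i := by omega
        rw [h2, e, h, wN]
      · have : ¬ N - (k - i) ≤ i := by omega
        simp only [this, if_false]
        have h2 : N - (k - i) + (k - i) = N := by omega
        rw [h2, wN]
    · intro t ht
      by_cases h1 : t < i
      · have h2 : t ≤ i := by omega
        have h3 : t + 1 ≤ i := by omega
        simp only [h2, h3, if_true]
        exact adj t (by omega)
      · by_cases h2 : t = i
        · subst h2
          simp only [le_refl, if_true]
          rw [if_neg (by omega), e]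
          have := adj k (by omega)
          have h3 : t + 1 + (k - t) = k + 1 := by omega
          rwa [h3]
        · dsimp only
          rw [if_neg (by omega), if_neg (by omega)]
          have := adj (t + (k - i)) (by omega)
          have h3 : t + 1 + (k - i) = t + (k - i) + 1 := by omega
          rwa [h3]
    · intro t ht0 ht
      dsimp only
      split_ifs
      · exact hw t ht0 (by omega)
      · exact hw _ (by omega) (by omega)
  have short2 : ∀ i k, i + 1 < k → k ≤ N → G.Adj (w i) (w k) → False := by
    intro i k hik hk e
    refine hmin (N - (k - i - 1)) (by omega)
      ⟨fun t => if t ≤ i then w t else w (t + (k - i - 1)), ?_, ?_, ?_, ?_⟩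
    · simpa using w0
    · have : ¬ N - (k - i - 1) ≤ i := by omega
      simp only [this, if_false]
      have h2 : N - (k - i - 1) + (k - i - 1) = N := by omega
      rw [h2, wN]
    · intro t ht
      by_cases h1 : t < i
      · have h2 : t ≤ i := by omega
        have h3 : t + 1 ≤ i := by omega
        simp only [h2, h3, if_true]
        exact adj t (by omega)
      · by_cases h2 : t = i
        · subst h2
          simp only [le_refl, if_true]
          rw [if_neg (by omega)]
          have h3 : t + 1 + (k - t - 1) = k := by omega
          rwa [h3]
        · dsimp only
          rw [if_neg (by omega), if_neg (by omega)]
          have := adj (t + (k - i - 1)) (by omega)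
          have h3 : t + 1 + (k - i - 1) = t + (k - i - 1) + 1 := by omega
          rwa [h3]
    · intro t ht0 ht
      dsimp only
      split_ifs
      · exact hw t ht0 (by omega)
      · exact hw _ (by omega) (by omega)
  by_contra hnab
  have hN2 : 2 ≤ N := by
    by_contra hlt
    have : N = 0 ∨ N = 1 := by omega
    rcases this with h | h
    · rw [h, w0] at wN; exact hab wN
    · rw [h] at wN
      have := adj 0 (by omega)
      rw [w0] at this
      simp only [zero_add] at this
      rw [wN] at this
      exact hnab this
  have hvne : ∀ k ≤ N, v ≠ w k := by
    intro k hk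
    by_cases h0 : k = 0
    · rw [h0, w0]; exact hva.ne
    · by_cases h1 : k = N
      · rw [h1, wN]; exact hvb.ne
      · exact (hw k (by omega) (by omega)).1
  obtain ⟨c, hcdef⟩ : ∃ c : ℕ → V, c = fun k => if k = 0 then v else
    if k ≤ N + 1 then w (k - 1) else v := ⟨_, rfl⟩
  have c0 : c 0 = v := by simp [hcdef]
  have cm : ∀ k, 0 < k → k ≤ N + 1 → c k = w (k - 1) := by
    intro k h1 h2
    simp [hcdef, h2, h1.ne']
  have cn : c (N + 2) = v := by simp [hcdef]
  obtain ⟨p, hp, hl, hv⟩ := cycle_walk G c (N + 2) (by omega) (by rw [c0, cn]) (by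
      intro i hi
      by_cases hi0 : i = 0
      · subst hi0
        rw [c0, cm _ (by omega) (by omega)]
        simpa [w0] using hva
      · by_cases hil : i = N + 1
        · subst hil
          rw [cn, cm _ (by omega) (by omega)]
          simpa [wN] using hvb.symm
        · rw [cm _ (by omega) (by omega), cm _ (by omega) (by omega)]
          have := adj (i - 1) (by omega)
          have e : i - 1 + 1 = i + 1 - 1 := by omega
          rwa [e] at this) (by
      have key : ∀ a b, a < b → b < N + 2 → c a = c b → False := by
        intro a b hab hb e
        rw [cm b (by omega) (by omega)] at e
        by_cases ha0 : a = 0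
        · rw [ha0, c0] at e
          exact absurd e (hvne _ (by omega))
        · rw [cm _ (by omega) (by omega)] at e
          exact short _ _ (by omega) (by omega) e
      intro a b ha hb e
      rcases lt_trichotomy a b with h | h | h
      · exact (key a b h hb e).elim
      · exact h
      · exact (key b a h ha e.symm).elim)
  refine hch ⟨_, p, ⟨hp, ?_⟩, by omega⟩
  have key : ∀ i j, i < j → j < N + 2 → G.Adj (c i) (c j) → consecIn p.support (c i) (c j) := by
    intro i j hij hj hadj
    have hcons : ∀ k < N + 2, [c k, c (k + 1)] <:+: p.support := by
      intro k hk
      rw [consec_iff]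
      exact ⟨k, by omega, hv k (by omega), hv _ (by omega)⟩
    have hadj' := hadj
    rw [cm j (by omega) (by omega)] at hadj
    by_cases hi0 : i = 0
    · rw [hi0, c0] at hadj
      by_cases hj1 : j = 1
      · rw [hi0, hj1]
        exact Or.inl (hcons 0 (by omega))
      · by_cases hjN : j = N + 1
        · rw [hi0, hjN]
          right
          have := hcons (N + 1) (by omega)
          rwa [cn, ← c0] at this
        · exact absurd hadj (hw _ (by omega) (by omega)).2
    · rw [cm i (by omega) (by omega)] at hadj
      by_cases hj1 : j = i + 1
      · rw [hj1]
        exact Or.inl (hcons i (by omega))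
      · exact (short2 _ _ (by omega) (by omega) hadj).elim
  have hsupp : ∀ x ∈ p.support, ∃ i < N + 2, c i = x := by
    intro x hx
    obtain ⟨k, hk, hkl⟩ := Walk.mem_support_iff_exists_getVert.1 hx
    rw [hl] at hkl
    rw [hv k hkl] at hk
    by_cases h : k = N + 2
    · exact ⟨0, by omega, by rw [← hk, h, cn, c0]⟩
    · exact ⟨k, by omega, hk⟩
  intro x hx y hy hxy
  obtain ⟨i, hi, rfl⟩ := hsupp x hx
  obtain ⟨j, hj, rfl⟩ := hsupp y hy
  rcases lt_trichotomy i j with h | h | h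
  · exact key i j h hj hxy
  · rw [h] at hxy; exact (hxy.ne rfl).elim
  · exact (key j i h hi hxy.symm).symm

lemma hole {V : Type*} {G : SimpleGraph V} (hch : Chordal G) (v : V) (w : ℕ → V) (j l : ℕ)
    (hjl : j ≤ l) (adj : ∀ k, j ≤ k → k < l → G.Adj (w k) (w (k + 1)))
    (hva : G.Adj v (w j)) (hvb : G.Adj v (w l)) (hab : w j ≠ w l)
    (hw : ∀ k, j < k → k < l → v ≠ w k ∧ ¬ G.Adj v (w k)) : G.Adj (w j) (w l) := by
  refine hole0 hch v _ _ hva hvb hab ⟨l - j, fun k => w (j + k), by simp, ?_, ?_, ?_⟩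
  · dsimp only; congr 1; omega
  · intro k hk; exact adj (j + k) (by omega) (by omega)
  · intro k hk hk2; exact hw (j + k) (by omega) (by omega)

lemma exists_last (P : ℕ → Prop) (lo n : ℕ) (h : lo ≤ n) (hP : P lo) :
    ∃ j, lo ≤ j ∧ j ≤ n ∧ P j ∧ ∀ k, j < k → k ≤ n → ¬ P k := by
  induction n with
  | zero => exact ⟨lo, le_refl _, h, hP, fun k h1 h2 => by omega⟩
  | succ n ih =>
    by_cases hn : P (n + 1)
    · exact ⟨n + 1, h, le_refl _, hn, fun k h1 h2 => by omega⟩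
    · have hlo : lo ≤ n := by
        rcases Nat.lt_or_ge n lo with h1 | h1
        · have : lo = n + 1 := by omega
          exact absurd (this ▸ hP) hn
        · exact h1
      obtain ⟨j, h1, h2, h3, h4⟩ := ih hlo
      refine ⟨j, h1, by omega, h3, fun k hk hk2 => ?_⟩
      by_cases hk3 : k = n + 1
      · rwa [hk3]
      · exact h4 k hk (by omega)

lemma exists_first (P : ℕ → Prop) (lo n : ℕ) (h : lo ≤ n) (hP : P n) :
    ∃ j, lo ≤ j ∧ j ≤ n ∧ P j ∧ ∀ k, lo ≤ k → k < j → ¬ P k := by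
  classical
  have hex : ∃ j, lo ≤ j ∧ P j := ⟨n, h, hP⟩
  refine ⟨Nat.find hex, (Nat.find_spec hex).1, Nat.find_min' hex ⟨h, hP⟩,
    (Nat.find_spec hex).2, fun k hk hk2 hPk => Nat.find_min hex hk2 ⟨hk, hPk⟩⟩

lemma pre {V : Type*} {G : SimpleGraph V} {S T : Set V} (hT : SC G S T) (a : V) (haS : a ∈ S)
    (haT : a ∈ T) (w : ℕ → V) (j n : ℕ) (hjn : j ≤ n)
    (inj : ∀ x y, j ≤ x → x ≤ n → j ≤ y → y ≤ n → w x = w y → x = y)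
    (adj : ∀ k, j ≤ k → k < n → G.Adj (w k) (w (k + 1)))
    (hch : ∀ x y, j ≤ x → x + 1 < y → y ≤ n → G.Adj (w x) (w y) → (y - x) % 2 = 0 ∧ y < n)
    (ha : G.Adj a (w j)) (hne : ∀ k, j ≤ k → k ≤ n → a ≠ w k)
    (hna : ∀ k, j < k → k ≤ n → ¬ G.Adj a (w k))
    (hS : ∀ k, j ≤ k → k ≤ n → w k ∈ S) (hn : w n ∈ T) :
    ∀ k, j ≤ k → k ≤ n → w k ∈ T := by
  obtain ⟨c, hcdef⟩ : ∃ c : ℕ → V, c = fun k => if k = 0 then a else w (j + k - 1) := ⟨_, rfl⟩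
  have c0 : c 0 = a := by simp [hcdef]
  have cm : ∀ k, 0 < k → c k = w (j + k - 1) := by
    intro k h1
    simp [hcdef, h1.ne']
  have hE : ESeq G c (n - j + 1) := by
    refine ⟨?_, ?_, ?_⟩
    · intro x y hx hy e
      by_cases hx0 : x = 0
      · by_cases hy0 : y = 0
        · omega
        · rw [hx0, c0, cm y (by omega)] at e
          exact absurd e (hne _ (by omega) (by omega))
      · by_cases hy0 : y = 0
        · rw [hy0, c0, cm x (by omega)] at e
          exact absurd e.symm (hne _ (by omega) (by omega))
        · rw [cm x (by omega), cm y (by omega)] at e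
          have := inj _ _ (by omega) (by omega) (by omega) (by omega) e
          omega
    · intro i hi
      by_cases hi0 : i = 0
      · rw [hi0, c0, cm _ (by omega)]
        simpa using ha
      · rw [cm _ (by omega), cm _ (by omega)]
        have := adj (j + i - 1) (by omega) (by omega)
        have e : j + i - 1 + 1 = j + (i + 1) - 1 := by omega
        rwa [e] at this
    · intro x y hxy hy hadj
      rw [cm y (by omega)] at hadj
      by_cases hx0 : x = 0
      · rw [hx0, c0] at hadj
        exact absurd hadj (hna _ (by omega) (by omega))
      · rw [cm x (by omega)] at hadj
        have := hch _ _ (by omega) (by omega) (by omega) hadj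
        omega
  intro k hk hkn
  have := hT c _ hE (by
    intro i hi
    by_cases hi0 : i = 0
    · rw [hi0, c0]; exact haS
    · rw [cm _ (by omega)]
      exact hS _ (by omega) (by omega)) (by rwa [c0]) (by
      rw [cm _ (by omega)]
      have e : j + (n - j + 1) - 1 = n := by omega
      rwa [e]) (k - j + 1) (by omega)
  rw [cm _ (by omega)] at this
  have e : j + (k - j + 1) - 1 = k := by omega
  rwa [e] at this

lemma three {V : Type*} {G : SimpleGraph V} {S T : Set V} (hTS : T ⊆ S) (hT : SC G S T)
    (a x b : V) (ha : a ∈ T) (hx : x ∈ S) (hb : b ∈ T) (hax : G.Adj a x) (hxb : G.Adj x b)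
    (hab : a ≠ b) (hnab : ¬ G.Adj a b) : x ∈ T := by
  have := pre hT a (hTS ha) ha (fun k => if k = 0 then x else b) 0 1 (by omega)
    (by
      intro p q _ hp _ hq e
      interval_cases p <;> interval_cases q <;> simp at e ⊢
      · exact hxb.ne e
      · exact hxb.ne e.symm)
    (by intro k _ hk; interval_cases k; simpa using hxb)
    (by intro p q; omega) (by simpa using hax)
    (by intro k _ hk; interval_cases k <;> simp [hax.ne, hab])
    (by intro k h1 hk; interval_cases k; simpa using hnab)
    (by intro k _ hk; interval_cases k <;> simp [hx, hTS hb]) (by simpa using hb) 0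
    (by omega) (by omega)
  simpa using this

lemma eseq_reverse {V : Type*} {G : SimpleGraph V} {u : ℕ → V} {n : ℕ} (h : ESeq G u n) :
    ESeq G (fun k => u (n - k)) n := by
  refine ⟨?_, ?_, ?_⟩
  · intro i j hi hj e
    have := h.inj _ _ (by omega) (by omega) e
    omega
  · intro i hi
    have := h.adj (n - (i + 1)) (by omega)
    have e : n - (i + 1) + 1 = n - i := by omega
    rw [e] at this
    exact this.symm
  · intro i j hij hj ha
    have := h.ch (n - j) (n - i) (by omega) (by omega) ha.symm
    omega

lemma lemE {V : Type*} {G : SimpleGraph V} (hs : StronglyChordal G) {u : ℕ → V} {n : ℕ}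
    (h : ESeq G u n) (q : V) (hq : ∀ k ≤ n, q ≠ u k) (h0 : G.Adj q (u 0)) (i r : ℕ) (hi : i ≤ n)
    (hqi : G.Adj q (u i)) (hri : r < i) (hr : ¬ G.Adj q (u r)) :
    ∃ e, e < r ∧ e % 2 = r % 2 ∧ G.Adj q (u e) ∧
      ∀ k, e < k → k ≤ n → k % 2 = e % 2 → ¬ G.Adj q (u k) := by
  have hr0 : r ≠ 0 := by rintro rfl; exact hr h0
  have h1 : G.Adj q (u 1) := by
    by_contra hn1
    obtain ⟨t, ht1, hti, hta, htf⟩ := exists_first (fun k => G.Adj q (u k)) 1 i (by omega) hqi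
    have ht : t ≠ 1 := by rintro rfl; exact hn1 hta
    have := hole hs.1 q u 0 t (by omega) (fun k _ hk => h.adj k (by omega)) h0 hta
      (fun e => by have := h.inj _ _ (by omega) (by omega) e; omega)
      (fun k hk hkt => ⟨hq k (by omega), htf k hk hkt⟩)
    have := h.ch 0 t (by omega) (by omega) this
    omega
  have hr1 : r ≠ 1 := by rintro rfl; exact hr h1
  obtain ⟨e, he1, he2, ⟨hea, hep⟩, hel⟩ :=
    exists_last (fun k => G.Adj q (u k) ∧ k % 2 = r % 2) (r % 2) (r - 1) (by omega) (by
      refine ⟨?_, by omega⟩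
      rcases Nat.mod_two_eq_zero_or_one r with hh | hh <;> rw [hh]
      · exact h0
      · exact h1)
  refine ⟨e, by omega, hep, hea, ?_⟩
  intro k hk hkn hkp hka
  have hkr : r < k := by
    by_contra hle
    by_cases hkr : k = r
    · subst hkr; exact hr hka
    · exact hel k hk (by omega) ⟨hka, by omega⟩
  obtain ⟨f, hf1, hf2, ⟨hfa, hfp⟩, hff⟩ :=
    exists_first (fun k => G.Adj q (u k) ∧ k % 2 = r % 2) (r + 1) k (by omega) ⟨hka, by omega⟩
  refine cyc_false hs q u e f (by omega) (by omega) (fun k _ hk => h.adj k (by omega))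
    (fun a b _ ha _ hb e => h.inj _ _ (by omega) (by omega) e) hea hfa
    (fun k _ hk => hq k (by omega)) ?_ (fun a b _ hab hb hadj =>
      (h.ch a b hab (by omega) hadj).1)
  intro t ht htf htp hta
  by_cases h1 : t < r
  · exact hel t ht (by omega) ⟨hta, by omega⟩
  · by_cases h2 : t = r
    · subst h2; exact hr hta
    · exact hff t (by omega) htf ⟨hta, by omega⟩

/-- closed neighbourhood relation -/
def nb {V : Type*} (G : SimpleGraph V) (x y : V) : Prop := y = x ∨ G.Adj x y

lemma ball {V : Type*} {G : SimpleGraph V} (hs : StronglyChordal G) {u : ℕ → V} {n : ℕ}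
    (h : ESeq G u n) (q : V) (h0 : nb G q (u 0)) (hn : nb G q (u n)) :
    ∀ k ≤ n, nb G q (u k) := by
  by_cases hq : ∃ i ≤ n, u i = q
  · obtain ⟨i, hi, rfl⟩ := hq
    have hi1 : i ≤ 1 := by
      by_contra hlt
      rcases h0 with h0 | h0
      · have := h.inj _ _ (by omega) (by omega) h0; omega
      · have := h.ch 0 i (by omega) hi h0.symm; omega
    have hi2 : n ≤ i + 1 := by
      by_contra hlt
      rcases hn with h0 | h0
      · have := h.inj _ _ (by omega) (by omega) h0; omega
      · have := h.ch i n (by omega) le_rfl h0; omega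
    intro k hk
    by_cases hki : k = i
    · left; rw [hki]
    · right
      rcases Nat.lt_or_ge k i with h1 | h1
      · have := h.adj k (by omega)
        have e : k + 1 = i := by omega
        rw [e] at this; exact this.symm
      · have := h.adj i (by omega)
        have e : i + 1 = k := by omega
        rwa [e] at this
  · push Not at hq
    have h0 : G.Adj q (u 0) := h0.resolve_left (hq 0 (by omega))
    have hn : G.Adj q (u n) := hn.resolve_left (hq n (by omega))
    intro r hr
    by_contra hnr
    have hnr : ¬ G.Adj q (u r) := fun hh => hnr (Or.inr hh)
    have hrn : r ≠ n := by rintro rfl; exact hnr hn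
    obtain ⟨e, he, hep, hea, hek⟩ := lemE hs h q (fun k hk e => hq k hk e.symm) h0 n r le_rfl hn
      (by omega) hnr
    by_cases hpar : n % 2 = e % 2
    · exact hek n (by omega) le_rfl hpar hn
    · have hn1 := hek (n - 1) (by omega) (by omega) (by omega)
      obtain ⟨t, ht1, hti, hta, htf⟩ := exists_last (fun k => G.Adj q (u k)) 0 (n - 1)
        (by omega) h0
      have ht : t ≠ n - 1 := by rintro rfl; exact hn1 hta
      have := hole hs.1 q u t n (by omega) (fun k _ hk => h.adj k (by omega)) hta hn
        (fun e => by have := h.inj _ _ (by omega) (by omega) e; omega)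
        (fun k hk hkt => ⟨fun e => hq k (by omega) e.symm, htf k hk (by omega)⟩)
      have := h.ch t n (by omega) (by omega) this
      omega

lemma core {V : Type*} {G : SimpleGraph V} (hs : StronglyChordal G) {S T : Set V} (hTS : T ⊆ S)
    (hT : SC G S T) (q : V) (hqT : q ∈ T)
    (hmax : ∀ t ∈ T, (∃ y ∈ S, y ∉ T ∧ G.Adj t y) → (∀ y ∈ T, nb G q y → nb G t y) →
      ∀ y ∈ T, nb G t y → nb G q y)
    {u : ℕ → V} {n : ℕ} (h : ESeq G u n) (huS : ∀ k ≤ n, u k ∈ S) (hu0 : u 0 ∉ T)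
    (hqu0 : G.Adj q (u 0)) (hun : u n ∈ T) (hqun : ¬ nb G q (u n)) (r : ℕ) (hr : r ≤ n)
    (hrT : u r ∉ T) (hqr : ¬ G.Adj q (u r)) : False := by
  obtain ⟨m, hm1, hm2, hm3, hm4⟩ := exists_last (fun k => u k ∉ T) r n hr hrT
  have hmn : m ≠ n := by rintro rfl; exact hm3 hun
  obtain ⟨i, hi1, hi2, hi3, hi4⟩ := exists_last (fun k => G.Adj q (u k)) 0 n (by omega) hqu0
  have hin : i ≠ n := by rintro rfl; exact hqun (Or.inr hi3)
  have hqpos : ∀ k ≤ n, q = u k → k = 1 := by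
    intro k hk e
    by_contra hk1
    have hk0 : k ≠ 0 := by rintro rfl; exact hu0 (e ▸ hqT)
    rw [e] at hqu0
    have := h.ch 0 k (by omega) hk hqu0.symm
    omega
  have hqi : ∀ k, i ≤ k → k ≤ n → q ≠ u k := by
    intro k hk hkn e
    have hk1 := hqpos k hkn e
    subst hk1
    have hn1 : n ≠ 1 := by rintro rfl; exact hqun (Or.inl e.symm)
    have := h.adj 1 (by omega)
    rw [← e] at this
    exact hi4 2 (by omega) (by omega) this
  have hmi : m < i := by
    by_contra hle
    exact hm3 (pre hT q (hTS hqT) hqT u i n hi2 (fun x y _ hx _ hy e => h.inj x y hx hy e)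
      (fun k _ hk => h.adj k hk)
      (fun x y _ hxy hy ha => by have := h.ch x y hxy hy ha; omega) hi3 hqi hi4
      (fun k _ hk => huS k hk) hun m (by omega) hm2)
  obtain ⟨e, hem, hea, hene, hek⟩ : ∃ e, e ≤ m ∧ G.Adj q (u e) ∧
      (∀ k, e ≤ k → k ≤ n → q ≠ u k) ∧
      ∀ k, e < k → k ≤ n → k % 2 = e % 2 → ¬ G.Adj q (u k) := by
    by_cases hq : ∃ k ≤ n, q = u k
    · obtain ⟨k, hk, hqk⟩ := hq
      have hk1 := hqpos k hk hqk
      subst hk1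
      have hr0 : r ≠ 0 := by rintro rfl; exact hqr hqu0
      have hr1 : r ≠ 1 := by rintro rfl; exact hrT (hqk ▸ hqT)
      refine ⟨2, by omega, ?_, ?_, ?_⟩
      · rw [hqk]; exact h.adj 1 (by omega)
      · intro k hk hkn e
        have := hqpos k hkn e
        omega
      · intro k hk hkn hkp ha
        rw [hqk] at ha
        have := h.ch 1 k (by omega) hkn ha
        omega
    · push Not at hq
      obtain ⟨e, he, _, hea, hek⟩ := lemE hs h q hq hqu0 i r hi2 hi3 (by omega) hqr
      exact ⟨e, by omega, hea, fun k _ hk => hq k hk, hek⟩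
  -- the sequence starting with q
  obtain ⟨v, hvdef⟩ : ∃ v : ℕ → V, v = fun k => if k = 0 then q else u (e + k - 1) := ⟨_, rfl⟩
  have v0 : v 0 = q := by simp [hvdef]
  have vm : ∀ k, 0 < k → v k = u (e + k - 1) := by
    intro k h1
    simp [hvdef, h1.ne']
  obtain ⟨N, hN⟩ : ∃ N, N = n - e + 1 := ⟨_, rfl⟩
  obtain ⟨M, hM⟩ : ∃ M, M = m - e + 1 := ⟨_, rfl⟩
  have vN : v N = u n := by rw [vm _ (by omega)]; congr 1; omega
  have vM : v M = u m := by rw [vm _ (by omega)]; congr 1; omega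
  have vM1 : v (M + 1) = u (m + 1) := by rw [vm _ (by omega)]; congr 1; omega
  have vS : ∀ k ≤ N, v k ∈ S := by
    intro k hk
    by_cases hk0 : k = 0
    · rw [hk0, v0]; exact hTS hqT
    · rw [vm _ (by omega)]; exact huS _ (by omega)
  have vinj : ∀ x y, x ≤ N → y ≤ N → v x = v y → x = y := by
    intro x y hx hy e
    by_cases hx0 : x = 0
    · by_cases hy0 : y = 0
      · omega
      · rw [hx0, v0, vm y (by omega)] at e
        exact absurd e (hene _ (by omega) (by omega))
    · by_cases hy0 : y = 0
      · rw [hy0, v0, vm x (by omega)] at e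
        exact absurd e.symm (hene _ (by omega) (by omega))
      · rw [vm x (by omega), vm y (by omega)] at e
        have := h.inj _ _ (by omega) (by omega) e
        omega
  have vadj : ∀ k < N, G.Adj (v k) (v (k + 1)) := by
    intro i hi
    by_cases hi0 : i = 0
    · rw [hi0, v0, vm _ (by omega)]
      simpa using hea
    · rw [vm _ (by omega), vm _ (by omega)]
      have := h.adj (e + i - 1) (by omega)
      have e : e + i - 1 + 1 = e + (i + 1) - 1 := by omega
      rwa [e] at this
  have vch : ∀ x y, x + 1 < y → y ≤ N → G.Adj (v x) (v y) → (y - x) % 2 = 0 ∧ y < N := by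
    intro x y hxy hy ha
    by_cases hx0 : x = 0
    · rw [hx0, v0] at ha
      constructor
      · by_contra hpar
        rw [vm y (by omega)] at ha
        exact hek _ (by omega) (by omega) (by omega) ha
      · by_contra hlt
        have : y = N := by omega
        rw [this, vN] at ha
        exact hqun (Or.inr ha)
    · rw [vm x (by omega), vm y (by omega)] at ha
      have := h.ch _ _ (by omega) (by omega) ha
      omega
  have hsub : ∀ a ∈ T, nb G q a → nb G (u (m + 1)) a := by
    intro a haT hqa
    by_contra hcon
    have hne1 : a ≠ v (M + 1) := by rw [vM1]; exact fun e => hcon (Or.inl e)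
    have hna1 : ¬ G.Adj a (v (M + 1)) := by rw [vM1]; exact fun e => hcon (Or.inr e.symm)
    obtain ⟨j0, hj0M, hj0⟩ : ∃ j0 ≤ M, G.Adj a (v j0) := by
      rcases hqa with e | ha
      · refine ⟨1, by omega, ?_⟩
        have := vadj 0 (by omega)
        rwa [v0, ← e] at this
      · exact ⟨0, by omega, by rw [v0]; exact ha.symm⟩
    obtain ⟨j, _, hjM, hja, hjl⟩ := exists_last (fun k => G.Adj a (v k)) j0 M hj0M hj0
    have hlow : ∀ k, j ≤ k → k ≤ M + 1 → a ≠ v k := by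
      intro k hjk hk e
      by_cases h1 : k = M + 1
      · exact hne1 (h1 ▸ e)
      · by_cases h2 : k = M
        · rw [h2, vM] at e; exact hm3 (e ▸ haT)
        · have := vadj k (by omega)
          rw [← e] at this
          exact hjl (k + 1) (by omega) (by omega) this
    by_cases hl : ∃ l, M + 2 ≤ l ∧ l ≤ N ∧ G.Adj a (v l)
    · obtain ⟨l0, hl0, hl0N, hl0a⟩ := hl
      obtain ⟨l, hl1, hl2, hla, hlf⟩ := exists_first (fun k => G.Adj a (v k)) (M + 2) l0 hl0 hl0a
      have hanv : ∀ k, j ≤ k → k ≤ l → a ≠ v k := by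
        intro k hjk hkl e
        by_cases h1 : k ≤ M + 1
        · exact hlow k hjk h1 e
        · have := vadj (k - 1) (by omega)
          have e2 : k - 1 + 1 = k := by omega
          rw [e2, ← e] at this
          by_cases h2 : k - 1 = M + 1
          · rw [h2] at this; exact hna1 this.symm
          · exact hlf (k - 1) (by omega) (by omega) this.symm
      have hnadj : ∀ k, j < k → k < l → ¬ G.Adj a (v k) := by
        intro k hk1 hk2
        by_cases h1 : k ≤ M
        · exact hjl k hk1 h1
        · by_cases h2 : k = M + 1
          · rw [h2]; exact hna1
          · exact hlf k (by omega) hk2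
      have hjl' := hole hs.1 a v j l (by omega) (fun k _ hk => vadj k (by omega)) hja hla
        (fun e => by have := vinj _ _ (by omega) (by omega) e; omega)
        (fun k hk1 hk2 => ⟨hanv k (by omega) (by omega), hnadj k hk1 hk2⟩)
      have hpar := (vch j l (by omega) (by omega) hjl').1
      by_cases h4 : j + 4 ≤ l
      · exact cyc_false hs a v j l h4 hpar (fun k _ hk => vadj k (by omega))
          (fun x y _ hx _ hy e => vinj x y (by omega) (by omega) e) hja hla hanv
          (fun k hk1 hk2 _ => hnadj k hk1 hk2)
          (fun x y _ hxy hy ha => (vch x y hxy (by omega) ha).1)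
      · have hjM' : j = M := by omega
        rw [hjM', vM] at hja
        have hadj := vadj M (by omega)
        rw [vM, vM1] at hadj
        refine hm3 (three hTS hT a (u m) (u (m + 1)) haT (huS m hm2) ?_ hja hadj ?_ ?_)
        · by_contra hh; exact hm4 (m + 1) (by omega) (by omega) hh
        · rw [← vM1]; exact hne1
        · rw [← vM1]; exact hna1
    · push Not at hl
      have := pre hT a (hTS haT) haT v j N (by omega)
        (fun x y _ hx _ hy e => vinj x y hx hy e) (fun k _ hk => vadj k hk)
        (fun x y _ hxy hy ha => vch x y hxy hy ha) hja (by
          intro k hjk hkN e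
          by_cases h1 : k ≤ M + 1
          · exact hlow k hjk h1 e
          · have := vadj (k - 1) (by omega)
            have e2 : k - 1 + 1 = k := by omega
            rw [e2, ← e] at this
            by_cases h2 : k - 1 = M + 1
            · rw [h2] at this; exact hna1 this.symm
            · exact hl (k - 1) (by omega) (by omega) this.symm) (by
          intro k hk1 hk2
          by_cases h1 : k ≤ M
          · exact hjl k hk1 h1
          · by_cases h2 : k = M + 1
            · rw [h2]; exact hna1
            · exact hl k (by omega) hk2) (fun k _ hk => vS k hk) (by rw [vN]; exact hun) M
        hjM (by omega)
      rw [vM] at this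
      exact hm3 this
  have hTm : ∀ k, m < k → k ≤ n → u k ∈ T := by
    intro k hk hkn
    by_contra hh; exact hm4 k hk hkn hh
  have heq := hmax (u (m + 1)) (hTm _ (by omega) (by omega))
    ⟨u m, huS m hm2, hm3, (h.adj m (by omega)).symm⟩ hsub
  have h1 : nb G q (u (m + 1)) := heq _ (hTm _ (by omega) (by omega)) (Or.inl rfl)
  by_cases hmn1 : m + 1 = n
  · rw [hmn1] at h1; exact hqun h1
  · have h2 : nb G q (u (m + 2)) := heq _ (hTm _ (by omega) (by omega))
      (Or.inr (h.adj (m + 1) (by omega)))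
    have h1' := h1.resolve_left (fun e => hene (m + 1) (by omega) (by omega) e.symm)
    have h2' := h2.resolve_left (fun e => hene (m + 2) (by omega) (by omega) e.symm)
    by_cases hp : (m + 1) % 2 = e % 2
    · exact hek _ (by omega) (by omega) hp h1'
    · exact hek _ (by omega) (by omega) (by omega) h2'

/-- A five term sequence. -/
def seq5 {V : Type*} (a b c d e : V) : ℕ → V
  | 0 => a
  | 1 => b
  | 2 => c
  | 3 => d
  | _ => e

lemma eseq5 {V : Type*} {G : SimpleGraph V} (a b c d e : V) (hab : G.Adj a b) (hbc : G.Adj b c)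
    (hcd : G.Adj c d) (hde : G.Adj d e) (ac : a ≠ c) (ad : a ≠ d) (ae : a ≠ e) (bd : b ≠ d)
    (be : b ≠ e) (ce : c ≠ e) (nac : ¬ G.Adj a c) (nad : ¬ G.Adj a d) (nae : ¬ G.Adj a e)
    (nbe : ¬ G.Adj b e) (nce : ¬ G.Adj c e) : ESeq G (seq5 a b c d e) 4 := by
  refine ⟨?_, ?_, ?_⟩
  · intro i j hi hj h
    interval_cases i <;> interval_cases j <;> simp only [seq5] at h <;> first
      | rfl
      | exact absurd h hab.ne
      | exact absurd h hbc.ne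
      | exact absurd h hcd.ne
      | exact absurd h hde.ne
      | exact absurd h.symm hab.ne
      | exact absurd h.symm hbc.ne
      | exact absurd h.symm hcd.ne
      | exact absurd h.symm hde.ne
      | contradiction
      | (have h := h.symm; contradiction)
  · intro i hi
    interval_cases i <;> simpa only [seq5]
  · intro i j hij hj h
    have hi : i ≤ 4 := by omega
    interval_cases i <;> interval_cases j <;> first
      | omega
      | (simp only [seq5] at h; contradiction)

lemma eseq3 {V : Type*} {G : SimpleGraph V} (a b c : V) (hab : G.Adj a b) (hbc : G.Adj b c)
    (ac : a ≠ c) (nac : ¬ G.Adj a c) : ESeq G (seq5 a b c c c) 2 := by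
  refine ⟨?_, ?_, ?_⟩
  · intro i j hi hj h
    interval_cases i <;> interval_cases j <;> simp only [seq5] at h <;> first
      | rfl
      | exact absurd h hab.ne
      | exact absurd h hbc.ne
      | exact absurd h.symm hab.ne
      | exact absurd h.symm hbc.ne
      | contradiction
      | (have h := h.symm; contradiction)
  · intro i hi
    interval_cases i <;> simpa only [seq5]
  · intro i j hij hj h
    have hi : i ≤ 2 := by omega
    interval_cases i <;> interval_cases j <;> first
      | omega
      | (simp only [seq5] at h; contradiction)

lemma main_step {V : Type*} {G : SimpleGraph V} (hs : StronglyChordal G) {S T : Set V}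
    (hTS : T ⊆ S) (hT : SC G S T) (q : V) (hqT : q ∈ T)
    (hmax : ∀ t ∈ T, (∃ y ∈ S, y ∉ T ∧ G.Adj t y) → (∀ y ∈ T, nb G q y → nb G t y) →
      ∀ y ∈ T, nb G t y → nb G q y) :
    SC G S (T ∪ {y | y ∈ S ∧ y ∉ T ∧ G.Adj q y}) := by
  intro u n h hS h0 hn k hk
  by_contra hcon
  have hkT : u k ∉ T := fun hh => hcon (Or.inl hh)
  have hkq : ¬ G.Adj q (u k) := fun hh => hcon (Or.inr ⟨hS k hk, hkT, hh⟩)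
  have hknb : ¬ nb G q (u k) := by
    rintro (hh | hh)
    · exact hkT (hh ▸ hqT)
    · exact hkq hh
  by_cases hn0 : nb G q (u 0)
  · by_cases hnn : nb G q (u n)
    · exact hknb (ball hs h q hn0 hnn k hk)
    · have hnT : u n ∈ T := hn.resolve_right (fun hh => hnn (Or.inr hh.2.2))
      by_cases h0T : u 0 ∈ T
      · exact hkT (hT u n h hS h0T hnT k hk)
      · have h0q := (h0.resolve_left h0T).2.2
        exact core hs hTS hT q hqT hmax h hS h0T h0q hnT hnn k hk hkT hkq
  · have h0T : u 0 ∈ T := h0.resolve_right (fun hh => hn0 (Or.inr hh.2.2))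
    by_cases hnT : u n ∈ T
    · exact hkT (hT u n h hS h0T hnT k hk)
    · have hnq := (hn.resolve_left hnT).2.2
      have e : n - (n - k) = k := by omega
      refine core hs hTS hT q hqT hmax (eseq_reverse h) (fun i hi => hS _ (by omega))
        (by simpa using hnT) (by simpa using hnq) (by simpa using h0T) (by simpa using hn0)
        (n - k) (by omega) (by simpa only [e] using hkT) (by simpa only [e] using hkq)

/-- simple vertices relative to `S` -/
def SimpleR {V : Type*} (G : SimpleGraph V) (S : Set V) (x : V) : Prop :=
  ∀ u ∈ S, nb G x u → ∀ w ∈ S, nb G x w →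
    (∀ y ∈ S, nb G u y → nb G w y) ∨ (∀ y ∈ S, nb G w y → nb G u y)

lemma nb_symm {V : Type*} {G : SimpleGraph V} {x y : V} (h : nb G x y) : nb G y x := by
  rcases h with h | h
  · exact Or.inl h.symm
  · exact Or.inr h.symm

lemma not_nb {V : Type*} {G : SimpleGraph V} {x y : V} (h : ¬ nb G x y) :
    y ≠ x ∧ ¬ G.Adj x y := by
  unfold nb at h
  push Not at h
  exact h

lemma simple_ext {V : Type*} {G : SimpleGraph V} (hs : StronglyChordal G) {S T : Set V}
    (hTS : T ⊆ S) (hT : SC G S T) (q : V) (hqT : q ∈ T)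
    (hmax : ∀ t ∈ T, (∃ y ∈ S, y ∉ T ∧ G.Adj t y) → (∀ y ∈ T, nb G q y → nb G t y) →
      ∀ y ∈ T, nb G t y → nb G q y)
    (hall : ∀ y ∈ S, y ∉ T → G.Adj q y) (x : V) (hxS : x ∈ S) (hxT : x ∉ T)
    (hx : SimpleR G (S \ {q}) x) : SimpleR G S x := by
  have hqx := hall x hxS hxT
  have key : ∀ u ∈ S, nb G x u → ∀ y ∈ S, nb G u y → nb G q y := by
    intro u huS hxu y hyS huy
    by_cases hyT : y ∈ T
    swap
    · exact Or.inr (hall y hyS hyT)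
    by_contra hnqy
    obtain ⟨hyq, hnqy'⟩ := not_nb hnqy
    by_cases huT : u ∈ T
    swap
    · have hyu : y ≠ u := by rintro rfl; exact huT hyT
      exact huT (three hTS hT y u q hyT huS hqT (huy.resolve_left hyu).symm
        (hall u huS huT).symm hyq (fun hh => hnqy' hh.symm))
    have hux : u ≠ x := by rintro rfl; exact hxT huT
    have hxu' := hxu.resolve_left hux
    have huq : u ≠ q := by rintro rfl; exact hnqy huy
    have hquA : G.Adj q u := by
      by_contra hh
      exact hxT (three hTS hT u x q huT hxS hqT hxu'.symm hqx.symm huq (fun h2 => hh h2.symm))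
    have hyu : y ≠ u := by rintro rfl; exact hnqy' hquA
    have huyA := huy.resolve_left hyu
    by_cases hb : ∀ b ∈ T, nb G q b → nb G u b
    · exact hnqy (hmax u huT ⟨x, hxS, hxT, hxu'.symm⟩ hb y hyT huy)
    push Not at hb
    obtain ⟨b, hbT, hqb, hub⟩ := hb
    obtain ⟨hbu, hub'⟩ := not_nb hub
    have hbq : b ≠ q := by rintro rfl; exact hub' hquA.symm
    have hqbA := hqb.resolve_left hbq
    have hyx : y ≠ x := by rintro rfl; exact hxT hyT
    have hbx : b ≠ x := by rintro rfl; exact hxT hbT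
    have hnyx : ¬ G.Adj y x := fun hh =>
      hxT (three hTS hT y x q hyT hxS hqT hh hqx.symm hyq (fun h2 => hnqy' h2.symm))
    have hnxb : ¬ G.Adj x b := fun hh =>
      hxT (three hTS hT b x u hbT hxS huT hh.symm hxu' hbu (fun h2 => hub' h2.symm))
    have hyb : y ≠ b := by rintro rfl; exact hub huy
    have hnyb : ¬ G.Adj y b := by
      intro hh
      refine hub' (hole0 hs.1 q u b hquA hqbA hbu.symm ⟨2, seq5 u y b b b, rfl, rfl, ?_, ?_⟩)
      · intro k hk
        interval_cases k <;> simpa only [seq5]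
      · intro k hk hk2
        have : k = 1 := by omega
        subst this
        exact ⟨hyq.symm, hnqy'⟩
    have hE := eseq5 y u x q b huyA.symm hxu'.symm hqx.symm hqbA hyx hyq hyb huq hbu.symm
      hbx.symm hnyx (fun h2 => hnqy' h2.symm) hnyb hub' hnxb
    refine hxT (hT _ _ hE ?_ hyT hbT 2 (by omega))
    intro k hk
    interval_cases k <;> simp only [seq5]
    · exact hyS
    · exact huS
    · exact hxS
    · exact hTS hqT
    · exact hTS hbT
  intro u huS hxu w hwS hxw
  by_cases huq : u = q
  · right; rw [huq]; exact key w hwS hxw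
  by_cases hwq : w = q
  · left; rw [hwq]; exact key u huS hxu
  rcases hx u ⟨huS, huq⟩ hxu w ⟨hwS, hwq⟩ hxw with h | h
  · left
    intro y hyS huy
    by_cases hy : y = q
    · rw [hy]; exact nb_symm (key w hwS hxw w hwS (Or.inl rfl))
    · exact h y ⟨hyS, hy⟩ huy
  · right
    intro y hyS huy
    by_cases hy : y = q
    · rw [hy]; exact nb_symm (key u huS hxu u huS (Or.inl rfl))
    · exact h y ⟨hyS, hy⟩ huy

lemma exists_simple {V : Type*} [Finite V] {G : SimpleGraph V} (hs : StronglyChordal G) (N : ℕ) :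
    ∀ S T : Set V, S.ncard + (S \ T).ncard ≤ N → T ⊆ S → (∃ v ∈ S, v ∉ T) → SC G S T →
      ∃ x ∈ S, x ∉ T ∧ SimpleR G S x := by
  induction N with
  | zero =>
    intro S T hN _ hv _
    obtain ⟨v, hv, _⟩ := hv
    have : S.ncard = 0 := by omega
    rw [Set.ncard_eq_zero] at this
    rw [this] at hv
    exact absurd hv (Set.notMem_empty v)
  | succ N ih =>
    intro S T hN hTS hv hT
    by_cases hA : ∃ q ∈ T, ∃ y ∈ S, y ∉ T ∧ G.Adj q y
    · obtain ⟨q, ⟨hqT, hqy⟩, hqmax⟩ := Set.exists_max_image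
        {q | q ∈ T ∧ ∃ y ∈ S, y ∉ T ∧ G.Adj q y} (fun t => {y | y ∈ T ∧ nb G t y}.ncard)
        (Set.toFinite _) hA
      have hmax : ∀ t ∈ T, (∃ y ∈ S, y ∉ T ∧ G.Adj t y) → (∀ y ∈ T, nb G q y → nb G t y) →
          ∀ y ∈ T, nb G t y → nb G q y := by
        intro t ht hty hsub y hy hny
        have h1 : {y | y ∈ T ∧ nb G q y} = {y | y ∈ T ∧ nb G t y} :=
          Set.eq_of_subset_of_ncard_le (fun z hz => ⟨hz.1, hsub z hz.1 hz.2⟩)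
            (hqmax t ⟨ht, hty⟩) (Set.toFinite _)
        have h2 : y ∈ {y | y ∈ T ∧ nb G q y} := by rw [h1]; exact ⟨hy, hny⟩
        exact h2.2
      by_cases hall : ∀ y ∈ S, y ∉ T → G.Adj q y
      · have hlt : (S \ {q}).ncard < S.ncard := by
          refine Set.ncard_lt_ncard ?_ (Set.toFinite _)
          exact ⟨Set.sdiff_subset, fun hh => (hh (hTS hqT)).2 rfl⟩
        have hle : ((S \ {q}) \ (T \ {q})).ncard ≤ (S \ T).ncard :=
          Set.ncard_le_ncard (fun z hz => ⟨hz.1.1, fun hh => hz.2 ⟨hh, hz.1.2⟩⟩) (Set.toFinite _)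
        obtain ⟨v, hvS, hvT⟩ := hv
        obtain ⟨x, hxS, hxT, hx⟩ := ih (S \ {q}) (T \ {q}) (by omega)
          (fun z hz => ⟨hTS hz.1, hz.2⟩)
          ⟨v, ⟨hvS, by rintro rfl; exact hvT hqT⟩, fun hh => hvT hh.1⟩
          (fun u n h hS h0 hn k hk => ⟨hT u n h (fun i hi => (hS i hi).1) h0.1 hn.1 k hk,
            (hS k hk).2⟩)
        have hxT' : x ∉ T := fun hh => hxT ⟨hh, hxS.2⟩
        exact ⟨x, hxS.1, hxT', simple_ext hs hTS hT q hqT hmax hall x hxS.1 hxT' hx⟩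
      · push Not at hall
        obtain ⟨v, hvS, hvT, hvq⟩ := hall
        obtain ⟨y, hyS, hyT, hqy⟩ := hqy
        have hlt : (S \ (T ∪ {y | y ∈ S ∧ y ∉ T ∧ G.Adj q y})).ncard < (S \ T).ncard := by
          refine Set.ncard_lt_ncard ?_ (Set.toFinite _)
          exact ⟨fun z hz => ⟨hz.1, fun hh => hz.2 (Or.inl hh)⟩,
            fun hh => (hh ⟨hyS, hyT⟩).2 (Or.inr ⟨hyS, hyT, hqy⟩)⟩
        obtain ⟨x, hxS, hxT, hx⟩ := ih S _ (by omega) (Set.union_subset hTS (fun z hz => hz.1))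
          ⟨v, hvS, by rintro (hh | hh); exacts [hvT hh, hvq hh.2.2]⟩
          (main_step hs hTS hT q hqT hmax)
        exact ⟨x, hxS, fun hh => hxT (Or.inl hh), hx⟩
    · push Not at hA
      obtain ⟨v, hvS, hvT⟩ := hv
      by_cases hall : ∃ w ∈ S, w ∉ T ∪ {v}
      · have hcross : ∀ u n, ESeq G u n → (∀ k ≤ n, u k ∈ S) → u 0 ∈ T → ∀ k ≤ n, u k ∈ T := by
          intro u n h hS h0 k
          induction k with
          | zero => intro _; exact h0
          | succ k ihk =>
            intro hk
            by_contra hh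
            exact hA (u k) (ihk (by omega)) (u (k + 1)) (hS _ hk) hh (h.adj k (by omega))
        have hlt : (S \ (T ∪ {v})).ncard < (S \ T).ncard := by
          refine Set.ncard_lt_ncard ?_ (Set.toFinite _)
          exact ⟨fun z hz => ⟨hz.1, fun hh => hz.2 (Or.inl hh)⟩,
            fun hh => (hh ⟨hvS, hvT⟩).2 (Or.inr rfl)⟩
        obtain ⟨x, hxS, hxT, hx⟩ := ih S (T ∪ {v}) (by omega)
          (Set.union_subset hTS (by rintro z rfl; exact hvS)) hall (by
            intro u n h hS h0 hn k hk
            rcases h0 with h0 | h0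
            · exact Or.inl (hcross u n h hS h0 k hk)
            · rcases hn with hn | hn
              · have := hcross _ n (eseq_reverse h) (fun i hi => hS _ (by omega))
                  (by simpa using hn) n le_rfl
                simp only [Nat.sub_self] at this
                rw [show u 0 = v from h0] at this
                exact absurd this hvT
              · have hn0 := h.inj 0 n (by omega) le_rfl
                  ((show u 0 = v from h0).trans (show u n = v from hn).symm)
                have : k = 0 := by omega
                rw [this]; exact Or.inr h0)
        exact ⟨x, hxS, fun hh => hxT (Or.inl hh), hx⟩
      · push Not at hall
        have hiso : ∀ u ∈ S, nb G v u → u = v := by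
          intro u hu hvu
          rcases hvu with e | ha
          · exact e
          · rcases hall u hu with h1 | h1
            · exact absurd ha.symm (hA u h1 v hvS hvT)
            · exact h1
        refine ⟨v, hvS, hvT, fun u hu hvu w hw hvw => Or.inl ?_⟩
        rw [hiso u hu hvu, hiso w hw hvw]
        exact fun _ _ h => h

lemma simple_extreme {V : Type*} {G : SimpleGraph V} {S : Set V} (hS : SC G Set.univ S) {x : V}
    (hx : SimpleR G S x) : SC G Set.univ (S \ {x}) := by
  intro u n h _ h0 hn k hk
  have hall := hS u n h (fun _ _ => trivial) h0.1 hn.1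
  refine ⟨hall k hk, ?_⟩
  rintro (e : u k = x)
  have hk0 : k ≠ 0 := by rintro rfl; exact h0.2 e
  have hkn : k ≠ n := by rintro rfl; exact hn.2 e
  obtain ⟨k, rfl⟩ : ∃ j, k = j + 1 := ⟨k - 1, by omega⟩
  have hA1 := h.adj k (by omega)
  have hA2 := h.adj (k + 1) (by omega)
  rw [e] at hA1 hA2
  have hne : u k ≠ u (k + 2) := fun e => by
    have := h.inj _ _ (by omega) (by omega) e
    omega
  rcases hx (u k) (hall _ (by omega)) (Or.inr hA1.symm) (u (k + 2)) (hall _ (by omega))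
    (Or.inr hA2) with h1 | h1
  · have h2 := (h1 _ (hall k (by omega)) (Or.inl rfl)).resolve_left hne
    have h3 := h.ch k (k + 2) (by omega) (by omega) h2.symm
    have h4 := h.adj (k - 1) (by omega)
    rw [show k - 1 + 1 = k by omega] at h4
    rcases h1 _ (hall (k - 1) (by omega)) (Or.inr h4.symm) with h5 | h5
    · have := h.inj _ _ (by omega) (by omega) h5
      omega
    · have := h.ch (k - 1) (k + 2) (by omega) (by omega) h5.symm
      omega
  · have h2 := (h1 _ (hall (k + 2) (by omega)) (Or.inl rfl)).resolve_left hne.symm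
    have h3 := h.ch k (k + 2) (by omega) (by omega) h2
    have h4 := h.adj (k + 2) (by omega)
    rcases h1 _ (hall (k + 2 + 1) (by omega)) (Or.inr h4) with h5 | h5
    · have := h.inj _ _ (by omega) (by omega) h5
      omega
    · have := h.ch k (k + 2 + 1) (by omega) (by omega) h5
      omega

lemma chull_convex {V : Type*} {G : SimpleGraph V} (C : Set V) :
    SC G Set.univ (chull (SC G Set.univ) C) := by
  intro u n h hS h0 hn k hk T hT
  exact hT.2 u n h hS (h0 T hT) (hn T hT) k hk

lemma cvx_eq {V : Type*} (G : SimpleGraph V) :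
    PConvex G (fun _ _ w => IsEvenChorded G w) = SC G Set.univ :=
  funext fun T => propext (pconvex_iff G T)

lemma backward {V : Type*} [Finite V] {G : SimpleGraph V} (hs : StronglyChordal G) :
    IsConvexGeometry (SC G Set.univ) := by
  intro S hS
  have hsub : chull (SC G Set.univ) (extremeSet (SC G Set.univ) S) ⊆ S :=
    Set.sInter_subset_of_mem ⟨fun x hx => hx.1, hS⟩
  refine Set.Subset.antisymm ?_ hsub
  intro v hv
  by_contra hvT
  obtain ⟨x, hxS, hxT, hx⟩ := exists_simple hs _ S _ le_rfl hsub ⟨v, hv, hvT⟩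
    (fun u n h _ h0 hn k hk => chull_convex _ u n h (fun _ _ => trivial) h0 hn k hk)
  refine hxT ?_
  intro T hT
  exact hT.1 ⟨hxS, simple_extreme hS hx⟩

lemma not_cg {V : Type*} {G : SimpleGraph V} (C : Set V) (hC : C.Nonempty)
    (h : ∀ x ∈ C, ∃ u n i, ESeq G u n ∧ i ≤ n ∧ u i = x ∧ u 0 ∈ C ∧ u n ∈ C ∧ u 0 ≠ x ∧ u n ≠ x) :
    ¬ IsConvexGeometry (SC G Set.univ) := by
  intro hcg
  have hCS : C ⊆ chull (SC G Set.univ) C := fun x hx T hT => hT.1 hx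
  have hext : extremeSet (SC G Set.univ) (chull (SC G Set.univ) C) = ∅ := by
    rw [Set.eq_empty_iff_forall_notMem]
    rintro x ⟨hxS, hx⟩
    by_cases hxC : x ∈ C
    · obtain ⟨u, n, i, hE, hi, hix, h0, hn, h0x, hnx⟩ := h x hxC
      exact (hx u n hE (fun _ _ => trivial) ⟨hCS h0, h0x⟩ ⟨hCS hn, hnx⟩ i hi).2 hix
    · have := hxS (chull (SC G Set.univ) C \ {x})
        ⟨fun y hy => ⟨hCS hy, by rintro rfl; exact hxC hy⟩, hx⟩
      exact this.2 rfl
  have h1 := hcg _ (chull_convex (G := G) C)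
  rw [hext] at h1
  obtain ⟨x, hx⟩ := hC
  have h2 := hCS hx
  rw [h1] at h2
  exact h2 ∅ ⟨Set.Subset.rfl, fun u n _ _ h0 => absurd h0 (Set.notMem_empty _)⟩

lemma c4_false {V : Type*} {G : SimpleGraph V} (hcg : IsConvexGeometry (SC G Set.univ))
    (a b c d : V) (hab : G.Adj a b) (hbc : G.Adj b c) (hcd : G.Adj c d) (hda : G.Adj d a)
    (hac : a ≠ c) (hbd : b ≠ d) (nac : ¬ G.Adj a c) (nbd : ¬ G.Adj b d) : False := by
  refine not_cg {a, b, c, d} ⟨a, by simp⟩ ?_ hcg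
  rintro x (rfl | rfl | rfl | rfl)
  · exact ⟨_, 2, 1, eseq3 b x d hab.symm hda.symm hbd nbd, by omega, rfl, by simp [seq5],
      by simp [seq5], hab.ne.symm, hda.ne⟩
  · exact ⟨_, 2, 1, eseq3 a x c hab hbc hac nac, by omega, rfl, by simp [seq5],
      by simp [seq5], hab.ne, hbc.ne.symm⟩
  · exact ⟨_, 2, 1, eseq3 b x d hbc hcd hbd nbd, by omega, rfl, by simp [seq5],
      by simp [seq5], hbc.ne, hcd.ne.symm⟩
  · exact ⟨_, 2, 1, eseq3 a x c hda.symm hcd.symm hac nac, by omega, rfl, by simp [seq5],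
      by simp [seq5], hda.ne.symm, hcd.ne⟩

lemma cyc_seq {V : Type*} {G : SimpleGraph V} {a : V} (w : G.Walk a a) (hw : w.IsCycle) :
    ∃ c : ℕ → V, (∀ k, c k = w.getVert (k % w.length)) ∧ (∀ k ≤ w.length, c k = w.getVert k) ∧
      (∀ k, G.Adj (c k) (c (k + 1))) ∧
      (∀ k i j, i < w.length → j < w.length → c (k + i) = c (k + j) → i = j) := by
  have h3 := hw.three_le_length
  refine ⟨fun k => w.getVert (k % w.length), fun _ => rfl, ?_, ?_, ?_⟩
  · intro k hk
    by_cases e : k = w.length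
    · rw [e]; simp
    · dsimp only; rw [Nat.mod_eq_of_lt (by omega)]
  · intro k
    have hlt := Nat.mod_lt k (show 0 < w.length by omega)
    have hadj := w.adj_getVert_succ hlt
    have e : (k + 1) % w.length = (k % w.length + 1) % w.length := by simp
    dsimp only
    rw [e]
    by_cases e2 : k % w.length + 1 = w.length
    · rw [e2, Nat.mod_self]
      rw [e2] at hadj
      simpa using hadj
    · rw [Nat.mod_eq_of_lt (show k % w.length + 1 < w.length by omega)]
      exact hadj
  · intro k i j hi hj h
    have h1 : (k + i) % w.length = (k + j) % w.length := by
      refine hw.getVert_injOn' ?_ ?_ h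
      · have := Nat.mod_lt (k + i) (show 0 < w.length by omega)
        simp only [Set.mem_ofPred_eq]; omega
      · have := Nat.mod_lt (k + j) (show 0 < w.length by omega)
        simp only [Set.mem_ofPred_eq]; omega
    have h2 : i ≡ j [MOD w.length] := Nat.ModEq.add_left_cancel' k h1
    have h3 : i % w.length = j % w.length := h2
    rwa [Nat.mod_eq_of_lt hi, Nat.mod_eq_of_lt hj] at h3

lemma fwd_chordal {V : Type*} {G : SimpleGraph V} (hcg : IsConvexGeometry (SC G Set.univ)) :
    Chordal G := by
  rintro ⟨a, w, ⟨hw, hind⟩, h4⟩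
  obtain ⟨c, hc, hc', adj, inj⟩ := cyc_seq w hw
  have hsup : ∀ k, c k ∈ w.support := fun k => by rw [hc]; exact w.getVert_mem_support _
  have hper : ∀ k, c (k + w.length) = c k := fun k => by rw [hc, hc]; simp
  have hn2 : ∀ k, ¬ G.Adj (c k) (c (k + 2)) := by
    intro k hadj
    -- move indices to a common base
    have shift : ∀ j, j < w.length → ∃ d < w.length, c j = c (k + d) ∧ c (j + 1) = c (k + d + 1) := by
      intro j hj
      have hl : 0 < w.length := by omega
      have hk := Nat.mod_lt k hl
      refine ⟨(j + (w.length - k % w.length)) % w.length, Nat.mod_lt _ hl, ?_, ?_⟩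
      · rw [hc, hc (k + _)]
        congr 1
        have := Nat.div_add_mod k w.length
        have e : k + (j + (w.length - k % w.length)) = j + w.length * (k / w.length + 1) := by
          rw [Nat.mul_add]; omega
        rw [Nat.add_mod_mod, e, Nat.add_mul_mod_self_left]
      · rw [hc, hc (k + _ + 1)]
        congr 1
        have := Nat.div_add_mod k w.length
        have e : k + 1 + (j + (w.length - k % w.length)) =
            j + 1 + w.length * (k / w.length + 1) := by
          rw [Nat.mul_add]; omega
        rw [Nat.add_right_comm, Nat.add_mod_mod, e, Nat.add_mul_mod_self_left]
    have hcon := hind _ (hsup k) _ (hsup (k + 2)) hadj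
    rcases hcon with h | h
    · obtain ⟨j, hj, h1, h2⟩ := (consec_iff w _ _).1 h
      rw [← hc' j (by omega)] at h1
      rw [← hc' (j + 1) (by omega)] at h2
      obtain ⟨d, hd, e1, e2⟩ := shift j hj
      have hd0 : d = 0 := inj k d 0 hd (by omega) (by rw [← e1, h1, Nat.add_zero])
      subst hd0
      have := inj k 1 2 (by omega) (by omega) (by rw [← h2, e2])
      omega
    · obtain ⟨j, hj, h1, h2⟩ := (consec_iff w _ _).1 h
      rw [← hc' j (by omega)] at h1
      rw [← hc' (j + 1) (by omega)] at h2
      obtain ⟨d, hd, e1, e2⟩ := shift j hj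
      have hd0 : d = 2 := inj k d 2 hd (by omega) (by rw [← e1, h1])
      subst hd0
      have := inj k 0 3 (by omega) (by omega) (by rw [Nat.add_zero, ← h2, e2])
      omega
  refine not_cg {x | ∃ k, x = c k} ⟨c 0, 0, rfl⟩ ?_ hcg
  rintro x ⟨k, rfl⟩
  obtain ⟨m, hm⟩ : ∃ m, k + w.length = m + 1 := ⟨k + w.length - 1, by omega⟩
  have hk : c k = c (m + 1) := by rw [← hm, hper]
  rw [hk]
  exact ⟨_, 2, 1, eseq3 (c m) (c (m + 1)) (c (m + 2)) (adj m) (adj (m + 1))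
    (fun e => by have := inj m 0 2 (by omega) (by omega) e; omega) (hn2 m), by omega, rfl,
    ⟨m, rfl⟩, ⟨m + 2, rfl⟩, (adj m).ne, (adj (m + 1)).ne.symm⟩

lemma fwd_even {V : Type*} {G : SimpleGraph V} (hcg : IsConvexGeometry (SC G Set.univ))
    {a : V} (w : G.Walk a a) (hw : w.IsCycle) (hev : Even w.length) (h6 : 6 ≤ w.length) :
    HasOddChord G w := by
  by_contra hno
  rw [Nat.even_iff] at hev
  obtain ⟨c, hc, hc', adj, inj⟩ := cyc_seq w hw
  have hper : ∀ k, c (k + w.length) = c k := fun k => by rw [hc, hc]; simp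
  have hno' : ∀ i j, i < j → j ≤ w.length → G.Adj (w.getVert i) (w.getVert j) →
      (j - i) % 2 = 1 → 1 < j - i → j - i + 1 < w.length → False := by
    intro i j hij hj ha hodd h1 h2
    refine hno ⟨i, j, by simp; omega, by simp; omega, hij, ?_, ?_, ?_⟩
    · simpa [Walk.support_getElem_eq_getVert] using ha
    · rw [Nat.odd_iff]; omega
    · omega
  have h3 : ∀ k, ¬ G.Adj (c k) (c (k + 3)) := by
    intro k ha
    have hl : 0 < w.length := by omega
    have hk := Nat.mod_lt k hl
    rw [hc, hc (k + 3), ← Nat.mod_add_mod] at ha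
    by_cases h : k % w.length + 3 < w.length
    · rw [Nat.mod_eq_of_lt h] at ha
      exact hno' _ _ (by omega) (by omega) ha (by omega) (by omega) (by omega)
    · have e : (k % w.length + 3) % w.length = k % w.length + 3 - w.length := by
        rw [Nat.mod_eq_sub_mod (by omega), Nat.mod_eq_of_lt (by omega)]
      rw [e] at ha
      exact hno' _ _ (by omega) (by omega) ha.symm (by omega) (by omega) (by omega)
  refine not_cg {x | ∃ k, x = c k} ⟨c 0, 0, rfl⟩ ?_ hcg
  rintro x ⟨k, rfl⟩
  obtain ⟨m, hm⟩ : ∃ m, k + w.length = m + 2 := ⟨k + w.length - 2, by omega⟩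
  have hk : c k = c (m + 2) := by rw [← hm, hper]
  rw [hk]
  have ne : ∀ i j, i < 6 → j < 6 → i ≠ j → c (m + i) ≠ c (m + j) := fun i j hi hj hij e =>
    hij (inj m i j (by omega) (by omega) e)
  have a01 : G.Adj (c m) (c (m + 1)) := adj m
  have a12 : G.Adj (c (m + 1)) (c (m + 2)) := adj (m + 1)
  have a23 : G.Adj (c (m + 2)) (c (m + 3)) := adj (m + 2)
  have a34 : G.Adj (c (m + 3)) (c (m + 4)) := adj (m + 3)
  have n03 : ¬ G.Adj (c m) (c (m + 3)) := h3 m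
  have n14 : ¬ G.Adj (c (m + 1)) (c (m + 4)) := h3 (m + 1)
  have d02 : c m ≠ c (m + 2) := ne 0 2 (by omega) (by omega) (by omega)
  have d03 : c m ≠ c (m + 3) := ne 0 3 (by omega) (by omega) (by omega)
  have d04 : c m ≠ c (m + 4) := ne 0 4 (by omega) (by omega) (by omega)
  have d13 : c (m + 1) ≠ c (m + 3) := ne 1 3 (by omega) (by omega) (by omega)
  have d14 : c (m + 1) ≠ c (m + 4) := ne 1 4 (by omega) (by omega) (by omega)
  have d24 : c (m + 2) ≠ c (m + 4) := ne 2 4 (by omega) (by omega) (by omega)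
  by_cases a13 : G.Adj (c (m + 1)) (c (m + 3))
  swap
  · exact ⟨_, 2, 1, eseq3 _ _ _ a12 a23 d13 a13, by omega, rfl, ⟨_, rfl⟩, ⟨_, rfl⟩, a12.ne,
      a23.ne.symm⟩
  by_cases a24 : G.Adj (c (m + 2)) (c (m + 4))
  · exact ⟨_, 2, 1, eseq3 _ _ _ a12 a24 d14 n14, by omega, rfl, ⟨_, rfl⟩, ⟨_, rfl⟩, a12.ne,
      a24.ne.symm⟩
  by_cases a02 : G.Adj (c m) (c (m + 2))
  · exact ⟨_, 2, 1, eseq3 _ _ _ a02 a23 d03 n03, by omega, rfl, ⟨_, rfl⟩, ⟨_, rfl⟩, a02.ne,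
      a23.ne.symm⟩
  by_cases a04 : G.Adj (c m) (c (m + 4))
  · exact (c4_false hcg _ _ _ _ a01.symm a04 a34.symm a13.symm d14 d03 n14 n03).elim
  exact ⟨_, 4, 2, eseq5 _ _ _ _ _ a01 a12 a23 a34 d02 d03 d04 d13 d14 d24 a02 n03 a04 n14 a24,
    by omega, rfl, ⟨_, rfl⟩, ⟨_, rfl⟩, d02, d24.symm⟩

lemma final {V : Type*} [Finite V] (G : SimpleGraph V) :
    IsConvexGeometry (PConvex G (fun _ _ w => IsEvenChorded G w)) ↔ StronglyChordal G := by
  rw [cvx_eq]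
  exact ⟨fun h => ⟨fwd_chordal h, fun _ w hw he h6 => fwd_even h w hw he h6⟩, backward⟩

end SCG

/-- A finite connected simple graph `G` is a convex geometry with respect to
the strong convexity if and only if `G` is strongly chordal. -/
theorem strong_convex_geometry_iff_strongly_chordal
    {V : Type*} [Fintype V] (G : SimpleGraph V) (hconn : G.Connected) :
    IsConvexGeometry (PConvex G (fun _ _ w => IsEvenChorded G w)) ↔ StronglyChordal G := by
  exact SCG.final G
end

section
/- A finite connected simple graph G is a convex geometry with respect to the m³-convexity if and only if G is weakly polarizable, i.e., G contains no induced subgraph isomorphic to a hole, the house, the domino, or the A. -/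
open SimpleGraph

variable {V : Type*} {W : Type*}

section Bridge

/-- `p 0, …, p n` is an induced path. -/
def IndP (G : SimpleGraph V) (p : ℕ → V) (n : ℕ) : Prop :=
  ∀ i j, i < j → j ≤ n → p i ≠ p j ∧ (G.Adj (p i) (p j) ↔ j = i + 1)

/-- `p 0, …, p (n-1)` is an induced cycle. -/
def IndC (G : SimpleGraph V) (p : ℕ → V) (n : ℕ) : Prop :=
  ∀ i j, i < j → j < n → p i ≠ p j ∧ (G.Adj (p i) (p j) ↔ (j = i + 1 ∨ (i = 0 ∧ j + 1 = n)))

/-- `K` is m³-convex relative to the induced paths inside `U`. -/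
def FConv (G : SimpleGraph V) (U K : Set V) : Prop :=
  ∀ (p : ℕ → V) (n : ℕ), 3 ≤ n → IndP G p n → (∀ i, i ≤ n → p i ∈ U) → p 0 ∈ K → p n ∈ K →
    ∀ i, i ≤ n → p i ∈ K

theorem exists_walk_of_fun (G : SimpleGraph V) (n : ℕ) : ∀ (p : ℕ → V),
    (∀ i, i < n → G.Adj (p i) (p (i + 1))) →
    ∃ w : G.Walk (p 0) (p n), w.length = n ∧ ∀ i, i ≤ n → w.getVert i = p i := by
  induction n with
  | zero =>
    intro p _
    refine ⟨Walk.nil, rfl, ?_⟩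
    intro i hi
    obtain rfl : i = 0 := by omega
    rfl
  | succ n ih =>
    intro p hp
    obtain ⟨w, hl, hw⟩ := ih (fun i => p (i + 1)) (fun i hi => hp (i + 1) (by omega))
    refine ⟨Walk.cons (hp 0 (by omega)) w, by simp [hl], ?_⟩
    intro i hi
    cases i with
    | zero => simp
    | succ i => rw [Walk.getVert_cons_succ]; exact hw i (by omega)

theorem pair_infix_support {G : SimpleGraph V} {u v : V} (w : G.Walk u v) (x y : V) :
    [x, y] <:+: w.support ↔ ∃ k, k < w.length ∧ w.getVert k = x ∧ w.getVert (k + 1) = y := by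
  rw [List.infix_iff_getElem?]
  constructor
  · rintro ⟨k, hk, h⟩
    simp only [List.length_cons, List.length_nil, Walk.length_support] at hk
    have h0 := h 0 (by simp)
    have h1 := h 1 (by simp)
    have hk' : k < w.length := by omega
    refine ⟨k, hk', ?_, ?_⟩
    · rw [Nat.zero_add, ← Walk.getVert_eq_support_getElem? w (by omega)] at h0
      simpa using h0
    · rw [Nat.add_comm, ← Walk.getVert_eq_support_getElem? w (by omega)] at h1
      simpa using h1
  · rintro ⟨k, hk, rfl, rfl⟩
    refine ⟨k, by simp; omega, ?_⟩
    intro i hi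
    simp only [List.length_cons, List.length_nil] at hi
    rw [← Walk.getVert_eq_support_getElem? w (by omega)]
    interval_cases i
    · simp
    · simp [Nat.add_comm]

theorem indP_of_walk {G : SimpleGraph V} {u v : V} (w : G.Walk u v) (h : IsInducedPathW G w) :
    IndP G w.getVert w.length := by
  intro i j hij hj
  have inj := h.1.getVert_injOn
  refine ⟨fun he => ?_, fun ha => ?_, ?_⟩
  · have := inj (show i ∈ {i | i ≤ w.length} by simp; omega) (by simpa using hj) he
    omega
  · have := h.2 _ (w.getVert_mem_support i) _ (w.getVert_mem_support j) ha
    rcases this with h1 | h1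
    · obtain ⟨k, hk, e1, e2⟩ := (pair_infix_support _ _ _).1 h1
      have a1 := inj (show k ∈ {i | i ≤ w.length} by simp; omega) (show i ∈ {i | i ≤ w.length} by simp; omega) e1
      have a2 := inj (show k+1 ∈ {i | i ≤ w.length} by simp; omega) (show j ∈ {i | i ≤ w.length} by simp; omega) e2
      omega
    · obtain ⟨k, hk, e1, e2⟩ := (pair_infix_support _ _ _).1 h1
      have a1 := inj (show k ∈ {i | i ≤ w.length} by simp; omega) (show j ∈ {i | i ≤ w.length} by simp; omega) e1
      have a2 := inj (show k+1 ∈ {i | i ≤ w.length} by simp; omega) (show i ∈ {i | i ≤ w.length} by simp; omega) e2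
      omega
  · rintro rfl
    exact w.adj_getVert_succ (by omega)

theorem walk_of_indP {G : SimpleGraph V} {p : ℕ → V} {n : ℕ} (h : IndP G p n) :
    ∃ w : G.Walk (p 0) (p n), IsInducedPathW G w ∧ w.length = n ∧
      ∀ i, i ≤ n → w.getVert i = p i := by
  obtain ⟨w, hl, hw⟩ := exists_walk_of_fun G n p
    (fun i hi => (h i (i + 1) (by omega) (by omega)).2.2 rfl)
  refine ⟨w, ⟨?_, ?_⟩, hl, hw⟩
  · rw [← Walk.IsPath.getVert_injOn_iff]
    intro i hi j hj e
    simp only [Set.mem_ofPred_eq, hl] at hi hj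
    rw [hw i hi, hw j hj] at e
    rcases lt_trichotomy i j with hij | hij | hij
    · exact absurd e (h i j hij hj).1
    · exact hij
    · exact absurd e.symm (h j i hij hi).1
  · intro x hx y hy hadj
    rw [Walk.mem_support_iff_exists_getVert] at hx hy
    obtain ⟨i, rfl, hi⟩ := hx
    obtain ⟨j, rfl, hj⟩ := hy
    rw [hl] at hi hj
    rw [hw i hi, hw j hj] at hadj
    rcases lt_trichotomy i j with hij | hij | hij
    · have := (h i j hij hj).2.1 hadj
      left
      rw [pair_infix_support]
      exact ⟨i, by omega, rfl, by rw [this]⟩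
    · subst hij; exact absurd hadj (G.irrefl)
    · have := (h j i hij hi).2.1 hadj.symm
      right
      rw [pair_infix_support]
      exact ⟨j, by omega, rfl, by rw [this]⟩

theorem pconvex_iff {G : SimpleGraph V} {S : Set V} :
    PConvex G (fun _ _ w => IsInducedPathW G w ∧ 3 ≤ w.length) S ↔ FConv G Set.univ S := by
  constructor
  · intro h p n hn hp _ h0 h1 i hi
    obtain ⟨w, hw, hl, hg⟩ := walk_of_indP hp
    rw [← hg i hi]
    exact h h0 h1 w ⟨hw, by omega⟩ _ (w.getVert_mem_support i)
  · intro h u v hu hv w hw x hx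
    rw [Walk.mem_support_iff_exists_getVert] at hx
    obtain ⟨i, rfl, hi⟩ := hx
    exact h w.getVert w.length hw.2 (indP_of_walk w hw.1) (fun _ _ => trivial) (by simpa using hu)
      (by simpa using hv) i hi

theorem indC_of_walk {G : SimpleGraph V} {u : V} (w : G.Walk u u) (h : IsInducedCycleW G w) :
    IndC G w.getVert w.length := by
  have inj := h.1.getVert_injOn'
  have key : ∀ i j k, i < w.length → j < w.length → k < w.length → w.getVert k = w.getVert i →
      w.getVert (k+1) = w.getVert j → k = i ∧ (j = i + 1 ∨ (j = 0 ∧ i + 1 = w.length)) := by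
    intro i j k hi hj hk e1 e2
    have a1 := inj (show k ∈ {i | i ≤ w.length - 1} by simp; omega) (show i ∈ {i | i ≤ w.length - 1} by simp; omega) e1
    subst a1
    refine ⟨rfl, ?_⟩
    by_cases hk1 : k + 1 = w.length
    · right
      rw [hk1, Walk.getVert_length] at e2
      have e3 : w.getVert 0 = w.getVert j := by rw [← e2]; simp
      have := inj (show 0 ∈ {i | i ≤ w.length - 1} by simp) (show j ∈ {i | i ≤ w.length - 1} by simp; omega) e3
      omega
    · left
      have a2 := inj (show k+1 ∈ {i | i ≤ w.length - 1} by simp; omega) (show j ∈ {i | i ≤ w.length - 1} by simp; omega) e2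
      omega
  intro i j hij hj
  refine ⟨fun he => ?_, fun ha => ?_, ?_⟩
  · have := inj (show i ∈ {i | i ≤ w.length - 1} by simp; omega) (show j ∈ {i | i ≤ w.length - 1} by simp; omega) he
    omega
  · rcases h.2 _ (w.getVert_mem_support i) _ (w.getVert_mem_support j) ha with h1 | h1
    · obtain ⟨k, hk, e1, e2⟩ := (pair_infix_support _ _ _).1 h1
      have := key i j k (by omega) hj hk e1 e2
      omega
    · obtain ⟨k, hk, e1, e2⟩ := (pair_infix_support _ _ _).1 h1
      have := key j i k (by omega) (by omega) hk e1 e2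
      omega
  · rintro (rfl | ⟨rfl, hj'⟩)
    · exact w.adj_getVert_succ (by omega)
    · have := w.adj_getVert_succ (i := j) (by omega)
      rw [hj', Walk.getVert_length] at this
      simpa using this.symm

theorem walk_of_indC {G : SimpleGraph V} {p : ℕ → V} {n : ℕ} (hn : 3 ≤ n) (h : IndC G p n) :
    ∃ (u : V) (w : G.Walk u u), IsInducedCycleW G w ∧ w.length = n := by
  obtain ⟨m, rfl⟩ : ∃ m, n = m + 1 := ⟨n - 1, by omega⟩
  obtain ⟨w, hl, hw⟩ := exists_walk_of_fun G m p
    (fun i hi => (h i (i + 1) (by omega) (by omega)).2.2 (Or.inl rfl))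
  have hinj : ∀ i j, i ≤ m → j ≤ m → p i = p j → i = j := by
    intro i j hi hj e
    rcases lt_trichotomy i j with hij | hij | hij
    · exact absurd e (h i j hij (by omega)).1
    · exact hij
    · exact absurd e.symm (h j i hij (by omega)).1
  have hpath : w.IsPath := by
    rw [← Walk.IsPath.getVert_injOn_iff]
    intro i hi j hj e
    simp only [Set.mem_ofPred_eq, hl] at hi hj
    rw [hw i hi, hw j hj] at e
    exact hinj i j hi hj e
  have hadj : G.Adj (p m) (p 0) := ((h 0 m (by omega) (by omega)).2.2 (Or.inr ⟨rfl, rfl⟩)).symm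
  have hv : ∀ i, i ≤ m → (Walk.cons hadj w).getVert (i + 1) = p i := by
    intro i hi
    rw [Walk.getVert_cons_succ]; exact hw i hi
  refine ⟨p m, Walk.cons hadj w, ⟨?_, ?_⟩, by simp [hl]⟩
  · rw [Walk.cons_isCycle_iff]
    refine ⟨hpath, fun hmem => ?_⟩
    rw [Sym2.eq_swap] at hmem
    have := hpath.length_eq_one_of_mem_edges hmem
    omega
  · have hs : ∀ x ∈ (Walk.cons hadj w).support, ∃ i, i ≤ m ∧ x = p i := by
      intro x hx
      rw [Walk.support_cons, List.mem_cons] at hx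
      rcases hx with rfl | hx
      · exact ⟨m, le_rfl, rfl⟩
      · rw [Walk.mem_support_iff_exists_getVert] at hx
        obtain ⟨i, rfl, hi⟩ := hx
        exact ⟨i, by omega, hw i (by omega)⟩
    have main : ∀ i j, i < j → j ≤ m → G.Adj (p i) (p j) →
        consecIn (Walk.cons hadj w).support (p i) (p j) := by
      intro i j hij hj ha
      rcases (h i j hij (by omega)).2.1 ha with rfl | ⟨rfl, hjm⟩
      · left
        rw [pair_infix_support]
        exact ⟨i + 1, by simp; omega, hv i (by omega), hv (i + 1) hj⟩
      · right
        obtain rfl : j = m := by omega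
        rw [pair_infix_support]
        exact ⟨0, by simp, by simp, hv 0 (by omega)⟩
    intro x hx y hy hxy
    obtain ⟨i, hi, rfl⟩ := hs x hx
    obtain ⟨j, hj, rfl⟩ := hs y hy
    rcases lt_trichotomy i j with hij | hij | hij
    · exact main i j hij hj hxy
    · subst hij; exact absurd hxy (G.irrefl)
    · exact (main j i hij hi hxy.symm).symm

end Bridge

section Patterns

/-- Elementary form of the house pattern. -/
def HouseP (G : SimpleGraph V) (a b c d e : V) : Prop :=
  G.Adj a b ∧ G.Adj b c ∧ G.Adj c d ∧ G.Adj a d ∧ G.Adj a e ∧ G.Adj b e ∧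
  ¬ G.Adj a c ∧ ¬ G.Adj b d ∧ ¬ G.Adj c e ∧ ¬ G.Adj d e

/-- Common part of the domino and the A. -/
def LadderP (G : SimpleGraph V) (a b c d e f : V) : Prop :=
  G.Adj a b ∧ G.Adj b c ∧ G.Adj c d ∧ G.Adj a d ∧ G.Adj c e ∧ G.Adj d f ∧
  ¬ G.Adj a c ∧ ¬ G.Adj b d ∧ ¬ G.Adj a e ∧ ¬ G.Adj a f ∧ ¬ G.Adj b e ∧ ¬ G.Adj b f ∧
  ¬ G.Adj c f ∧ ¬ G.Adj d e

/-- Elementary form of the domino pattern. -/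
def DominoP (G : SimpleGraph V) (a b c d e f : V) : Prop :=
  LadderP G a b c d e f ∧ G.Adj e f

/-- Elementary form of the A pattern. -/
def AP (G : SimpleGraph V) (a b c d e f : V) : Prop :=
  LadderP G a b c d e f ∧ ¬ G.Adj e f

theorem house_iff (G : SimpleGraph V) :
    HasInducedSubgraphIso G houseGraph ↔ ∃ a b c d e, HouseP G a b c d e := by
  constructor
  · rintro ⟨f, hf⟩
    refine ⟨f 0, f 1, f 2, f 3, f 4, ?_⟩
    simp [HouseP, hf, houseGraph]
  · rintro ⟨a, b, c, d, e, h1, h2, h3, h4, h5, h6, n1, n2, n3, n4⟩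
    have inj : Function.Injective ![a, b, c, d, e] := by
      have s := G.symm
      have l := G.loopless
      intro i j hij
      fin_cases i <;> fin_cases j <;> simp at hij ⊢ <;> subst hij <;>
        simp_all [SimpleGraph.adj_comm]
    refine ⟨⟨_, inj⟩, ?_⟩
    intro i j
    fin_cases i <;> fin_cases j <;> simp_all [houseGraph, SimpleGraph.adj_comm]

theorem domino_iff (G : SimpleGraph V) :
    HasInducedSubgraphIso G dominoGraph ↔ ∃ a b c d e f, DominoP G a b c d e f := by
  constructor
  · rintro ⟨f, hf⟩
    refine ⟨f 0, f 1, f 2, f 3, f 4, f 5, ?_⟩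
    simp [DominoP, LadderP, hf, dominoGraph]
  · rintro ⟨a, b, c, d, e, f, ⟨h1, h2, h3, h4, h5, h6, n1, n2, n3, n4, n5, n6, n7, n8⟩, h7⟩
    have inj : Function.Injective ![a, b, c, d, e, f] := by
      intro i j hij
      fin_cases i <;> fin_cases j <;> simp at hij ⊢ <;> subst hij <;>
        simp_all [SimpleGraph.adj_comm]
    refine ⟨⟨_, inj⟩, ?_⟩
    intro i j
    fin_cases i <;> fin_cases j <;> simp_all [dominoGraph, SimpleGraph.adj_comm]

theorem a_iff (G : SimpleGraph V) :
    HasInducedSubgraphIso G aGraph ↔ ∃ a b c d e f, AP G a b c d e f := by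
  constructor
  · rintro ⟨f, hf⟩
    refine ⟨f 0, f 1, f 2, f 3, f 4, f 5, ?_⟩
    simp [AP, LadderP, hf, aGraph]
  · rintro ⟨a, b, c, d, e, f, ⟨h1, h2, h3, h4, h5, h6, n1, n2, n3, n4, n5, n6, n7, n8⟩, h7⟩
    have inj : Function.Injective ![a, b, c, d, e, f] := by
      intro i j hij
      fin_cases i <;> fin_cases j <;> simp at hij ⊢ <;> subst hij <;>
        simp_all [SimpleGraph.adj_comm]
    refine ⟨⟨_, inj⟩, ?_⟩
    intro i j
    fin_cases i <;> fin_cases j <;> simp_all [aGraph, SimpleGraph.adj_comm]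

/-- Induced path on four vertices `a x b c`. -/
def P4 (G : SimpleGraph V) (a x b c : V) : Prop :=
  G.Adj a x ∧ G.Adj x b ∧ G.Adj b c ∧ ¬ G.Adj a b ∧ ¬ G.Adj a c ∧ ¬ G.Adj x c

theorem P4.indP {G : SimpleGraph V} {a x b c : V} (h : P4 G a x b c) :
    ∃ p : ℕ → V, IndP G p 3 ∧ p 0 = a ∧ p 1 = x ∧ p 2 = b ∧ p 3 = c := by
  obtain ⟨h1, h2, h3, n1, n2, n3⟩ := h
  refine ⟨fun i => if i = 0 then a else if i = 1 then x else if i = 2 then b else c, ?_,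
    rfl, rfl, rfl, rfl⟩
  have e1 : a ≠ b := by rintro rfl; exact n2 h3
  have e2 : a ≠ c := by rintro rfl; exact n1 h3.symm
  have e3 : x ≠ c := by rintro rfl; exact n2 h1
  intro i j hij hj
  interval_cases j <;> interval_cases i <;>
    simp [h1, h2, h3, n1, n2, n3, h1.ne, h2.ne, h3.ne, e1, e2, e3]

theorem IndP.p4 {G : SimpleGraph V} {p : ℕ → V} {n : ℕ} (h : IndP G p n) (i : ℕ)
    (hi : i + 3 ≤ n) : P4 G (p i) (p (i+1)) (p (i+2)) (p (i+3)) := by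
  refine ⟨?_, ?_, ?_, ?_, ?_, ?_⟩
  · rw [(h _ _ (by omega) (by omega)).2]
  · rw [(h _ _ (by omega) (by omega)).2]
  · rw [(h _ _ (by omega) (by omega)).2]
  · rw [(h _ _ (by omega) (by omega)).2]; omega
  · rw [(h _ _ (by omega) (by omega)).2]; omega
  · rw [(h _ _ (by omega) (by omega)).2]; omega

theorem P4.symm {G : SimpleGraph V} {a x b c : V} (h : P4 G a x b c) : P4 G c b x a := by
  obtain ⟨h1, h2, h3, n1, n2, n3⟩ := h
  exact ⟨h3.symm, h2.symm, h1.symm, fun h => n3 h.symm, fun h => n2 h.symm, fun h => n1 h.symm⟩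

/-- `x` is semisimplicial in `U`. -/
def SS (G : SimpleGraph V) (U : Set V) (x : V) : Prop :=
  ∀ a ∈ U, ∀ b ∈ U, ∀ c ∈ U, ¬ P4 G a x b c

theorem FConv.p4 {G : SimpleGraph V} {U K : Set V} (h : FConv G U K) {a x b c : V}
    (hp : P4 G a x b c) (ha : a ∈ U) (hx : x ∈ U) (hb : b ∈ U) (hc : c ∈ U) (hak : a ∈ K)
    (hck : c ∈ K) : x ∈ K ∧ b ∈ K := by
  obtain ⟨p, hq, rfl, rfl, rfl, rfl⟩ := hp.indP
  have := h p 3 le_rfl hq (by intro i hi; interval_cases i <;> assumption) hak hck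
  exact ⟨this 1 (by omega), this 2 (by omega)⟩

/-- An interior vertex of an induced path of length at least three is in the middle of a `P4`. -/
theorem SS.not_interior {G : SimpleGraph V} {U : Set V} {p : ℕ → V} {n i : ℕ} (hn : 3 ≤ n)
    (hp : IndP G p n) (hU : ∀ i, i ≤ n → p i ∈ U) (hi : 0 < i) (hin : i < n) :
    ¬ SS G U (p i) := by
  intro h
  by_cases h1 : i + 2 ≤ n
  · have := hp.p4 (i - 1) (by omega)
    rw [show i - 1 + 1 = i by omega, show i - 1 + 2 = i + 1 by omega,
      show i - 1 + 3 = i + 2 by omega] at this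
    exact h _ (hU _ (by omega)) _ (hU _ (by omega)) _ (hU _ (by omega)) this
  · have := (hp.p4 (i - 2) (by omega)).symm
    rw [show i - 2 + 1 = i - 1 by omega, show i - 2 + 2 = i by omega,
      show i - 2 + 3 = i + 1 by omega] at this
    exact h _ (hU _ (by omega)) _ (hU _ (by omega)) _ (hU _ (by omega)) this

end Patterns

section Joins

/-- `z` distinguishes two vertices of `A`. -/
def Mixed (G : SimpleGraph V) (z : V) (A : Set V) : Prop :=
  (∃ a ∈ A, G.Adj z a) ∧ ∃ a ∈ A, ¬ G.Adj z a

/-- The complement of `G[A]` is connected (cut form). -/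
def CoC (G : SimpleGraph V) (A : Set V) : Prop :=
  ∀ T ⊆ A, T.Nonempty → (A \ T).Nonempty → ∃ x ∈ T, ∃ y ∈ A \ T, ¬ G.Adj x y

/-- Two completely joined co-connected sets. -/
structure Join (G : SimpleGraph V) (U A B : Set V) : Prop where
  subA : A ⊆ U
  subB : B ⊆ U
  coA : CoC G A
  coB : CoC G B
  ntA : A.Nontrivial
  ntB : B.Nontrivial
  adj : ∀ a ∈ A, ∀ b ∈ B, G.Adj a b

theorem Join.symm {G : SimpleGraph V} {U A B : Set V} (h : Join G U A B) : Join G U B A :=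
  ⟨h.subB, h.subA, h.coB, h.coA, h.ntB, h.ntA, fun b hb a ha => (h.adj a ha b hb).symm⟩

theorem CoC.mixed {G : SimpleGraph V} {A : Set V} (h : CoC G A) {z : V} (hz : Mixed G z A) :
    ∃ a ∈ A, ∃ a' ∈ A, G.Adj z a ∧ ¬ G.Adj z a' ∧ ¬ G.Adj a a' := by
  obtain ⟨⟨a, ha, hza⟩, ⟨a', ha', hza'⟩⟩ := hz
  obtain ⟨x, hx, y, hy, hxy⟩ := h {x | x ∈ A ∧ G.Adj z x} (fun x hx => hx.1) ⟨a, ha, hza⟩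
    ⟨a', ha', fun h => hza' h.2⟩
  exact ⟨x, hx.1, y, hy.1, hx.2, fun h => hy.2 ⟨hy.1, h⟩, hxy⟩

theorem CoC.insert {G : SimpleGraph V} {A : Set V} (h : CoC G A) {z a : V} (ha : a ∈ A)
    (hz : ¬ G.Adj z a) : CoC G (insert z A) := by
  intro T hT hne hne'
  by_cases hzA : z ∈ A
  · rw [Set.insert_eq_of_mem hzA] at hT hne' ⊢
    exact h T hT hne hne'
  by_cases h1 : (T ∩ A).Nonempty
  · by_cases h2 : (A \ T).Nonempty
    · obtain ⟨x, hx, y, hy, hxy⟩ := h (T ∩ A) Set.inter_subset_right h1 (by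
        obtain ⟨y, hy⟩ := h2
        exact ⟨y, hy.1, fun h => hy.2 h.1⟩)
      exact ⟨x, hx.1, y, ⟨Or.inr hy.1, fun h => hy.2 ⟨h, hy.1⟩⟩, hxy⟩
    · have hAT : A ⊆ T := by
        intro y hy
        by_contra hyT
        exact h2 ⟨y, hy, hyT⟩
      have hzT : z ∉ T := by
        intro hzT
        obtain ⟨y, hy, hyT⟩ := hne'
        rcases hy with rfl | hy
        · exact hyT hzT
        · exact hyT (hAT hy)
      exact ⟨a, hAT ha, z, ⟨Or.inl rfl, hzT⟩, fun h => hz h.symm⟩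
  · obtain ⟨t, ht⟩ := hne
    have htz : t = z := by
      rcases hT ht with h | h
      · exact h
      · exact absurd ⟨t, ht, h⟩ h1
    subst htz
    exact ⟨t, ht, a, ⟨Or.inr ha, fun h => h1 ⟨a, h, ha⟩⟩, hz⟩

theorem CoC.singleton (G : SimpleGraph V) (z : V) : CoC G {z} := by
  rintro T hT ⟨t, ht⟩ ⟨s, hs, hsT⟩
  have h1 : t = z := hT ht
  have h2 : s = z := hs
  subst h1; subst h2
  exact absurd ht hsT

/-- Maximality of a join. -/
def MaxJoin (G : SimpleGraph V) (U A B : Set V) : Prop :=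
  Join G U A B ∧ ∀ A' B', Join G U A' B' → A ⊆ A' → B ⊆ B' → A' ⊆ A ∧ B' ⊆ B

theorem MaxJoin.symm {G : SimpleGraph V} {U A B : Set V} (h : MaxJoin G U A B) :
    MaxJoin G U B A :=
  ⟨h.1.symm, fun A' B' hj h1 h2 => (h.2 B' A' hj.symm h2 h1).symm⟩

theorem Join.exists_max [Finite V] {G : SimpleGraph V} {U A B : Set V} (h : Join G U A B) :
    ∃ A' B', A ⊆ A' ∧ B ⊆ B' ∧ MaxJoin G U A' B' := by
  obtain ⟨⟨A', B'⟩, hle, hmax⟩ := Finite.exists_le_maximal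
    (p := fun q : Set V × Set V => Join G U q.1 q.2) (a := (A, B)) h
  refine ⟨A', B', hle.1, hle.2, hmax.1, fun A'' B'' hj h1 h2 => ?_⟩
  have := hmax.2 (y := (A'', B'')) hj ⟨h1, h2⟩
  exact ⟨this.1, this.2⟩

theorem MaxJoin.mixed_anti {G : SimpleGraph V} {U A B : Set V} (h : MaxJoin G U A B)
    (hH : ∀ a b c d e, ¬ HouseP G a b c d e) {z : V} (hzU : z ∈ U) (hzA : z ∉ A)
    (hz : Mixed G z A) : ∀ b ∈ B, ¬ G.Adj z b := by
  intro b hb hzb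
  obtain ⟨a, ha, a', ha', h1, h2, h3⟩ := h.1.coA.mixed hz
  by_cases hB : ∃ b ∈ B, ¬ G.Adj z b
  · obtain ⟨b, hb, b', hb', g1, g2, g3⟩ := h.1.coB.mixed ⟨⟨b, hb, hzb⟩, hB⟩
    exact hH a b a' b' z ⟨h.1.adj _ ha _ hb, (h.1.adj _ ha' _ hb).symm, h.1.adj _ ha' _ hb',
      h.1.adj _ ha _ hb', h1.symm, g1.symm, h3, g3, fun h => h2 h.symm, fun h => g2 h.symm⟩
  · push Not at hB
    have hj : Join G U (insert z A) B := by
      refine ⟨Set.insert_subset hzU h.1.subA, h.1.subB, h.1.coA.insert ha' h2, h.1.coB,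
        h.1.ntA.mono (Set.subset_insert _ _), h.1.ntB, ?_⟩
      rintro x (rfl | hx) y hy
      · exact hB y hy
      · exact h.1.adj x hx y hy
    exact hzA ((h.2 _ _ hj (Set.subset_insert _ _) le_rfl).1 (Set.mem_insert _ _))

theorem MaxJoin.not_complete_anti {G : SimpleGraph V} {U A B : Set V} (h : MaxJoin G U A B)
    {z : V} (hzU : z ∈ U) (hzB : z ∉ B) (hA : ∀ a ∈ A, G.Adj z a)
    (hB : ∀ b ∈ B, ¬ G.Adj z b) : False := by
  obtain ⟨b, hb⟩ := h.1.ntB.nonempty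
  have hj : Join G U A (insert z B) := by
    refine ⟨h.1.subA, Set.insert_subset hzU h.1.subB, h.1.coA, h.1.coB.insert hb (hB b hb),
      h.1.ntA, h.1.ntB.mono (Set.subset_insert _ _), ?_⟩
    rintro x hx y (rfl | hy)
    · exact (hA x hx).symm
    · exact h.1.adj x hx y hy
  exact hzB ((h.2 _ _ hj le_rfl (Set.subset_insert _ _)).2 (Set.mem_insert _ _))

/-- Mixed vertices on both sides of a maximal join give an induced A. -/
theorem MaxJoin.exists_AP {G : SimpleGraph V} {U A B : Set V} (h : MaxJoin G U A B)
    (hH : ∀ a b c d e, ¬ HouseP G a b c d e) (hD : ∀ a b c d e f, ¬ DominoP G a b c d e f)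
    {z z' : V} (hzU : z ∈ U) (hzA : z ∉ A) (hz : Mixed G z A)
    (hzU' : z' ∈ U) (hzB' : z' ∉ B) (hz' : Mixed G z' B) :
    ∃ a' ∈ A, ∃ b' ∈ B, ∃ a ∈ A, ∃ b ∈ B, AP G a' b' a b z z' := by
  have k1 := h.mixed_anti hH hzU hzA hz
  have k2 := h.symm.mixed_anti hH hzU' hzB' hz'
  obtain ⟨a, ha, a', ha', h1, h2, h3⟩ := h.1.coA.mixed hz
  obtain ⟨b, hb, b', hb', g1, g2, g3⟩ := h.1.coB.mixed hz'
  have hL : LadderP G a' b' a b z z' :=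
    ⟨h.1.adj _ ha' _ hb', (h.1.adj _ ha _ hb').symm, h.1.adj _ ha _ hb, h.1.adj _ ha' _ hb,
      h1.symm, g1.symm, fun h => h3 h.symm, fun h => g3 h.symm, fun h => h2 h.symm,
      fun h => k2 _ ha' h.symm, fun h => k1 _ hb' h.symm, fun h => g2 h.symm,
      fun h => k2 _ ha h.symm, fun h => k1 _ hb h.symm⟩
  exact ⟨a', ha', b', hb', a, ha, b, hb, hL, fun h => hD _ _ _ _ _ _ ⟨hL, h⟩⟩

/-- `M` is a module of `G[U]`. -/
def IsMod (G : SimpleGraph V) (U M : Set V) : Prop :=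
  M ⊆ U ∧ ∀ z ∈ U, z ∉ M → ¬ Mixed G z M

theorem join_of_C4 {G : SimpleGraph V} {U : Set V} {a b c d : V} (ha : a ∈ U) (hb : b ∈ U)
    (hc : c ∈ U) (hd : d ∈ U) (h1 : G.Adj a b) (h2 : G.Adj b c) (h3 : G.Adj c d)
    (h4 : G.Adj a d) (h5 : ¬ G.Adj a c) (h6 : ¬ G.Adj b d) (h7 : a ≠ c) (h8 : b ≠ d) :
    Join G U {a, c} {b, d} := by
  refine ⟨?_, ?_, (CoC.singleton G c).insert rfl h5, (CoC.singleton G d).insert rfl h6,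
    Set.nontrivial_pair h7, Set.nontrivial_pair h8, ?_⟩
  · rintro x (rfl | rfl) <;> assumption
  · rintro x (rfl | rfl) <;> assumption
  · rintro x (rfl | rfl) y (rfl | rfl)
    · exact h1
    · exact h4
    · exact h2.symm
    · exact h3

end Joins

section Chordal

/-- Reachability inside `T`. -/
def RT (G : SimpleGraph V) (T : Set V) : V → V → Prop :=
  Relation.ReflTransGen (fun x y => G.Adj x y ∧ y ∈ T)

theorem RT.mem {G : SimpleGraph V} {T : Set V} {a b : V} (h : RT G T a b) (ha : a ∈ T) :
    b ∈ T := by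
  cases h with
  | refl => exact ha
  | tail _ h => exact h.2

theorem RT.symm {G : SimpleGraph V} {T : Set V} {a b : V} (h : RT G T a b) (ha : a ∈ T) :
    RT G T b a := by
  induction h with
  | refl => exact Relation.ReflTransGen.refl
  | tail h1 h2 ih =>
    exact Relation.ReflTransGen.head ⟨h2.1.symm, RT.mem h1 ha⟩ ih

theorem RT.mono {G : SimpleGraph V} {T T' : Set V} (hT : T ⊆ T') {a b : V} (h : RT G T a b) :
    RT G T' a b :=
  Relation.ReflTransGen.mono (fun _ _ h => ⟨h.1, hT h.2⟩) _ _ h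

/-- Within its own component, reachability is preserved. -/
theorem RT.comp {G : SimpleGraph V} {T : Set V} {a b : V} (h : RT G T a b) :
    RT G {z | RT G T a z} a b := by
  induction h with
  | refl => exact Relation.ReflTransGen.refl
  | tail h1 h2 ih => exact Relation.ReflTransGen.tail ih ⟨h2.1, Relation.ReflTransGen.tail h1 h2⟩

theorem RT.exists_fun {G : SimpleGraph V} {T : Set V} {a b : V} (h : RT G T a b) (ha : a ∈ T) :
    ∃ (n : ℕ) (p : ℕ → V), p 0 = a ∧ p n = b ∧ (∀ i, i ≤ n → p i ∈ T) ∧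
      ∀ i, i < n → G.Adj (p i) (p (i + 1)) := by
  induction h with
  | refl => exact ⟨0, fun _ => a, rfl, rfl, fun _ _ => ha, fun i hi => absurd hi (by omega)⟩
  | @tail b c h1 h2 ih =>
    obtain ⟨n, p, h0, hn, hT, hA⟩ := ih
    refine ⟨n + 1, fun i => if i ≤ n then p i else c, by simp [h0], by simp, ?_, ?_⟩
    · intro i hi
      by_cases h : i ≤ n
      · simp only [h, if_true]; exact hT i h
      · simp only [h, if_false]; exact h2.2
    · intro i hi
      by_cases h : i + 1 ≤ n
      · simp only [h, if_true, show i ≤ n by omega]; exact hA i (by omega)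
      · obtain rfl : i = n := by omega
        simp only [h, if_false, le_refl, if_true, hn]; exact h2.1

theorem RT.exists_indP {G : SimpleGraph V} {T : Set V} {a b : V} (h : RT G T a b) (ha : a ∈ T) :
    ∃ (n : ℕ) (p : ℕ → V), p 0 = a ∧ p n = b ∧ (∀ i, i ≤ n → p i ∈ T) ∧ IndP G p n := by
  classical
  have hex := h.exists_fun ha
  obtain ⟨p, h0, hn, hT, hA⟩ := Nat.find_spec hex
  have hmin := fun m hm => Nat.find_min hex (m := m) hm
  generalize Nat.find hex = n at *
  refine ⟨n, p, h0, hn, hT, ?_⟩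
  -- a shortcut
  have short : ∀ i j, i < j → j ≤ n → i + 1 < j → G.Adj (p i) (p j) → False := by
    intro i j hij hj hij' hadj
    refine hmin (n - (j - i - 1)) (by omega)
      ⟨fun k => if k ≤ i then p k else p (k + (j - i - 1)), by simp [h0], ?_, ?_, ?_⟩
    · have h1 : ¬ (n - (j - i - 1) ≤ i) := by omega
      simp only [h1, if_false]
      rw [show n - (j - i - 1) + (j - i - 1) = n by omega, hn]
    · intro k hk
      by_cases h : k ≤ i
      · simp only [h, if_true]; exact hT _ (by omega)
      · simp only [h, if_false]; exact hT _ (by omega)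
    · intro k hk
      by_cases h : k + 1 ≤ i
      · simp only [h, if_true, show k ≤ i by omega]; exact hA _ (by omega)
      · by_cases h' : k ≤ i
        · obtain rfl : k = i := by omega
          simp only [h, if_false, le_refl, if_true]
          rw [show k + 1 + (j - k - 1) = j by omega]; exact hadj
        · simp only [h, h', if_false]
          have := hA (k + (j - i - 1)) (by omega)
          rwa [show k + (j - i - 1) + 1 = k + 1 + (j - i - 1) by omega] at this
  intro i j hij hj
  refine ⟨fun he => ?_, fun hadj => ?_, ?_⟩
  · by_cases hjn : j = n
    · subst hjn
      exact hmin i hij ⟨p, h0, by rw [he, hn], fun k hk => hT k (by omega),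
        fun k hk => hA k (by omega)⟩
    · have := hA j (by omega)
      rw [← he] at this
      exact short i (j + 1) (by omega) (by omega) (by omega) this
  · by_contra hne
    exact short i j hij hj (by omega) hadj
  · rintro rfl
    exact hA i (by omega)

/-- `U` contains no induced four-cycle. -/
def NoC4 (G : SimpleGraph V) (U : Set V) : Prop :=
  ∀ a ∈ U, ∀ b ∈ U, ∀ c ∈ U, ∀ d ∈ U, G.Adj a b → G.Adj b c → G.Adj c d → G.Adj a d →
    ¬ G.Adj a c → ¬ G.Adj b d → a ≠ c → b ≠ d → False

theorem close_cycle {G : SimpleGraph V} {U : Set V} (h4 : NoC4 G U)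
    (hole : ∀ p n, 5 ≤ n → ¬ IndC G p n) {f : ℕ → V} {n : ℕ} (hf : IndP G f n) (hn : 2 ≤ n)
    (hfU : ∀ i, i ≤ n → f i ∈ U) {y : V} (hy : y ∈ U) (hyf : ∀ i, i ≤ n → y ≠ f i)
    (h0 : G.Adj y (f 0)) (h1 : G.Adj y (f n)) (hno : ∀ i, 0 < i → i < n → ¬ G.Adj y (f i)) :
    False := by
  by_cases hn2 : n = 2
  · subst hn2
    refine h4 (f 0) (hfU 0 (by omega)) (f 1) (hfU 1 (by omega)) (f 2) (hfU 2 (by omega)) y hy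
      ?_ ?_ h1.symm h0.symm ?_ ?_ ?_ ?_
    · exact (hf 0 1 (by omega) (by omega)).2.2 rfl
    · exact (hf 1 2 (by omega) (by omega)).2.2 rfl
    · rw [(hf 0 2 (by omega) (by omega)).2]; omega
    · exact fun h => hno 1 (by omega) (by omega) h.symm
    · exact (hf 0 2 (by omega) (by omega)).1
    · exact (hyf 1 (by omega)).symm
  · refine hole (fun k => if k ≤ n then f k else y) (n + 2) (by omega) ?_
    intro i j hij hj
    by_cases hjn : j ≤ n
    · simp only [hjn, show i ≤ n by omega, if_true]
      refine ⟨(hf i j hij hjn).1, ?_⟩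
      rw [(hf i j hij hjn).2]
      omega
    · simp only [hjn, show i ≤ n by omega, if_true, if_false]
      refine ⟨(hyf i (by omega)).symm, fun h => ?_, fun h => ?_⟩
      · by_contra hcon
        exact hno i (by omega) (by omega) h.symm
      · rcases h with h | h
        · obtain rfl : i = n := by omega
          exact h1.symm
        · obtain ⟨rfl, -⟩ := h
          exact h0.symm

theorem concat_indP {G : SimpleGraph V} {f g : ℕ → V} {n m : ℕ} (hf : IndP G f n)
    (hg : IndP G g m) (h0 : G.Adj (f 0) (g 0))
    (hno : ∀ i j, i ≤ n → j ≤ m → 0 < i + j → f i ≠ g j ∧ ¬ G.Adj (f i) (g j)) :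
    IndP G (fun k => if k ≤ n then f (n - k) else g (k - n - 1)) (n + m + 1) := by
  intro i j hij hj
  by_cases hjn : j ≤ n
  · simp only [hjn, show i ≤ n by omega, if_true]
    have := hf (n - j) (n - i) (by omega) (by omega)
    refine ⟨this.1.symm, ?_⟩
    rw [G.adj_comm, this.2]
    omega
  · by_cases hin : i ≤ n
    · simp only [hjn, hin, if_true, if_false]
      by_cases h : n - i = 0 ∧ j - n - 1 = 0
      · rw [h.1, h.2]
        refine ⟨h0.ne, fun _ => by omega, fun _ => h0⟩
      · have := hno (n - i) (j - n - 1) (by omega) (by omega) (by omega)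
        refine ⟨this.1, fun h => absurd h this.2, fun h' => ?_⟩
        omega
    · simp only [hjn, hin, if_false]
      have := hg (i - n - 1) (j - n - 1) (by omega) (by omega)
      refine ⟨this.1, ?_⟩
      rw [this.2]
      omega

theorem IndP.mono {G : SimpleGraph V} {f : ℕ → V} {n m : ℕ} (hf : IndP G f n) (h : m ≤ n) :
    IndP G f m := fun i j hij hj => hf i j hij (by omega)

/-- `s` is simplicial in `U`. -/
def Simpl (G : SimpleGraph V) (U : Set V) (s : V) : Prop :=
  ∀ y ∈ U, ∀ z ∈ U, G.Adj s y → G.Adj s z → y ≠ z → G.Adj y z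

theorem Simpl.ss {G : SimpleGraph V} {U : Set V} {s : V} (h : Simpl G U s) : SS G U s := by
  intro a ha b hb c hc hp
  obtain ⟨h1, h2, h3, n1, n2, n3⟩ := hp
  refine n1 (h a ha b hb h1.symm h2 ?_)
  rintro rfl
  exact n2 h3

theorem exists_simplicial [Finite V] {G : SimpleGraph V}
    (hole : ∀ p n, 5 ≤ n → ¬ IndC G p n) (N : ℕ) : ∀ (U : Set V), U.ncard = N → NoC4 G U →
    ∀ x ∈ U, ∀ C : Set V, C.Nonempty → (∀ y ∈ C, y ∈ U ∧ y ≠ x ∧ ¬ G.Adj x y) →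
      (∀ y ∈ C, ∀ z ∈ U, z ≠ x → ¬ G.Adj x z → G.Adj y z → z ∈ C) →
      ∃ s ∈ C, Simpl G U s := by
  induction N using Nat.strong_induction_on with
  | _ N ih =>
  intro U hU h4 x hx C0 hC0 hC0U hC0cl
  obtain ⟨c, hc⟩ := hC0
  -- the component of `c`
  have hT : c ∈ {z | z ∈ U ∧ z ≠ x ∧ ¬ G.Adj x z} := hC0U c hc
  obtain ⟨C, hCdef⟩ : ∃ C : Set V, C = {z | RT G {z | z ∈ U ∧ z ≠ x ∧ ¬ G.Adj x z} c z} :=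
    ⟨_, rfl⟩
  have hcC : c ∈ C := by rw [hCdef]; exact Relation.ReflTransGen.refl
  have hCU : ∀ y ∈ C, y ∈ U ∧ y ≠ x ∧ ¬ G.Adj x y := by
    intro y hy
    rw [hCdef] at hy
    have : y ∈ {z | z ∈ U ∧ z ≠ x ∧ ¬ G.Adj x z} := RT.mem hy hT
    exact this
  have hCcl : ∀ y ∈ C, ∀ z ∈ U, z ≠ x → ¬ G.Adj x z → G.Adj y z → z ∈ C := by
    intro y hy z hz h1 h2 h3
    rw [hCdef] at hy ⊢
    exact Relation.ReflTransGen.tail hy ⟨h3, hz, h1, h2⟩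
  have hCC0 : C ⊆ C0 := by
    intro y hy
    rw [hCdef] at hy
    change RT _ _ _ _ at hy
    induction hy with
    | refl => exact hc
    | tail h1 h2 ih => exact hC0cl _ ih _ h2.2.1 h2.2.2.1 h2.2.2.2 h2.1
  have hconn : ∀ y ∈ C, ∀ z ∈ C, RT G C y z := by
    intro y hy z hz
    have h1 : RT G C c y := by
      rw [hCdef] at hy ⊢; exact RT.comp hy
    have h2 : RT G C c z := by
      rw [hCdef] at hz ⊢; exact RT.comp hz
    exact Relation.ReflTransGen.trans (h1.symm hcC) h2
  suffices ∃ s ∈ C, Simpl G U s by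
    obtain ⟨s, hs, h⟩ := this
    exact ⟨s, hCC0 hs, h⟩
  obtain ⟨S, hS⟩ : ∃ S : Set V, S = {z | z ∈ U ∧ z ∉ C ∧ ∃ y ∈ C, G.Adj y z} := ⟨_, rfl⟩
  have hSx : ∀ z ∈ S, G.Adj x z := by
    intro z hz
    rw [hS] at hz
    obtain ⟨h1, h2, y, hy, h3⟩ := hz
    by_contra hcon
    refine h2 (hCcl y hy z h1 ?_ hcon h3)
    rintro rfl
    exact (hCU y hy).2.2 h3.symm
  -- `S` is a clique
  have hScl : ∀ s ∈ S, ∀ s' ∈ S, s ≠ s' → G.Adj s s' := by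
    intro s hs s' hs' hne
    by_contra hnadj
    have hs1 := hs
    have hs1' := hs'
    rw [hS] at hs1 hs1'
    obtain ⟨hsU, hsC, y, hy, hys⟩ := hs1
    obtain ⟨hsU', hsC', y', hy', hys'⟩ := hs1'
    have hr : RT G (insert s (insert s' C)) s s' := by
      refine Relation.ReflTransGen.head (b := y) ⟨hys.symm, by simp [hy]⟩ ?_
      refine Relation.ReflTransGen.tail (b := y') ?_ ⟨hys', by simp⟩
      exact RT.mono (fun z hz => by simp [hz]) (hconn y hy y' hy')
    obtain ⟨n, p, h0, hn, hpT, hp⟩ := hr.exists_indP (by simp)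
    have hpC : ∀ i, 0 < i → i < n → p i ∈ C := by
      intro i hi hin
      rcases hpT i (by omega) with h | h | h
      · exact absurd (h0.trans h.symm) (hp 0 i hi (by omega)).1
      · exact absurd (h.trans hn.symm) (hp i n hin le_rfl).1
      · exact h
    have hn2 : 2 ≤ n := by
      by_contra hcon
      have : n = 0 ∨ n = 1 := by omega
      rcases this with rfl | rfl
      · exact hne (h0.symm.trans hn)
      · have := (hp 0 1 (by omega) le_rfl).2.2 rfl
        rw [h0, hn] at this
        exact hnadj this
    have hsx := hSx s hs
    have hsx' := hSx s' hs'
    refine close_cycle h4 hole hp hn2 ?_ hx ?_ (by rw [h0]; exact hsx) (by rw [hn]; exact hsx')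
      (fun i hi hin => (hCU _ (hpC i hi hin)).2.2)
    · intro i hi
      rcases hpT i hi with h | h | h
      · rw [h]; exact hsU
      · rw [h]; exact hsU'
      · exact (hCU _ h).1
    · intro i hi
      rcases hpT i hi with h | h | h
      · rw [h]; exact hsx.ne
      · rw [h]; exact hsx'.ne
      · exact (hCU _ h).2.1.symm
  have hSU : S ⊆ U := by intro z hz; rw [hS] at hz; exact hz.1
  have hCUs : C ⊆ U := fun z hz => (hCU z hz).1
  have hnb : ∀ y ∈ C, ∀ z ∈ U, G.Adj y z → z ∈ C ∪ S := by
    intro y hy z hz hyz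
    by_cases h : z ∈ C
    · exact Or.inl h
    · right; rw [hS]; exact ⟨hz, h, y, hy, hyz⟩
  have hxC : x ∉ C := fun h => (hCU x h).2.1 rfl
  have hxS : x ∉ S := fun h => G.irrefl (hSx x h)
  -- pass to the smaller set `C ∪ S`
  have hlt : (C ∪ S).ncard < N := by
    rw [← hU]
    apply Set.ncard_lt_ncard _ (Set.toFinite _)
    refine ⟨Set.union_subset hCUs hSU, fun h => ?_⟩
    rcases h hx with h | h
    · exact hxC h
    · exact hxS h
  have h4' : NoC4 G (C ∪ S) := by
    intro a ha b hb c hc d hd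
    exact h4 a (Set.union_subset hCUs hSU ha) b (Set.union_subset hCUs hSU hb)
      c (Set.union_subset hCUs hSU hc) d (Set.union_subset hCUs hSU hd)
  have ih' := ih _ hlt (C ∪ S) rfl h4'
  have lift : ∀ s ∈ C, Simpl G (C ∪ S) s → Simpl G U s := by
    intro s hs h y hy z hz h1 h2
    exact h y (hnb s hs y hy h1) z (hnb s hs z hz h2) h1 h2
  have whole : ∀ p ∈ C ∪ S, ∀ q ∈ C ∪ S, q ≠ p → ¬ G.Adj p q →
      ∃ s ∈ C ∪ S, s ≠ p ∧ ¬ G.Adj p s ∧ Simpl G (C ∪ S) s := by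
    intro p hp q hq h1 h2
    obtain ⟨s, hs, h⟩ := ih' p hp {z | z ∈ C ∪ S ∧ z ≠ p ∧ ¬ G.Adj p z} ⟨q, hq, h1, h2⟩
      (fun y hy => hy) (fun y _ z hz h1 h2 _ => ⟨hz, h1, h2⟩)
    exact ⟨s, hs.1, hs.2.1, hs.2.2, h⟩
  by_cases hclq : ∃ p ∈ C ∪ S, ∃ q ∈ C ∪ S, q ≠ p ∧ ¬ G.Adj p q
  · obtain ⟨p, hp, q, hq, h1, h2⟩ := hclq
    obtain ⟨s1, hs1, k1, k2, k3⟩ := whole p hp q hq h1 h2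
    by_cases hs1C : s1 ∈ C
    · exact ⟨s1, hs1C, lift s1 hs1C k3⟩
    · have hs1S : s1 ∈ S := hs1.resolve_left hs1C
      obtain ⟨s2, hs2, l1, l2, l3⟩ := whole s1 hs1 p hp k1.symm (fun h => k2 h.symm)
      have hs2C : s2 ∈ C := by
        rcases hs2 with h | h
        · exact h
        · exact absurd (hScl s1 hs1S s2 h l1.symm) l2
      exact ⟨s2, hs2C, lift s2 hs2C l3⟩
  · push Not at hclq
    refine ⟨c, hcC, lift c hcC ?_⟩
    intro y hy z hz _ _ hne
    exact hclq y hy z hz hne.symm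

/-- In a chordal `U` every vertex that is not semisimplicial is inside an induced path of
length at least three between simplicial vertices. -/
theorem chordal_path [Finite V] {G : SimpleGraph V} {U : Set V}
    (hole : ∀ p n, 5 ≤ n → ¬ IndC G p n) (h4 : NoC4 G U) {x : V} (hx : x ∈ U)
    (hss : ¬ SS G U x) : ∃ (p : ℕ → V) (n : ℕ), 3 ≤ n ∧ IndP G p n ∧ (∀ i, i ≤ n → p i ∈ U) ∧
      Simpl G U (p 0) ∧ Simpl G U (p n) ∧ ∃ i, i ≤ n ∧ p i = x := by
  unfold SS at hss
  push Not at hss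
  obtain ⟨a, ha, b, hb, c, hc, h1, h2, h3, n1, n2, n3⟩ := hss
  have eab : a ≠ b := by rintro rfl; exact n2 h3
  have ecx : c ≠ x := by rintro rfl; exact n2 h1
  -- a path leaving `b`, starting in `x`, ending in a simplicial vertex
  have side : ∀ x b a, x ∈ U → b ∈ U → a ∈ U → G.Adj x b → G.Adj a x → ¬ G.Adj b a → a ≠ b →
      ∃ (n : ℕ) (f : ℕ → V), 1 ≤ n ∧ IndP G f n ∧ f 0 = x ∧ Simpl G U (f n) ∧
        (∀ i, i ≤ n → f i ∈ U) ∧ ∀ i, 0 < i → i ≤ n → f i ≠ b ∧ ¬ G.Adj b (f i) := by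
    intro x b a hx hb ha hxb hax hba hne
    have haT : a ∈ {z | z ∈ U ∧ z ≠ b ∧ ¬ G.Adj b z} := ⟨ha, hne, hba⟩
    obtain ⟨s, hs, hsimp⟩ := exists_simplicial hole _ U rfl h4 b hb
      {z | RT G {z | z ∈ U ∧ z ≠ b ∧ ¬ G.Adj b z} a z} ⟨a, Relation.ReflTransGen.refl⟩
      (fun y hy => show y ∈ {z | z ∈ U ∧ z ≠ b ∧ ¬ G.Adj b z} from RT.mem hy haT)
      (fun y hy z hz k1 k2 k3 => Relation.ReflTransGen.tail hy ⟨k3, hz, k1, k2⟩)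
    have hr : RT G (insert x {z | z ∈ U ∧ z ≠ b ∧ ¬ G.Adj b z}) x s := by
      refine Relation.ReflTransGen.head (b := a) ⟨hax.symm, Or.inr haT⟩ ?_
      exact RT.mono (Set.subset_insert _ _) hs
    obtain ⟨n, f, f0, fn, fT, hf⟩ := hr.exists_indP (Set.mem_insert _ _)
    have hsT : s ∈ {z | z ∈ U ∧ z ≠ b ∧ ¬ G.Adj b z} := RT.mem hs haT
    refine ⟨n, f, ?_, hf, f0, by rw [fn]; exact hsimp, ?_, ?_⟩
    · by_contra hn
      obtain rfl : n = 0 := by omega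
      have hsx : s = x := fn.symm.trans f0
      rw [hsx] at hsT
      exact hsT.2.2 hxb.symm
    · intro i hi
      rcases fT i hi with h | h
      · rw [h]; exact hx
      · exact h.1
    · intro i hi hin
      rcases fT i hin with h | h
      · exact absurd (f0.trans h.symm) (hf 0 i hi hin).1
      · exact h.2
  obtain ⟨n, f, hn, hf, f0, fs, fU, fb⟩ := side x b a hx hb ha h2 h1 (fun h => n1 h.symm) eab
  obtain ⟨m, g, hm, hg, g0, gs, gU, gx⟩ := side b x c hb hx hc h2.symm h3.symm n3 ecx
  have hfg0 : G.Adj (f 0) (g 0) := by rw [f0, g0]; exact h2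
  -- no contact between the two paths
  have key : ∀ k i j, i + j = k → i ≤ n → j ≤ m → 0 < i + j →
      f i ≠ g j ∧ ¬ G.Adj (f i) (g j) := by
    intro k
    induction k using Nat.strong_induction_on with
    | _ k ih =>
    intro i j hk hi hj hpos
    by_cases hi0 : i = 0
    · subst hi0
      rw [f0]
      have := gx j (by omega) hj
      exact ⟨this.1.symm, this.2⟩
    by_cases hj0 : j = 0
    · subst hj0
      rw [g0]
      have := fb i (by omega) hi
      exact ⟨this.1, fun h => this.2 h.symm⟩
    have hne : f i ≠ g j := by
      intro he
      have hadj : G.Adj (g (j-1)) (g j) := (hg (j-1) j (by omega) hj).2.2 (by omega)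
      rw [← he] at hadj
      exact (ih (i + (j-1)) (by omega) i (j-1) rfl hi (by omega) (by omega)).2 hadj.symm
    refine ⟨hne, fun hadj => ?_⟩
    have hc := concat_indP (n := i - 1) (m := j) (hf.mono (by omega)) (hg.mono hj) hfg0
      (fun i' j' hi' hj' hp => ih (i' + j') (by omega) i' j' rfl (by omega) (by omega) hp)
    refine close_cycle h4 hole hc (by omega) ?_ (fU i hi) ?_ ?_ ?_ ?_
    · intro k hk
      by_cases h : k ≤ i - 1
      · simp only [h, if_true]; exact fU _ (by omega)
      · simp only [h, if_false]; exact gU _ (by omega)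
    · intro k hk
      by_cases h : k ≤ i - 1
      · simp only [h, if_true]
        exact (hf _ _ (by omega) hi).1.symm
      · simp only [h, if_false]
        by_cases hkj : k - (i-1) - 1 = j
        · rw [hkj]; exact hne
        · exact (ih (i + (k - (i-1) - 1)) (by omega) i _ rfl hi (by omega) (by omega)).1
    · simp only [Nat.zero_le, if_true]
      exact ((hf (i - 1 - 0) i (by omega) hi).2.2 (by omega)).symm
    · simp only [show ¬ (i - 1 + j + 1 ≤ i - 1) by omega, if_false]
      rw [show i - 1 + j + 1 - (i - 1) - 1 = j by omega]
      exact hadj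
    · intro k hk0 hk
      by_cases h : k ≤ i - 1
      · simp only [h, if_true]
        intro hcon
        have := (hf (i - 1 - k) i (by omega) hi).2.1 hcon.symm
        omega
      · simp only [h, if_false]
        exact (ih (i + (k - (i-1) - 1)) (by omega) i _ rfl hi (by omega) (by omega)).2
  have hc := concat_indP hf hg hfg0 (fun i j hi hj hp => key _ i j rfl hi hj hp)
  refine ⟨_, _, by omega, hc, ?_, ?_, ?_, n, by omega, ?_⟩
  · intro k hk
    by_cases h : k ≤ n
    · simp only [h, if_true]; exact fU _ (by omega)
    · simp only [h, if_false]; exact gU _ (by omega)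
  · simpa using fs
  · simp only [show ¬ (n + m + 1 ≤ n) by omega, if_false]
    rw [show n + m + 1 - n - 1 = m by omega]
    exact gs
  · simpa using f0

end Chordal

section Backward

theorem IsMod.unif {G : SimpleGraph V} {U M : Set V} (h : IsMod G U M) {z m m' : V} (hz : z ∈ U)
    (hzM : z ∉ M) (hm : m ∈ M) (hm' : m' ∈ M) (hadj : G.Adj z m) : G.Adj z m' := by
  by_contra hcon
  exact h.2 z hz hzM ⟨⟨m, hm, hadj⟩, ⟨m', hm', hcon⟩⟩

theorem IsMod.ss_out {G : SimpleGraph V} {U M : Set V} (h : IsMod G U M) {m y : V} (hm : m ∈ M)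
    (hy : y ∈ U) (hyM : y ∉ M) (hs : SS G (insert m (U \ M)) y) : SS G U y := by
  rintro a ha b hb c hc ⟨h1, h2, h3, n1, n2, n3⟩
  have u1 : ∀ {z m m' : V}, z ∈ U → z ∉ M → m ∈ M → m' ∈ M → ¬ G.Adj z m → ¬ G.Adj z m' :=
    fun hz hzM hm hm' hn hadj => hn (h.unif hz hzM hm' hm hadj)
  by_cases haM : a ∈ M
  · have hcM : c ∉ M := fun hcM => n3 (h.unif hy hyM haM hcM h1.symm)
    have hbM : b ∉ M := fun hbM => n2 (h.unif hc hcM hbM haM h3.symm).symm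
    exact hs m (Or.inl rfl) b (Or.inr ⟨hb, hbM⟩) c (Or.inr ⟨hc, hcM⟩)
      ⟨(h.unif hy hyM haM hm h1.symm).symm, h2, h3,
        fun e => u1 hb hbM haM hm (fun e => n1 e.symm) e.symm,
        fun e => u1 hc hcM haM hm (fun e => n2 e.symm) e.symm, n3⟩
  · by_cases hbM : b ∈ M
    · have hcM : c ∉ M := fun hcM => n3 (h.unif hy hyM hbM hcM h2)
      exact hs a (Or.inr ⟨ha, haM⟩) m (Or.inl rfl) c (Or.inr ⟨hc, hcM⟩)
        ⟨h1, h.unif hy hyM hbM hm h2, (h.unif hc hcM hbM hm h3.symm).symm,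
          u1 ha haM hbM hm n1, n2, n3⟩
    · by_cases hcM : c ∈ M
      · exact hs a (Or.inr ⟨ha, haM⟩) b (Or.inr ⟨hb, hbM⟩) m (Or.inl rfl)
          ⟨h1, h2, h.unif hb hbM hcM hm h3, n1, u1 ha haM hcM hm n2, u1 hy hyM hcM hm n3⟩
      · exact hs a (Or.inr ⟨ha, haM⟩) b (Or.inr ⟨hb, hbM⟩) c (Or.inr ⟨hc, hcM⟩)
          ⟨h1, h2, h3, n1, n2, n3⟩

theorem IsMod.ss_in {G : SimpleGraph V} {U M : Set V} (h : IsMod G U M) {y : V}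
    (hyM : y ∈ M) (hs : SS G M y) (hs' : SS G (insert y (U \ M)) y) : SS G U y := by
  rintro a ha b hb c hc ⟨h1, h2, h3, n1, n2, n3⟩
  by_cases haM : a ∈ M
  · by_cases hbM : b ∈ M
    · by_cases hcM : c ∈ M
      · exact hs a haM b hbM c hcM ⟨h1, h2, h3, n1, n2, n3⟩
      · exact n3 (h.unif hc hcM hbM hyM h3.symm).symm
    · exact n1 (h.unif hb hbM hyM haM h2.symm).symm
  · have hbM : b ∉ M := fun hbM => n1 (h.unif ha haM hyM hbM h1)
    have hcM : c ∉ M := fun hcM => n2 (h.unif ha haM hyM hcM h1)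
    exact hs' a (Or.inr ⟨ha, haM⟩) b (Or.inr ⟨hb, hbM⟩) c (Or.inr ⟨hc, hcM⟩)
      ⟨h1, h2, h3, n1, n2, n3⟩

theorem FConv.mono {G : SimpleGraph V} {U U' K : Set V} (h : FConv G U K) (hU : U' ⊆ U) :
    FConv G U' K := fun p n hn hp hpU h0 h1 => h p n hn hp (fun i hi => hU (hpU i hi)) h0 h1

theorem exists_module [Finite V] {G : SimpleGraph V} {U : Set V}
    (hH : ∀ a b c d e, ¬ HouseP G a b c d e) (hD : ∀ a b c d e f, ¬ DominoP G a b c d e f)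
    (hA : ∀ a b c d e f, ¬ AP G a b c d e f) (h4 : ¬ NoC4 G U) :
    ∃ M, IsMod G U M ∧ M.Nontrivial ∧ ∃ z ∈ U, z ∉ M := by
  unfold NoC4 at h4
  push Not at h4
  obtain ⟨a, ha, b, hb, c, hc, d, hd, h1, h2, h3, h4, h5, h6, h7, h8, -⟩ := h4
  obtain ⟨A, B, -, -, hM⟩ := (join_of_C4 ha hb hc hd h1 h2 h3 h4 h5 h6 h7 h8).exists_max
  have hout : ∀ A B, MaxJoin G U A B → A.Nontrivial ∧ ∃ z ∈ U, z ∉ A := by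
    intro A B hM
    refine ⟨hM.1.ntA, ?_⟩
    obtain ⟨b, hb⟩ := hM.1.ntB.nonempty
    exact ⟨b, hM.1.subB hb, fun hbA => G.loopless.irrefl _ (hM.1.adj b hbA b hb)⟩
  by_cases hmA : IsMod G U A
  · exact ⟨A, hmA, hout A B hM⟩
  by_cases hmB : IsMod G U B
  · exact ⟨B, hmB, hout B A hM.symm⟩
  have key : ∀ A, A ⊆ U → ¬ IsMod G U A → ∃ z ∈ U, z ∉ A ∧ Mixed G z A := by
    intro A hAU h
    by_contra hcon
    push Not at hcon
    exact h ⟨hAU, hcon⟩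
  obtain ⟨z, hzU, hzA, hz⟩ := key A hM.1.subA hmA
  obtain ⟨z', hzU', hzB', hz'⟩ := key B hM.1.subB hmB
  obtain ⟨_, -, _, -, _, -, _, -, hAP⟩ := hM.exists_AP hH hD hzU hzA hz hzU' hzB' hz'
  exact absurd hAP (hA _ _ _ _ _ _)

theorem exists_ss [Finite V] {G : SimpleGraph V} (hole : ∀ p n, 5 ≤ n → ¬ IndC G p n)
    (hH : ∀ a b c d e, ¬ HouseP G a b c d e) (hD : ∀ a b c d e f, ¬ DominoP G a b c d e f)
    (hA : ∀ a b c d e f, ¬ AP G a b c d e f) (N : ℕ) : ∀ (U K : Set V), U.ncard = N →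
    FConv G U K → (∃ x ∈ U, x ∉ K) → ∃ x ∈ U, x ∉ K ∧ SS G U x := by
  induction N using Nat.strong_induction_on with
  | _ N ih =>
    intro U K hN hK hx
    have IH : ∀ U', U' ⊆ U → (∃ z ∈ U, z ∉ U') → (∃ x ∈ U', x ∉ K) →
        ∃ x ∈ U', x ∉ K ∧ SS G U' x := by
      intro U' hU' ⟨z, hz, hz'⟩ hx'
      refine ih _ ?_ U' K rfl (hK.mono hU') hx'
      rw [← hN]
      exact Set.ncard_lt_ncard ⟨hU', fun h => hz' (h hz)⟩ (Set.toFinite _)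
    by_cases h4 : NoC4 G U
    · obtain ⟨x, hxU, hxK⟩ := hx
      by_cases hss : SS G U x
      · exact ⟨x, hxU, hxK, hss⟩
      obtain ⟨p, n, hn, hp, hpU, s0, s1, i, hi, rfl⟩ := chordal_path hole h4 hxU hss
      by_cases h0 : p 0 ∈ K
      · by_cases h1 : p n ∈ K
        · exact absurd (hK p n hn hp hpU h0 h1 i hi) hxK
        · exact ⟨p n, hpU n le_rfl, h1, s1.ss⟩
      · exact ⟨p 0, hpU 0 (Nat.zero_le _), h0, s0.ss⟩
    obtain ⟨M, hM, hnt, hout⟩ := exists_module hH hD hA h4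
    have IHq : ∀ m ∈ M, (∃ x ∈ insert m (U \ M), x ∉ K) →
        ∃ x ∈ insert m (U \ M), x ∉ K ∧ SS G (insert m (U \ M)) x := by
      intro m hm h
      obtain ⟨m', hm', hne⟩ := hnt.exists_ne m
      refine IH _ (Set.insert_subset (hM.1 hm) Set.sdiff_subset) ⟨m', hM.1 hm', ?_⟩ h
      rintro (e | e)
      · exact hne e
      · exact e.2 hm'
    have caseK : ∀ m ∈ M, m ∈ K → (∃ x ∈ U \ M, x ∉ K) → ∃ x ∈ U, x ∉ K ∧ SS G U x := by
      intro m hm hmK ⟨x, hx, hxK⟩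
      obtain ⟨y, hy, hyK, hss⟩ := IHq m hm ⟨x, Or.inr hx, hxK⟩
      rcases hy with rfl | hy
      · exact absurd hmK hyK
      · exact ⟨y, hy.1, hyK, hM.ss_out hm hy.1 hy.2 hss⟩
    by_cases hMK : M ⊆ K
    · obtain ⟨m, hm⟩ := hnt.nonempty
      obtain ⟨x, hxU, hxK⟩ := hx
      exact caseK m hm (hMK hm) ⟨x, ⟨hxU, fun h => hxK (hMK h)⟩, hxK⟩
    obtain ⟨x0, hx0, hx0K⟩ := Set.not_subset.1 hMK
    obtain ⟨x, hxM, hxK, hxs⟩ := IH M hM.1 hout ⟨x0, hx0, hx0K⟩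
    by_cases hss : SS G (insert x (U \ M)) x
    · exact ⟨x, hM.1 hxM, hxK, hM.ss_in hxM hxs hss⟩
    by_cases hMK2 : ∃ m ∈ M, m ∈ K
    · obtain ⟨m, hm, hmK⟩ := hMK2
      by_cases hUM : ∃ x ∈ U \ M, x ∉ K
      · exact caseK m hm hmK hUM
      · push Not at hUM
        unfold SS at hss
        push Not at hss
        obtain ⟨a, ha, b, hb, c, hc, hp⟩ := hss
        have ha' : a ∈ U \ M := ha.resolve_left (by rintro rfl; exact hp.1.ne rfl)
        have hc' : c ∈ U \ M := hc.resolve_left (by rintro rfl; exact hp.2.2.2.2.1 hp.1)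
        have hb' : b ∈ U \ M := hb.resolve_left (by rintro rfl; exact hp.2.1.ne rfl)
        exact absurd (hK.p4 hp ha'.1 (hM.1 hxM) hb'.1 hc'.1 (hUM a ha') (hUM c hc')).1 hxK
    · obtain ⟨y, hy, hyK, hys⟩ := IHq x hxM ⟨x, Or.inl rfl, hxK⟩
      rcases hy with rfl | hy
      · exact absurd hys hss
      · exact ⟨y, hy.1, hyK, hM.ss_out hxM hy.1 hy.2 hys⟩

/-- The family of convex sets, in elementary form. -/
def Cv (G : SimpleGraph V) : Set V → Prop := FConv G Set.univ

theorem Cv.sInter {G : SimpleGraph V} {F : Set (Set V)} (h : ∀ T ∈ F, Cv G T) :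
    Cv G (⋂₀ F) := by
  intro p n hn hp hU h0 h1 i hi T hT
  exact h T hT p n hn hp hU (h0 T hT) (h1 T hT) i hi

theorem Cv.chull {G : SimpleGraph V} (S : Set V) : Cv G (chull (Cv G) S) :=
  Cv.sInter fun _ hT => hT.2

theorem subset_chull {Cvx : Set V → Prop} (S : Set V) : S ⊆ chull Cvx S :=
  fun _ hx _ hT => hT.1 hx

theorem chull_subset {Cvx : Set V → Prop} {S T : Set V} (h : S ⊆ T) (hT : Cvx T) :
    chull Cvx S ⊆ T := fun _ hx => hx T ⟨h, hT⟩

theorem backward [Finite V] {G : SimpleGraph V} (hole : ∀ p n, 5 ≤ n → ¬ IndC G p n)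
    (hH : ∀ a b c d e, ¬ HouseP G a b c d e) (hD : ∀ a b c d e f, ¬ DominoP G a b c d e f)
    (hA : ∀ a b c d e f, ¬ AP G a b c d e f) : IsConvexGeometry (Cv G) := by
  intro S hS
  apply Set.Subset.antisymm
  · by_contra hcon
    obtain ⟨x0, hx0, hx0'⟩ := Set.not_subset.1 hcon
    have hK : FConv G S (chull (Cv G) (extremeSet (Cv G) S)) :=
      (Cv.chull _ : FConv G Set.univ _).mono (Set.subset_univ S)
    obtain ⟨x, hxS, hxK, hss⟩ := exists_ss hole hH hD hA _ S _ rfl hK ⟨x0, hx0, hx0'⟩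
    refine hxK (subset_chull _ ⟨hxS, ?_⟩)
    intro p n hn hp hU h0 h1
    have hpS := hS p n hn hp hU h0.1 h1.1
    intro i hi
    refine ⟨hpS i hi, ?_⟩
    intro (hix : p i = x)
    refine SS.not_interior hn hp hpS (i := i) ?_ ?_ (hix ▸ hss)
    · rcases Nat.eq_zero_or_pos i with rfl | h
      · exact absurd hix h0.2
      · exact h
    · rcases hi.eq_or_lt with rfl | h
      · exact absurd hix h1.2
      · exact h
  · exact chull_subset (fun x hx => hx.1) hS

end Backward

section Forward

/-- All six vertices lie in `S`. -/
def Six (S : Set V) (a b c d e f : V) : Prop :=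
  a ∈ S ∧ b ∈ S ∧ c ∈ S ∧ d ∈ S ∧ e ∈ S ∧ f ∈ S

theorem extreme_ss {G : SimpleGraph V} {S : Set V} {x : V} (hx : x ∈ extremeSet (Cv G) S) :
    SS G S x := by
  intro a ha b hb c hc hp
  have hcx : c ≠ x := by rintro rfl; exact hp.2.2.2.2.1 hp.1
  have := FConv.p4 hx.2 hp trivial trivial trivial trivial ⟨ha, hp.1.ne⟩ ⟨hc, hcx⟩
  exact this.1.2 rfl

theorem extreme_hull {G : SimpleGraph V} {T : Set V} {x : V}
    (hx : x ∈ extremeSet (Cv G) (chull (Cv G) T)) : x ∈ T ∧ SS G T x := by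
  refine ⟨?_, ?_⟩
  · by_contra hcon
    have : chull (Cv G) T ⊆ chull (Cv G) T \ {x} := by
      refine chull_subset (fun y hy => ⟨subset_chull _ hy, ?_⟩) hx.2
      intro (h : y = x)
      exact hcon (h ▸ hy)
    exact (this hx.1).2 rfl
  · have := extreme_ss hx
    exact fun a ha b hb c hc => this a (subset_chull _ ha) b (subset_chull _ hb) c
      (subset_chull _ hc)

theorem geom_subset {G : SimpleGraph V} (hg : IsConvexGeometry (Cv G)) {T C : Set V}
    (hC : Cv G C) (h : ∀ x ∈ T, SS G T x → x ∈ C) : T ⊆ C := by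
  intro y hy
  have h1 : y ∈ chull (Cv G) T := subset_chull _ hy
  rw [hg _ (Cv.chull T)] at h1
  exact chull_subset (fun x hx => h x (extreme_hull hx).1 (extreme_hull hx).2) hC h1

theorem Cv.empty (G : SimpleGraph V) : Cv G ∅ := fun _ _ _ _ _ h0 => h0.elim

theorem Cv.singleton (G : SimpleGraph V) (x : V) : Cv G {x} := by
  intro p n hn hp _ (h0 : p 0 = x) (h1 : p n = x)
  exact absurd (h0.trans h1.symm) (hp 0 n (by omega) le_rfl).1

theorem no_house {G : SimpleGraph V} (hg : IsConvexGeometry (Cv G)) (a b c d e : V) :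
    ¬ HouseP G a b c d e := by
  rintro ⟨h1, h2, h3, h4, h5, h6, n1, n2, n3, n4⟩
  have k1 : P4 G e a d c := ⟨h5.symm, h4, h3.symm, fun h => n4 h.symm, fun h => n3 h.symm, n1⟩
  have k2 : P4 G e b c d := ⟨h6.symm, h2, h3, fun h => n3 h.symm, fun h => n4 h.symm, n2⟩
  have := geom_subset hg (T := {a, b, c, d, e}) (Cv.singleton G e) (by
    intro x hx hs
    simp only [Set.mem_insert_iff, Set.mem_singleton_iff] at hx ⊢
    rcases hx with rfl | rfl | rfl | rfl | rfl
    · exact absurd k1 (hs _ (by simp) _ (by simp) _ (by simp))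
    · exact absurd k2 (hs _ (by simp) _ (by simp) _ (by simp))
    · exact absurd k2.symm (hs _ (by simp) _ (by simp) _ (by simp))
    · exact absurd k1.symm (hs _ (by simp) _ (by simp) _ (by simp))
    · rfl)
  exact h5.ne (this (by simp))

theorem no_domino {G : SimpleGraph V} (hg : IsConvexGeometry (Cv G)) (a b c d e f : V) :
    ¬ DominoP G a b c d e f := by
  rintro ⟨⟨h1, h2, h3, h4, h5, h6, n1, n2, n3, n4, n5, n6, n7, n8⟩, h7⟩
  have k1 : P4 G b a d f := ⟨h1.symm, h4, h6, n2, n6, n4⟩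
  have k2 : P4 G a b c e := ⟨h1, h2, h5, n1, n3, n5⟩
  have k3 : P4 G b c e f := ⟨h2, h5, h7, n5, n6, n7⟩
  have k4 : P4 G a d f e := ⟨h4, h6, h7.symm, n4, n3, n8⟩
  have := geom_subset hg (T := {a, b, c, d, e, f}) (Cv.empty G) (by
    intro x hx hs
    simp only [Set.mem_insert_iff, Set.mem_singleton_iff] at hx
    exfalso
    rcases hx with rfl | rfl | rfl | rfl | rfl | rfl
    · exact absurd k1 (hs _ (by simp) _ (by simp) _ (by simp))
    · exact absurd k2 (hs _ (by simp) _ (by simp) _ (by simp))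
    · exact absurd k2.symm (hs _ (by simp) _ (by simp) _ (by simp))
    · exact absurd k1.symm (hs _ (by simp) _ (by simp) _ (by simp))
    · exact absurd k3.symm (hs _ (by simp) _ (by simp) _ (by simp))
    · exact absurd k4.symm (hs _ (by simp) _ (by simp) _ (by simp)))
  exact this (show a ∈ _ by simp)

theorem no_hole {G : SimpleGraph V} (hg : IsConvexGeometry (Cv G)) (p : ℕ → V) (n : ℕ)
    (hn : 5 ≤ n) : ¬ IndC G p n := by
  intro hp
  have key : ∀ i, i < n → ¬ SS G {y | ∃ i, i < n ∧ p i = y} (p i) := by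
    have mem : ∀ i, i < n → p i ∈ {y | ∃ i, i < n ∧ p i = y} := fun i hi => ⟨i, hi, rfl⟩
    have fwd : ∀ i, i + 3 < n → P4 G (p i) (p (i+1)) (p (i+2)) (p (i+3)) := by
      intro i hi
      refine ⟨?_, ?_, ?_, ?_, ?_, ?_⟩ <;> rw [(hp _ _ (by omega) (by omega)).2] <;> omega
    intro i hi hs
    by_cases h0 : i = 0
    · subst h0
      refine hs _ (mem (n-1) (by omega)) _ (mem 1 (by omega)) _ (mem 2 (by omega)) ?_
      refine ⟨?_, ?_, ?_, fun h => ?_, fun h => ?_, ?_⟩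
      · refine SimpleGraph.Adj.symm ?_
        rw [(hp _ _ (by omega) (by omega)).2]; omega
      · rw [(hp _ _ (by omega) (by omega)).2]; omega
      · rw [(hp _ _ (by omega) (by omega)).2]; omega
      · have h := h.symm
        rw [(hp _ _ (by omega) (by omega)).2] at h; omega
      · have h := h.symm
        rw [(hp _ _ (by omega) (by omega)).2] at h; omega
      · rw [(hp _ _ (by omega) (by omega)).2]; omega
    by_cases h1 : i + 2 < n
    · have := fwd (i - 1) (by omega)
      rw [show i - 1 + 1 = i by omega, show i - 1 + 2 = i + 1 by omega,
        show i - 1 + 3 = i + 2 by omega] at this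
      exact hs _ (mem _ (by omega)) _ (mem _ (by omega)) _ (mem _ (by omega)) this
    by_cases h2 : i + 1 < n
    · have := (fwd (i - 2) (by omega)).symm
      rw [show i - 2 + 1 = i - 1 by omega, show i - 2 + 2 = i by omega,
        show i - 2 + 3 = i + 1 by omega] at this
      exact hs _ (mem _ (by omega)) _ (mem _ (by omega)) _ (mem _ (by omega)) this
    · refine hs _ (mem 0 (by omega)) _ (mem (i - 1) (by omega)) _ (mem (i - 2) (by omega)) ?_
      refine ⟨?_, ?_, ?_, ?_, ?_, fun h => ?_⟩
      · rw [(hp _ _ (by omega) (by omega)).2]; omega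
      · refine SimpleGraph.Adj.symm ?_
        rw [(hp _ _ (by omega) (by omega)).2]; omega
      · refine SimpleGraph.Adj.symm ?_
        rw [(hp _ _ (by omega) (by omega)).2]; omega
      · rw [(hp _ _ (by omega) (by omega)).2]; omega
      · rw [(hp _ _ (by omega) (by omega)).2]; omega
      · have h := h.symm
        rw [(hp _ _ (by omega) (by omega)).2] at h; omega
  have := geom_subset hg (T := {y | ∃ i, i < n ∧ p i = y}) (Cv.empty G) (by
    rintro x ⟨i, hi, rfl⟩ hs
    exact absurd hs (key i hi))
  exact this (show p 0 ∈ {y | ∃ i, i < n ∧ p i = y} from ⟨0, by omega, rfl⟩)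

theorem LadderP.ne {G : SimpleGraph V} {a b c d e f : V} (h : LadderP G a b c d e f) :
    a ≠ e ∧ a ≠ f ∧ b ≠ e ∧ b ≠ f ∧ a ≠ c ∧ b ≠ d ∧ e ≠ f := by
  obtain ⟨h1, h2, h3, h4, h5, h6, n1, n2, n3, n4, n5, n6, n7, n8⟩ := h
  refine ⟨?_, ?_, ?_, ?_, ?_, ?_, ?_⟩ <;> rintro rfl
  · exact n5 h1.symm
  · exact n6 h1.symm
  · exact n3 h1
  · exact n4 h1
  · exact n3 h5
  · exact n6 h6
  · exact n8 h6

theorem AP.ss {G : SimpleGraph V} {a b c d e f : V} (h : AP G a b c d e f) {T : Set V}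
    (hT : Six T a b c d e f) : ¬ SS G T a ∧ ¬ SS G T b ∧ ¬ SS G T c ∧ ¬ SS G T d := by
  obtain ⟨⟨h1, h2, h3, h4, h5, h6, n1, n2, n3, n4, n5, n6, n7, n8⟩, h7⟩ := h
  obtain ⟨ta, tb, tc, td, te, tf⟩ := hT
  have k1 : P4 G b a d f := ⟨h1.symm, h4, h6, n2, n6, n4⟩
  have k2 : P4 G a b c e := ⟨h1, h2, h5, n1, n3, n5⟩
  exact ⟨fun h => h _ tb _ td _ tf k1, fun h => h _ ta _ tc _ te k2,
    fun h => h _ te _ tb _ ta k2.symm, fun h => h _ tf _ ta _ tb k1.symm⟩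

/-- The critical situation: a minimal convex set containing an A, with a maximal join. -/
structure Crit (G : SimpleGraph V) (S A B : Set V) (w w' : V) : Prop where
  hole : ∀ p n, 5 ≤ n → ¬ IndC G p n
  house : ∀ a b c d e, ¬ HouseP G a b c d e
  domino : ∀ a b c d e f, ¬ DominoP G a b c d e f
  cv : Cv G S
  min : ∀ S', Cv G S' → S' ⊆ S → (∃ a b c d e f, Six S' a b c d e f ∧ AP G a b c d e f) → S ⊆ S'
  uniq : ∀ a b c d e f, Six S a b c d e f → AP G a b c d e f →
    (e = w ∧ f = w') ∨ (e = w' ∧ f = w)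
  mj : MaxJoin G S A B
  wS : w ∈ S
  wS' : w' ∈ S
  wA : w ∉ A
  wB' : w' ∉ B
  mw : Mixed G w A
  mw' : Mixed G w' B

theorem Crit.symm {G : SimpleGraph V} {S A B : Set V} {w w' : V} (h : Crit G S A B w w') :
    Crit G S B A w' w :=
  ⟨h.hole, h.house, h.domino, h.cv, h.min, fun a b c d e f h1 h2 => (h.uniq a b c d e f h1 h2).symm,
    h.mj.symm, h.wS', h.wS, h.wB', h.wA, h.mw', h.mw⟩

theorem Crit.anti {G : SimpleGraph V} {S A B : Set V} {w w' : V} (h : Crit G S A B w w') :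
    ∀ b ∈ B, ¬ G.Adj w b := h.mj.mixed_anti h.house h.wS h.wA h.mw

theorem Crit.ne {G : SimpleGraph V} {S A B : Set V} {w w' : V} (h : Crit G S A B w w') :
    w ≠ w' := by
  rintro rfl
  obtain ⟨⟨a, ha, h1⟩, -⟩ := h.mw
  exact h.symm.anti a ha h1

theorem Crit.eq_of_mixed {G : SimpleGraph V} {S A B : Set V} {w w' z : V} (h : Crit G S A B w w')
    (hz : z ∈ S) (hzA : z ∉ A) (hm : Mixed G z A) : z = w := by
  obtain ⟨a', ha', b', hb', a, ha, b, hb, hAP⟩ :=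
    h.mj.exists_AP h.house h.domino hz hzA hm h.wS' h.wB' h.mw'
  rcases h.uniq _ _ _ _ _ _ ⟨h.mj.1.subA ha', h.mj.1.subB hb', h.mj.1.subA ha, h.mj.1.subB hb,
    hz, h.wS'⟩ hAP with h1 | h1
  · exact h1.1
  · exact absurd h1.2.symm h.ne

theorem Crit.types {G : SimpleGraph V} {S A B : Set V} {w w' z : V} (h : Crit G S A B w w')
    (hz : z ∈ S) (hzA : z ∉ A) (hzB : z ∉ B) : z = w ∨ z = w' ∨
      ((∀ a ∈ A, G.Adj z a) ∧ ∀ b ∈ B, G.Adj z b) ∨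
      ((∀ a ∈ A, ¬ G.Adj z a) ∧ ∀ b ∈ B, ¬ G.Adj z b) := by
  by_cases m1 : Mixed G z A
  · exact Or.inl (h.eq_of_mixed hz hzA m1)
  by_cases m2 : Mixed G z B
  · exact Or.inr (Or.inl (h.symm.eq_of_mixed hz hzB m2))
  have nm : ∀ A, ¬ Mixed G z A → (∀ a ∈ A, G.Adj z a) ∨ ∀ a ∈ A, ¬ G.Adj z a := by
    intro A hm
    by_contra hcon
    push Not at hcon
    exact hm ⟨hcon.2, hcon.1⟩
  rcases nm A m1 with hA | hA <;> rcases nm B m2 with hB | hB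
  · exact Or.inr (Or.inr (Or.inl ⟨hA, hB⟩))
  · exact (h.mj.not_complete_anti hz hzB hA hB).elim
  · exact (h.mj.symm.not_complete_anti hz hzA hB hA).elim
  · exact Or.inr (Or.inr (Or.inr ⟨hA, hB⟩))

theorem IsMod.cv {G : SimpleGraph V} {S M : Set V} (hS : Cv G S) (hM : IsMod G S M) : Cv G M := by
  intro p n hn hp hU h0 h1
  have hpS := hS p n hn hp hU (hM.1 h0) (hM.1 h1)
  by_contra hcon
  push Not at hcon
  classical
  have hf : ∃ i, i ≤ n ∧ p i ∉ M := hcon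
  have hsp := Nat.find_spec hf
  have hmin := fun j => Nat.find_min hf (m := j)
  generalize Nat.find hf = i at hsp hmin
  have hi0 : i ≠ 0 := by rintro rfl; exact hsp.2 h0
  have hin : i ≠ n := by rintro rfl; exact hsp.2 h1
  have hprev : p (i - 1) ∈ M := by
    by_contra hc
    exact hmin (i - 1) (by omega) ⟨by omega, hc⟩
  have hadj : G.Adj (p i) (p (i - 1)) := by
    refine SimpleGraph.Adj.symm ?_
    rw [(hp _ _ (by omega) (by omega)).2]; omega
  have e0 := (hM.unif (hpS i hsp.1) hsp.2 hprev h0 hadj).symm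
  have e1 := hM.unif (hpS i hsp.1) hsp.2 hprev h1 hadj
  rw [(hp _ _ (by omega) (by omega)).2] at e0
  rw [(hp _ _ (by omega) (by omega)).2] at e1
  omega

/-- Two nonadjacent vertices complete to `A` separated by a vertex `t` anticomplete to `A`. -/
theorem Crit.sep {G : SimpleGraph V} {S A B : Set V} {w w' t u v : V} (h : Crit G S A B w w')
    (ht : t ∈ S) (hu : u ∈ S) (hv : v ∈ S) (hua : ∀ a ∈ A, G.Adj u a) (hva : ∀ a ∈ A, G.Adj v a)
    (huv : ¬ G.Adj u v) (htu : G.Adj t u) (htv : ¬ G.Adj t v) (hta : ∀ a ∈ A, ¬ G.Adj t a)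
    (htw : t ≠ w') : G.Adj w u ∧ G.Adj w v := by
  obtain ⟨a, ha, a', ha', h1, h2, h3⟩ := h.mj.1.coA.mixed h.mw
  have htw0 : t ≠ w := by rintro rfl; exact hta a ha h1
  by_cases e1 : G.Adj w u <;> by_cases e2 : G.Adj w v
  · exact ⟨e1, e2⟩
  · exact absurd ⟨hua a ha, (hva a ha).symm, hva a' ha', hua a' ha', e1.symm, h1.symm, huv, h3,
      fun h => e2 h.symm, fun h => h2 h.symm⟩ (h.house u a v a' w)
  · exact absurd ⟨hva a ha, (hua a ha).symm, hua a' ha', hva a' ha', e2.symm, h1.symm,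
      fun h => huv h.symm, h3, fun h => e1 h.symm, fun h => h2 h.symm⟩ (h.house v a u a' w)
  · exfalso
    have hL : LadderP G v a' u a t w :=
      ⟨hva a' ha', (hua a' ha').symm, hua a ha, hva a ha, htu.symm, h1.symm, fun h => huv h.symm,
        fun h => h3 h.symm, fun h => htv h.symm, fun h => e2 h.symm,
        fun h => hta a' ha' h.symm, fun h => h2 h.symm, fun h => e1 h.symm,
        fun h => hta a ha h.symm⟩
    by_cases e : G.Adj t w
    · exact h.domino _ _ _ _ _ _ ⟨hL, e⟩
    · rcases h.uniq _ _ _ _ _ _ ⟨hv, h.mj.1.subA ha', hu, h.mj.1.subA ha, ht, h.wS⟩ ⟨hL, e⟩ with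
        h1 | h1
      · exact htw0 h1.1
      · exact htw h1.1

theorem Crit.sep_w {G : SimpleGraph V} {S A B : Set V} {w w' u v : V} (h : Crit G S A B w w')
    (hua : ∀ a ∈ A, G.Adj u a) (hva : ∀ a ∈ A, G.Adj v a)
    (huv : ¬ G.Adj u v) (htu : G.Adj w u) (htv : ¬ G.Adj w v) : False := by
  obtain ⟨a, ha, a', ha', h1, h2, h3⟩ := h.mj.1.coA.mixed h.mw
  exact absurd ⟨hua a ha, (hva a ha).symm, hva a' ha', hua a' ha', htu.symm, h1.symm, huv, h3,
      fun h => htv h.symm, fun h => h2 h.symm⟩ (h.house u a v a' w)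

theorem Crit.no_sep [Finite V] {G : SimpleGraph V} {S A B : Set V} {w w' t u v : V}
    (h : Crit G S A B w w') (ht : t ∈ S) (hu : u ∈ S) (hv : v ∈ S)
    (hua : ∀ a ∈ A, G.Adj u a) (hva : ∀ a ∈ A, G.Adj v a)
    (hub : ∀ b ∈ B, G.Adj u b) (hvb : ∀ b ∈ B, G.Adj v b)
    (hne : u ≠ v) (huv : ¬ G.Adj u v) (htu : G.Adj t u) (htv : ¬ G.Adj t v)
    (hta : ∀ a ∈ A, ¬ G.Adj t a) (htb : ∀ b ∈ B, ¬ G.Adj t b) : False := by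
  have htw : t ≠ w := by
    rintro rfl
    obtain ⟨⟨a, ha, h1⟩, -⟩ := h.mw
    exact hta a ha h1
  have htw' : t ≠ w' := by
    rintro rfl
    obtain ⟨⟨a, ha, h1⟩, -⟩ := h.mw'
    exact htb a ha h1
  obtain ⟨wu, wv⟩ := h.sep ht hu hv hua hva huv htu htv hta htw'
  obtain ⟨wu', wv'⟩ := h.symm.sep ht hu hv hub hvb huv htu htv htb htw
  obtain ⟨a', ha', b', hb', a, ha, b, hb, hAP⟩ :=
    h.mj.exists_AP h.house h.domino h.wS h.wA h.mw h.wS' h.wB' h.mw'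
  have haS := h.mj.1.subA ha
  have haS' := h.mj.1.subA ha'
  have hbS := h.mj.1.subB hb
  have hbS' := h.mj.1.subB hb'
  have hwS := h.wS
  have hwS' := h.wS'
  have hj : Join G S {a, w', a', b', b, w} {u, v} := by
    refine ⟨?_, ?_, ?_, (CoC.singleton G v).insert rfl huv, ?_, Set.nontrivial_pair hne, ?_⟩
    · rintro x (rfl | rfl | rfl | rfl | rfl | rfl) <;> assumption
    · rintro x (rfl | rfl) <;> assumption
    · have c1 := (CoC.singleton G w).insert (z := b) rfl (fun e => h.anti b hb e.symm)
      have c2 := c1.insert (z := b') (a := w) (by simp) (fun e => h.anti b' hb' e.symm)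
      have c3 := c2.insert (z := a') (a := w) (by simp) hAP.1.2.2.2.2.2.2.2.2.1
      have c4 := c3.insert (z := w') (a := a') (by simp) (h.symm.anti a' ha')
      exact c4.insert (z := a) (a := w') (by simp) (fun e => h.symm.anti a ha e.symm)
    · exact ⟨w, by simp, w', by simp, h.ne⟩
    · rintro x (rfl | rfl | rfl | rfl | rfl | rfl) y (rfl | rfl)
      · exact (hua _ ha).symm
      · exact (hva _ ha).symm
      · exact wu'
      · exact wv'
      · exact (hua _ ha').symm
      · exact (hva _ ha').symm
      · exact (hub _ hb').symm
      · exact (hvb _ hb').symm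
      · exact (hub _ hb).symm
      · exact (hvb _ hb).symm
      · exact wu
      · exact wv
  obtain ⟨A2, B2, sA, sB, hM⟩ := hj.exists_max
  have huB : u ∈ B2 := sB (by simp)
  have hvB : v ∈ B2 := sB (by simp)
  have htB : t ∉ B2 := fun e => hta a' ha' (hM.1.adj a' (sA (by simp)) t e).symm
  have hmod : IsMod G S A2 := by
    refine ⟨hM.1.subA, fun z hz hzA hm => ?_⟩
    obtain ⟨x1, hx1, x2, hx2, x3, hx3, x4, hx4, hAP2⟩ :=
      hM.exists_AP h.house h.domino hz hzA hm ht htB ⟨⟨u, huB, htu⟩, ⟨v, hvB, htv⟩⟩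
    rcases h.uniq _ _ _ _ _ _ ⟨hM.1.subA hx1, hM.1.subB hx2, hM.1.subA hx3, hM.1.subB hx4, hz,
      ht⟩ hAP2 with e | e
    · exact htw' e.2
    · exact htw e.2
  have := h.min A2 (hmod.cv h.cv) hM.1.subA ⟨a', b', a, b, w, w', ⟨sA (by simp), sA (by simp),
    sA (by simp), sA (by simp), sA (by simp), sA (by simp)⟩, hAP⟩
  exact (hM.1.adj u (this hu) u huB).ne rfl

/-- First local analysis. -/
theorem Crit.local1 [Finite V] {G : SimpleGraph V} {S A B : Set V} {w w' t u x v : V}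
    (h : Crit G S A B w w') (ht : t ∈ S) (hu : u ∈ S) (hx : x ∈ A) (hv : v ∈ S)
    (hwx : ¬ G.Adj w x) (huA : u ∉ A) (hvA : v ∉ A) (hp : P4 G t u x v) :
    G.Adj w' u ∧ v ∈ B ∧ ¬ G.Adj w' v := by
  obtain ⟨h1, h2, h3, n1, n2, n3⟩ := hp
  have cls : ∀ y ∈ S, y ∉ A → G.Adj y x →
      y ∈ B ∨ (y ∉ B ∧ (∀ a ∈ A, G.Adj y a) ∧ ∀ b ∈ B, G.Adj y b) := by
    intro y hy hyA hyx
    by_cases hyB : y ∈ B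
    · exact Or.inl hyB
    · rcases h.types hy hyA hyB with rfl | rfl | e | e
      · exact absurd hyx hwx
      · exact absurd hyx (h.symm.anti x hx)
      · exact Or.inr ⟨hyB, e⟩
      · exact absurd hyx (e.1 x hx)
  have hne : u ≠ v := by rintro rfl; exact n2 h1
  rcases cls u hu huA h2 with cu | ⟨cu, cua, cub⟩ <;>
    rcases cls v hv hvA h3.symm with cv | ⟨cv, cva, cvb⟩
  · have htA : t ∉ A := fun e => n2 (h.mj.1.adj t e v cv)
    have htB : t ∉ B := fun e => n1 (h.mj.1.adj x hx t e).symm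
    have := h.symm.eq_of_mixed ht htB ⟨⟨u, cu, h1⟩, ⟨v, cv, n2⟩⟩
    subst this
    exact ⟨h1, cv, n2⟩
  · exact absurd (cvb u cu).symm n3
  · exact absurd (cub v cv) n3
  · exfalso
    have htA : t ∉ A := fun e => n2 (cva t e).symm
    have htB : t ∉ B := fun e => n2 (cvb t e).symm
    rcases h.types ht htA htB with rfl | rfl | e | e
    · exact h.sep_w cua cva n3 h1 n2
    · exact h.symm.sep_w cub cvb n3 h1 n2
    · exact n1 (e.1 x hx)
    · exact h.no_sep ht hu hv cua cva cub cvb hne n3 h1 n2 e.1 e.2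

/-- Second local analysis. -/
theorem Crit.local2 {G : SimpleGraph V} {S A B : Set V} {w w' t u x v : V}
    (h : Crit G S A B w w') (ht : t ∈ S) (hu : u ∈ A) (hx : x ∈ A)
    (hwu : G.Adj w u) (hwx : ¬ G.Adj w x) (hwv : G.Adj w v)
    (hp : P4 G t u x v) : t ∈ A ∧ ¬ G.Adj w t := by
  obtain ⟨h1, h2, h3, n1, n2, n3⟩ := hp
  have htA : t ∈ A := by
    by_contra hcon
    have := h.eq_of_mixed ht hcon ⟨⟨u, hu, h1⟩, ⟨x, hx, n1⟩⟩
    subst this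
    exact n2 hwv
  refine ⟨htA, fun e => ?_⟩
  exact h.house w u x v t ⟨hwu, h2, h3, hwv, e, h1.symm, hwx, n3, fun h => n1 h.symm,
    fun h => n2 h.symm⟩

end Forward

section Final

theorem exists_left {Q : ℕ → Prop} (h0 : ¬ Q 0) : ∀ k, Q k →
    ∃ l, l < k ∧ ¬ Q l ∧ ∀ i, l < i → i ≤ k → Q i := by
  intro k
  induction k with
  | zero => intro h; exact absurd h h0
  | succ k ih =>
    intro hk
    by_cases hq : Q k
    · obtain ⟨l, hl, hn, hi⟩ := ih hq
      refine ⟨l, by omega, hn, fun i h1 h2 => ?_⟩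
      rcases h2.eq_or_lt with rfl | h
      · exact hk
      · exact hi i h1 (by omega)
    · refine ⟨k, by omega, hq, fun i h1 h2 => ?_⟩
      obtain rfl : i = k + 1 := by omega
      exact hk

theorem IndP.rev {G : SimpleGraph V} {p : ℕ → V} {n : ℕ} (h : IndP G p n) :
    IndP G (fun i => p (n - i)) n := by
  intro i j hij hj
  obtain ⟨h1, h2⟩ := h (n - j) (n - i) (by omega) (by omega)
  refine ⟨h1.symm, ?_⟩
  rw [SimpleGraph.adj_comm, h2]
  omega

theorem exists_right {Q : ℕ → Prop} {k n : ℕ} (hkn : k ≤ n) (hn : ¬ Q n) (hk : Q k) :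
    ∃ r, k < r ∧ r ≤ n ∧ ¬ Q r ∧ ∀ i, k ≤ i → i < r → Q i := by
  obtain ⟨l, hl, h1, h2⟩ := exists_left (Q := fun i => Q (n - i)) (by simpa using hn) (n - k)
    (by simpa [Nat.sub_sub_self hkn] using hk)
  refine ⟨n - l, by omega, by omega, h1, fun i h3 h4 => ?_⟩
  have := h2 (n - i) (by omega) (by omega)
  simpa [Nat.sub_sub_self (show i ≤ n by omega)] using this

theorem Crit.seg [Finite V] {G : SimpleGraph V} {S A B : Set V} {w w' : V}
    (h : Crit G S A B w w') {p : ℕ → V} {n k : ℕ} (hn : 3 ≤ n) (hp : IndP G p n)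
    (hpS : ∀ i, i ≤ n → p i ∈ S) (h0 : ¬ (p 0 ∈ A ∧ ¬ G.Adj w (p 0)))
    (h0' : ¬ (p 0 ∈ B ∧ ¬ G.Adj w' (p 0))) (h1 : ¬ (p n ∈ A ∧ ¬ G.Adj w (p n)))
    (h1' : ¬ (p n ∈ B ∧ ¬ G.Adj w' (p n))) (hk : k ≤ n) (hkA : p k ∈ A) (hkw : ¬ G.Adj w (p k)) :
    0 < k ∧ k < n ∧ p (k - 1) ∈ A ∧ G.Adj w (p (k - 1)) ∧ p (k + 1) ∈ A ∧ G.Adj w (p (k + 1)) := by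
  obtain ⟨l, hlk, hl, hlq⟩ := exists_left (Q := fun i => p i ∈ A ∧ ¬ G.Adj w (p i)) h0 k ⟨hkA, hkw⟩
  obtain ⟨r, hkr, hrn, hr, hrq⟩ := exists_right (Q := fun i => p i ∈ A ∧ ¬ G.Adj w (p i)) hk h1
    ⟨hkA, hkw⟩
  have hq : ∀ i, l < i → i < r → p i ∈ A ∧ ¬ G.Adj w (p i) := by
    intro i hi1 hi2
    by_cases h : i ≤ k
    · exact hlq i hi1 h
    · exact hrq i (by omega) hi2
  have cls : ∀ y ∈ S, ¬ (y ∈ A ∧ ¬ G.Adj w y) → ∀ x ∈ A, ¬ G.Adj w x → G.Adj y x →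
      (y ∈ A ∧ G.Adj w y) ∨ (y ∉ A ∧ ∀ a ∈ A, G.Adj y a) := by
    intro y hy hny x hx hwx hyx
    by_cases hyA : y ∈ A
    · left
      refine ⟨hyA, ?_⟩
      by_contra hc
      exact hny ⟨hyA, hc⟩
    · right
      refine ⟨hyA, ?_⟩
      by_contra hc
      push Not at hc
      have := h.eq_of_mixed hy hyA ⟨⟨x, hx, hyx⟩, hc⟩
      subst this
      exact hwx hyx
  have adj1 : G.Adj (p l) (p (l + 1)) := (hp _ _ (by omega) (by omega)).2.2 rfl
  have adj2 : G.Adj (p (r - 1)) (p r) := (hp _ _ (by omega) (by omega)).2.2 (by omega)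
  have nadj : ¬ G.Adj (p l) (p r) := by
    rw [(hp _ _ (by omega) (by omega)).2]; omega
  have q1 := hq (l + 1) (by omega) (by omega)
  have q2 := hq (r - 1) (by omega) (by omega)
  have cu := cls (p l) (hpS l (by omega)) hl _ q1.1 q1.2 adj1
  have cv := cls (p r) (hpS r (by omega)) hr _ q2.1 q2.2 adj2.symm
  rcases cu with ⟨uA, wu⟩ | ⟨uA, uc⟩
  · rcases cv with ⟨vA, wv⟩ | ⟨vA, vc⟩
    · by_cases hlr : r = l + 2
      · obtain rfl : k = l + 1 := by omega
        subst hlr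
        exact ⟨by omega, by omega, by simpa using uA, by simpa using wu, vA, wv⟩
      · exfalso
        have wne : ∀ i, l ≤ i → i ≤ r → w ≠ p i := by
          intro i hi1 hi2 e
          apply h.wA
          rw [e]
          by_cases e1 : i = l
          · rw [e1]; exact uA
          by_cases e2 : i = r
          · rw [e2]; exact vA
          exact (hq i (by omega) (by omega)).1
        refine h.hole (fun i => if i ≤ r - l then p (l + i) else w) (r - l + 2) (by omega) ?_
        intro i j hij hj
        by_cases hjn : j ≤ r - l
        · simp only [hjn, show i ≤ r - l by omega, if_true]
          have := hp (l + i) (l + j) (by omega) (by omega)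
          refine ⟨this.1, ?_⟩
          rw [this.2]
          omega
        · simp only [hjn, show i ≤ r - l by omega, if_true, if_false]
          refine ⟨(wne _ (by omega) (by omega)).symm, fun e => ?_, fun e => ?_⟩
          · by_contra hcon
            exact (hq (l + i) (by omega) (by omega)).2 e.symm
          · rcases e with e | e
            · rw [show l + i = r by omega]
              exact wv.symm
            · rw [show l + i = l by omega]
              exact wu.symm
    · exact absurd (vc _ uA).symm nadj
  · exfalso
    have hlr : r = l + 2 := by
      have := uc _ q2.1
      rw [(hp _ _ (by omega) (by omega)).2] at this
      omega
    subst hlr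
    have vA : p (l + 2) ∉ A := fun e => nadj (uc _ e)
    have L : 0 < l → G.Adj w' (p l) ∧ p (l + 2) ∈ B ∧ ¬ G.Adj w' (p (l + 2)) := by
      intro hl0
      have h4 := hp.p4 (l - 1) (by omega)
      rw [show l - 1 + 1 = l by omega, show l - 1 + 2 = l + 1 by omega,
        show l - 1 + 3 = l + 2 by omega] at h4
      exact h.local1 (hpS _ (by omega)) (hpS _ (by omega)) q1.1 (hpS _ (by omega)) q1.2 uA vA h4
    have R : l + 2 < n → G.Adj w' (p (l + 2)) ∧ p l ∈ B ∧ ¬ G.Adj w' (p l) := by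
      intro hl0
      have h4 := (hp.p4 l (by omega)).symm
      exact h.local1 (hpS _ (by omega)) (hpS _ (by omega)) q1.1 (hpS _ (by omega)) q1.2 vA uA h4
    by_cases hl0 : l = 0
    · have hr := R (by omega)
      subst hl0
      exact h0' hr.2
    · have hL := L (by omega)
      by_cases hrn' : l + 2 = n
      · rw [hrn'] at hL
        exact h1' hL.2
      · exact (R (by omega)).2.2 hL.1

theorem Crit.noA [Finite V] {G : SimpleGraph V} {S A B : Set V} {w w' : V}
    (h : Crit G S A B w w') {p : ℕ → V} {n k : ℕ} (hn : 3 ≤ n) (hp : IndP G p n)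
    (hpS : ∀ i, i ≤ n → p i ∈ S) (h0 : ¬ (p 0 ∈ A ∧ ¬ G.Adj w (p 0)))
    (h0' : ¬ (p 0 ∈ B ∧ ¬ G.Adj w' (p 0))) (h1 : ¬ (p n ∈ A ∧ ¬ G.Adj w (p n)))
    (h1' : ¬ (p n ∈ B ∧ ¬ G.Adj w' (p n))) (hk : k ≤ n) (hkA : p k ∈ A) (hkw : ¬ G.Adj w (p k)) :
    False := by
  have main : ∀ (p : ℕ → V) (k : ℕ), IndP G p n → (∀ i, i ≤ n → p i ∈ S) →
      ¬ (p 0 ∈ A ∧ ¬ G.Adj w (p 0)) → ¬ (p 0 ∈ B ∧ ¬ G.Adj w' (p 0)) →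
      ¬ (p n ∈ A ∧ ¬ G.Adj w (p n)) → ¬ (p n ∈ B ∧ ¬ G.Adj w' (p n)) → k ≤ n → p k ∈ A →
      ¬ G.Adj w (p k) → 2 ≤ k → False := by
    intro p k hp hpS h0 h0' h1 h1' hk hkA hkw hk2
    obtain ⟨-, hkn, uA, wu, vA, wv⟩ := h.seg hn hp hpS h0 h0' h1 h1' hk hkA hkw
    have h4 := hp.p4 (k - 2) (by omega)
    rw [show k - 2 + 1 = k - 1 by omega, show k - 2 + 2 = k by omega,
        show k - 2 + 3 = k + 1 by omega] at h4
    obtain ⟨tA, wt⟩ := h.local2 (hpS _ (by omega)) uA hkA wu hkw wv h4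
    obtain ⟨hpos, -, sA, ws, -, -⟩ := h.seg hn hp hpS h0 h0' h1 h1' (by omega) tA wt
    have ad : ∀ i j, i < j → j ≤ n → j ≠ i + 1 → ¬ G.Adj (p j) (p i) := by
      intro i j hij hj hne e
      exact hne ((hp i j hij hj).2.1 e.symm)
    obtain ⟨g1, g2, g3, n1, n2, n3⟩ := h4
    refine h.domino (p k) (p (k + 1)) w (p (k - 1)) (p (k - 2 - 1)) (p (k - 2))
      ⟨⟨g3, wv.symm, wu, g2.symm, ws, g1.symm, fun e => hkw e.symm, fun e => n3 e.symm, ?_,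
        fun e => n1 e.symm, ?_, fun e => n2 e.symm, wt, ?_⟩, ?_⟩
    · exact ad _ _ (by omega) (by omega) (by omega)
    · exact ad _ _ (by omega) (by omega) (by omega)
    · exact ad _ _ (by omega) (by omega) (by omega)
    · exact (hp _ _ (by omega) (by omega)).2.2 (by omega)
  by_cases hk2 : 2 ≤ k
  · exact main p k hp hpS h0 h0' h1 h1' hk hkA hkw hk2
  · refine main (fun i => p (n - i)) (n - k) hp.rev (fun i hi => hpS _ (by omega)) ?_ ?_ ?_ ?_
      (by omega) ?_ ?_ (by omega)
    · simpa using h1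
    · simpa using h1'
    · simpa using h0
    · simpa using h0'
    · simpa [Nat.sub_sub_self hk] using hkA
    · simpa [Nat.sub_sub_self hk] using hkw

theorem Crit.contra [Finite V] {G : SimpleGraph V} {S A B : Set V} {w w' : V}
    (h : Crit G S A B w w') (hS : ∀ C, Cv G C → w ∈ C → w' ∈ C → S ⊆ C) : False := by
  have hX : Cv G {x | x ∈ S ∧ ¬ (x ∈ A ∧ ¬ G.Adj w x) ∧ ¬ (x ∈ B ∧ ¬ G.Adj w' x)} := by
    rintro p n hn hp hU ⟨s0, h0, h0'⟩ ⟨s1, h1, h1'⟩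
    have hpS := h.cv p n hn hp hU s0 s1
    intro i hi
    exact ⟨hpS i hi, fun e => h.noA hn hp hpS h0 h0' h1 h1' hi e.1 e.2,
      fun e => h.symm.noA hn hp hpS h0' h0 h1' h1 hi e.1 e.2⟩
  have wB : w ∉ B := by
    intro e
    obtain ⟨-, a, ha, hn⟩ := h.mw
    exact hn (h.mj.1.adj a ha w e).symm
  have wA' : w' ∉ A := by
    intro e
    obtain ⟨-, a, ha, hn⟩ := h.mw'
    exact hn (h.mj.1.adj w' e a ha)
  have hsub := hS _ hX ⟨h.wS, fun e => h.wA e.1, fun e => wB e.1⟩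
    ⟨h.wS', fun e => wA' e.1, fun e => h.wB' e.1⟩
  obtain ⟨-, a, ha, hn⟩ := h.mw
  exact (hsub (h.mj.1.subA ha)).2.1 ⟨ha, hn⟩

theorem no_AP [Finite V] {G : SimpleGraph V} (hg : IsConvexGeometry (Cv G)) (a b c d e f : V) :
    ¬ AP G a b c d e f := by
  intro hAP
  have hne : {S : Set V | Cv G S ∧ ∃ a b c d e f, Six S a b c d e f ∧ AP G a b c d e f}.Nonempty :=
    ⟨Set.univ, fun _ _ _ _ _ _ _ _ _ => trivial, a, b, c, d, e, f,
      ⟨trivial, trivial, trivial, trivial, trivial, trivial⟩, hAP⟩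
  obtain ⟨S, hSm⟩ := (Set.toFinite _).exists_minimal hne
  obtain ⟨⟨hS, a, b, c, d, e, f, h6, hAP⟩, hmin⟩ := hSm
  have min : ∀ S', Cv G S' → S' ⊆ S →
      (∃ a b c d e f, Six S' a b c d e f ∧ AP G a b c d e f) → S ⊆ S' :=
    fun S' h1 h2 h3 => hmin (y := S') ⟨h1, h3⟩ h2
  have ext : ∀ a b c d e f, Six S a b c d e f → AP G a b c d e f →
      e ∈ extremeSet (Cv G) S ∧ f ∈ extremeSet (Cv G) S ∧
        ∀ x ∈ extremeSet (Cv G) S, x = e ∨ x = f := by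
    intro a b c d e f h6 hAP
    have hT : chull (Cv G) {a, b, c, d, e, f} = S := by
      apply Set.Subset.antisymm
      · apply chull_subset _ hS
        obtain ⟨_, _, _, _, _, _⟩ := h6
        rintro x (rfl | rfl | rfl | rfl | rfl | rfl) <;> assumption
      · refine min _ (Cv.chull _) ?_ ⟨a, b, c, d, e, f, ?_, hAP⟩
        · apply chull_subset _ hS
          obtain ⟨_, _, _, _, _, _⟩ := h6
          rintro x (rfl | rfl | rfl | rfl | rfl | rfl) <;> assumption
        · refine ⟨?_, ?_, ?_, ?_, ?_, ?_⟩ <;> apply subset_chull <;> simp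
    have h3 : ∀ x ∈ extremeSet (Cv G) S, x = e ∨ x = f := by
      intro x hx
      rw [← hT] at hx
      obtain ⟨hx1, hx2⟩ := extreme_hull hx
      obtain ⟨s1, s2, s3, s4⟩ := hAP.ss (T := {a, b, c, d, e, f})
        ⟨by simp, by simp, by simp, by simp, by simp, by simp⟩
      rcases hx1 with rfl | rfl | rfl | rfl | rfl | rfl
      · exact absurd hx2 s1
      · exact absurd hx2 s2
      · exact absurd hx2 s3
      · exact absurd hx2 s4
      · exact Or.inl rfl
      · exact Or.inr rfl
    have sing : ∀ y, (∀ x ∈ extremeSet (Cv G) S, x = y) → a = y := by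
      intro y hy
      have ha : a ∈ S := h6.1
      rw [hg S hS] at ha
      exact chull_subset hy (Cv.singleton G y) ha
    obtain ⟨m1, m2, -⟩ := hAP.1.ne
    refine ⟨?_, ?_, h3⟩
    · by_contra hcon
      refine m2 (sing f fun x hx => ?_)
      rcases h3 x hx with rfl | rfl
      · exact absurd hx hcon
      · rfl
    · by_contra hcon
      refine m1 (sing e fun x hx => ?_)
      rcases h3 x hx with rfl | rfl
      · rfl
      · exact absurd hx hcon
  have e1 := ext _ _ _ _ _ _ h6 hAP
  have house := no_house hg
  obtain ⟨ha, hb, hc, hd, he, hf⟩ := h6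
  have hAP0 := hAP
  obtain ⟨⟨h1, h2, h3, h4, h5, h6, n1, n2, n3, n4, n5, n6, n7, n8⟩, h7⟩ := hAP
  obtain ⟨m1, m2, m3, m4, m5, m6, m7⟩ := hAP0.1.ne
  obtain ⟨A, B, sA, sB, hM⟩ := (join_of_C4 ha hb hc hd h1 h2 h3 h4 n1 n2 m5 m6).exists_max
  have aA : a ∈ A := sA (by simp)
  have cA : c ∈ A := sA (by simp)
  have bB : b ∈ B := sB (by simp)
  have dB : d ∈ B := sB (by simp)
  have crit : Crit G S A B e f := by
    refine ⟨no_hole hg, house, no_domino hg, hS, min, ?_, hM, he, hf,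
      fun h => n5 (hM.1.adj e h b bB).symm, fun h => n4 (hM.1.adj a aA f h),
      ⟨⟨c, cA, h5.symm⟩, ⟨a, aA, fun h => n3 h.symm⟩⟩,
      ⟨⟨d, dB, h6.symm⟩, ⟨b, bB, fun h => n6 h.symm⟩⟩⟩
    intro a2 b2 c2 d2 e2 f2 hs hap
    have e2' := ext _ _ _ _ _ _ hs hap
    have ne2 := hap.1.ne.2.2.2.2.2.2
    rcases e1.2.2 _ e2'.1 with r1 | r1 <;> rcases e1.2.2 _ e2'.2.1 with r2 | r2
    · exact absurd (r1.trans r2.symm) ne2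
    · exact Or.inl ⟨r1, r2⟩
    · exact Or.inr ⟨r1, r2⟩
    · exact absurd (r1.trans r2.symm) ne2
  refine crit.contra fun C hC heC hfC => ?_
  rw [hg S hS]
  refine chull_subset (fun x hx => ?_) hC
  rcases e1.2.2 x hx with rfl | rfl
  · exact heC
  · exact hfC

end Final

/-- A finite connected simple graph `G` is a convex geometry with respect to
the m³-convexity iff `G` is weakly polarizable (no hole, house, domino, or A). -/
theorem m3_convex_geometry_iff_weakly_polarizable
    {V : Type*} [Fintype V] (G : SimpleGraph V) (hconn : G.Connected) :
    IsConvexGeometry (PConvex G (fun _ _ w => IsInducedPathW G w ∧ 3 ≤ w.length)) ↔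
      ((¬ ∃ (u : V) (w : G.Walk u u), IsInducedCycleW G w ∧ 5 ≤ w.length) ∧
        ¬ HasInducedSubgraphIso G houseGraph ∧
        ¬ HasInducedSubgraphIso G dominoGraph ∧
        ¬ HasInducedSubgraphIso G aGraph) := by
  have hcv : PConvex G (fun _ _ w => IsInducedPathW G w ∧ 3 ≤ w.length) = Cv G := by
    funext S
    exact propext pconvex_iff
  rw [hcv, house_iff, domino_iff, a_iff]
  constructor
  · intro hg
    refine ⟨?_, ?_, ?_, ?_⟩
    · rintro ⟨u, w, hw, h5⟩
      exact no_hole hg _ _ h5 (indC_of_walk w hw)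
    · rintro ⟨a, b, c, d, e, h⟩
      exact no_house hg _ _ _ _ _ h
    · rintro ⟨a, b, c, d, e, f, h⟩
      exact no_domino hg _ _ _ _ _ _ h
    · rintro ⟨a, b, c, d, e, f, h⟩
      exact no_AP hg _ _ _ _ _ _ h
  · rintro ⟨h1, h2, h3, h4⟩
    refine backward ?_ (fun a b c d e h => h2 ⟨a, b, c, d, e, h⟩)
      (fun a b c d e f h => h3 ⟨a, b, c, d, e, f, h⟩)
      (fun a b c d e f h => h4 ⟨a, b, c, d, e, f, h⟩)
    intro p n hn hc
    obtain ⟨u, w, hw, rfl⟩ := walk_of_indC (by omega) hc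
    exact h1 ⟨u, w, hw, hn⟩
end
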